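/- arXiv:1803.07185 — 2 statements merged into one kernel-verified Lean document; each statement's English description precedes it below -/
import Mathlib

section
/- There exists a constant C > 0 such that every tree of size n ≥ 16 has a straight-line planar grid drawing of some width W and height H with W·H ≤ n·2^{C·√(log₂ log₂ n · log₂ log₂ log₂ n)}. -/
/-!
The tree is rooted, and a stronger bound of order `n (log log n) ^ 5` on the area is proved by
recursion on the rooted tree. Since `log L ≤ √(L log L)` for `L = log log n`, this implies the
claim.

Two kinds of drawings are combined. A subtree can be drawn in a given region with its root at a
given grid point (`DrawD`), and a set of subtrees can be drawn around a common centre, together with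
the edges to the centre (`StarD`). Planarity is a local condition at each vertex (`Fan`), so that
stars whose regions meet only at the centre can be superimposed (`StarD.merge`), and it is preserved
by integral affine maps. Straight-line planarity follows from it by induction (`Planar.edge_edge`).

Put `H ≈ log n` and `a ≈ log H`. The drawing of a tree has height of order `a² H`.

* A tree of size `s` can be drawn with width `s - 1` and height `log s` (`log_height`).
* A star of subtrees of size at most `H` and total size `σ` fits into height of order `a² H` and
  width of order `a³ (1 + σ / H)` (`StarD.main`). For this the subtrees are grouped into `a` classes
  by the logarithm of their size. In a class of subtrees of size about `s`, they are turned on their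
  sides and arranged in combs, that is, rows of subtrees with roots at distance one from a line
  through the centre. The combs are placed in disjoint sectors. If `s` is larger than the width, the
  combs are sheared into consecutive sectors (`StarD.classLarge`). Otherwise they are mapped along
  the directions of primitive vectors by unimodular maps (`StarD.classSmall`); a positive proportion
  of all integer vectors in a box is primitive (`card_cop`), so there are sufficiently many
  directions.
* A tree of size larger than `H` is drawn with width of order `a³ n / H` (`main_all`). The star of
  the small subtrees at the root, those of size at most `H`, is followed by a row of the large ones.
  The largest one uses the full height and all others, having at most half of the size, lose one
  unit of height, so that a total of `log n ≤ H` is lost. The additional width of order `a³` can be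
  charged to the subtree if it has not exactly one large child, or if the small subtrees have total
  size at least `H` (`paid`). A chain of vertices which are not paid for is drawn as a vertical path
  along a strip of width `a`, in which the small subtrees hang sideways; when the strip is filled up
  to height `H`, its width can be charged to the vertices in it (`unpaid_step`).
-/

open SimpleGraph

/-- A straight-line planar drawing of a graph `G`: an injective map of vertices to points of
`ℝ²` such that no vertex lies in the interior of (or on) a non-incident edge segment, and any
two distinct edge segments intersect exactly in the images of their common endpoints. -/
def IsStraightLineDrawing {V : Type} (G : SimpleGraph V) (f : V → ℝ × ℝ) : Prop :=
  Function.Injective f ∧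
  (∀ u v w : V, G.Adj u v → w ≠ u → w ≠ v → f w ∉ segment ℝ (f u) (f v)) ∧
  (∀ u v u' v' : V, G.Adj u v → G.Adj u' v' → s(u, v) ≠ s(u', v') →
    segment ℝ (f u) (f v) ∩ segment ℝ (f u') (f v') =
      f '' {w | (w = u ∨ w = v) ∧ (w = u' ∨ w = v')})

/-- A grid drawing of width `W` and height `H`: a straight-line planar drawing with all
vertices on integer grid points of `{1, …, W} × {1, …, H}`. -/
def IsGridDrawing {V : Type} (G : SimpleGraph V) (f : V → ℝ × ℝ) (W H : ℕ) : Prop :=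
  IsStraightLineDrawing G f ∧
  ∀ x : V, ∃ i j : ℤ, 1 ≤ i ∧ i ≤ (W : ℤ) ∧ 1 ≤ j ∧ j ≤ (H : ℤ) ∧ f x = ((i : ℝ), (j : ℝ))

/-- In a tree with distinguished root `r`, `u` is the parent of `v` iff `u` is a neighbor of
`v` lying on the path from `v` to `r` (equivalently, one step closer to the root). -/
def IsParent {V : Type} (G : SimpleGraph V) (r u v : V) : Prop :=
  G.Adj u v ∧ G.dist r u + 1 = G.dist r v

/-- A drawing is upward (w.r.t. root `r`) if every parent is drawn at a `y`-coordinate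
greater than or equal to that of each of its children. -/
def IsUpward {V : Type} (G : SimpleGraph V) (r : V) (f : V → ℝ × ℝ) : Prop :=
  ∀ u v : V, IsParent G r u v → (f v).2 ≤ (f u).2

/-- A rooted tree structure on `V`, encoded by a parent map and a depth function. A vertex `c` is
a child of `v` when `par c = v` and `c` is exactly one level deeper; the value of `par` at a root
is irrelevant. -/
structure RT (V : Type) where
  par : V → V
  dep : V → ℕ

namespace RT

open Classical in
/-- The children of `v`. -/
noncomputable def ch {V : Type} [Fintype V] (T : RT V) (v : V) : Finset V :=
  Finset.univ.filter (fun c => T.dep c = T.dep v + 1 ∧ T.par c = v)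

open Classical in
/-- The descendants of `v`, including `v` itself. -/
noncomputable def D {V : Type} [Fintype V] (T : RT V) (v : V) : Finset V :=
  Finset.univ.filter (fun u => Relation.ReflTransGen (fun a b => b ∈ T.ch a) v u)

/-- The size of the subtree hanging at `v`. -/
noncomputable def sz {V : Type} [Fintype V] (T : RT V) (v : V) : ℕ := (T.D v).card

section
variable {V : Type} [Fintype V] (T : RT V)

lemma mem_ch {v c : V} : c ∈ T.ch v ↔ T.dep c = T.dep v + 1 ∧ T.par c = v := by
  simp [ch]

lemma mem_D {v u : V} : u ∈ T.D v ↔ Relation.ReflTransGen (fun a b => b ∈ T.ch a) v u := by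
  simp [D]

lemma self_mem_D (v : V) : v ∈ T.D v := T.mem_D.2 .refl

lemma D_sub {v c : V} (h : c ∈ T.ch v) : T.D c ⊆ T.D v := fun _ hu =>
  T.mem_D.2 (.head h (T.mem_D.1 hu))

lemma D_trans {v u w : V} (h : u ∈ T.D v) (h' : w ∈ T.D u) : w ∈ T.D v :=
  T.mem_D.2 ((T.mem_D.1 h).trans (T.mem_D.1 h'))

lemma D_cases {v u : V} (h : u ∈ T.D v) : u = v ∨ ∃ c ∈ T.ch v, u ∈ T.D c := by
  rcases Relation.ReflTransGen.cases_head (T.mem_D.1 h) with h | ⟨c, hc, hu⟩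
  · exact .inl h.symm
  · exact .inr ⟨c, hc, T.mem_D.2 hu⟩

lemma anc {v u : V} (h : u ∈ T.D v) :
    T.dep v ≤ T.dep u ∧ T.par^[T.dep u - T.dep v] u = v := by
  replace h := T.mem_D.1 h
  induction h with
  | refl => simp
  | tail _ hc ih =>
    rename_i b c _
    obtain ⟨h1, h2⟩ := T.mem_ch.1 hc
    refine ⟨by omega, ?_⟩
    rw [h1, show T.dep b + 1 - T.dep v = (T.dep b - T.dep v) + 1 by omega,
      Function.iterate_succ_apply, h2, ih.2]

lemma D_unique {c c' u : V} (hd : T.dep c = T.dep c') (h : u ∈ T.D c) (h' : u ∈ T.D c') :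
    c = c' := by
  rw [← (T.anc h).2, ← (T.anc h').2, hd]

lemma dep_ch {v c : V} (h : c ∈ T.ch v) : T.dep c = T.dep v + 1 := (T.mem_ch.1 h).1

lemma ch_unique {v c c' u : V} (hc : c ∈ T.ch v) (hc' : c' ∈ T.ch v)
    (h : u ∈ T.D c) (h' : u ∈ T.D c') : c = c' :=
  T.D_unique (by rw [T.dep_ch hc, T.dep_ch hc']) h h'

lemma not_mem_D {v c : V} (hc : c ∈ T.ch v) : v ∉ T.D c := fun h => by
  have := (T.anc h).1
  have := T.dep_ch hc
  omega

lemma sz_pos (v : V) : 0 < T.sz v := Finset.card_pos.2 ⟨v, T.self_mem_D v⟩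

lemma sz_eq (v : V) : T.sz v = 1 + ∑ c ∈ T.ch v, T.sz c := by
  classical
  have h : T.D v = insert v ((T.ch v).biUnion T.D) := by
    ext u
    simp only [Finset.mem_insert, Finset.mem_biUnion]
    refine ⟨T.D_cases, ?_⟩
    rintro (rfl | ⟨c, hc, hu⟩)
    · exact T.self_mem_D _
    · exact T.D_sub hc hu
  unfold sz
  rw [h, Finset.card_insert_of_notMem, Finset.card_biUnion, add_comm]
  · intro c hc c' hc' hne
    change Disjoint (T.D c) (T.D c')
    rw [Finset.disjoint_left]
    exact fun u hu hu' => hne (T.ch_unique hc hc' hu hu')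
  · simp only [Finset.mem_biUnion, not_exists, not_and]
    exact fun c hc => T.not_mem_D hc

lemma sz_lt {v c : V} (hc : c ∈ T.ch v) : T.sz c < T.sz v := by
  have h := T.sz_eq v
  have := Finset.single_le_sum (f := T.sz) (fun _ _ => Nat.zero_le _) hc
  omega

/-! ### Planar drawings of subtrees and of fans -/

/-- The part of the plane covered by the drawing of the subtree at `v`. -/
def Dr (f : V → ℝ × ℝ) (v : V) : Set (ℝ × ℝ) :=
  {z | ∃ u ∈ T.D v, z = f u ∨ ∃ c ∈ T.ch u, z ∈ segment ℝ (f u) (f c)}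

/-- The drawing of the subtree at `c`, together with the segment joining `c` to the point `p`. -/
def limb (f : V → ℝ × ℝ) (p : ℝ × ℝ) (c : V) : Set (ℝ × ℝ) :=
  segment ℝ p (f c) ∪ T.Dr f c

/-- The subtrees at the vertices of `S`, each joined to the point `p` by a segment, meet only
in `p`, and each of these segments meets its own subtree only at the root of the subtree. -/
def Fan (f : V → ℝ × ℝ) (p : ℝ × ℝ) (S : Finset V) : Prop :=
  (∀ c ∈ S, p ∉ T.Dr f c ∧ ∀ z ∈ segment ℝ p (f c), z ∈ T.Dr f c → z = f c) ∧
  ∀ c ∈ S, ∀ c' ∈ S, c ≠ c' → ∀ z ∈ T.limb f p c, z ∈ T.limb f p c' → z = p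

/-- Planarity of the drawing of the subtree at `v`, as a local condition at each descendant. -/
def Planar (f : V → ℝ × ℝ) (v : V) : Prop := ∀ u ∈ T.D v, T.Fan f (f u) (T.ch u)

/-- Being a grid point. -/
def _root_.IsInt (z : ℝ × ℝ) : Prop := ∃ i j : ℤ, z = ((i : ℝ), (j : ℝ))

/-- The subtree at `v` has a planar grid drawing inside the region `R` with `v` placed at `p`. -/
def DrawD (v : V) (p : ℝ × ℝ) (R : Set (ℝ × ℝ)) : Prop :=
  ∃ f : V → ℝ × ℝ, f v = p ∧ T.Planar f v ∧ (∀ u ∈ T.D v, IsInt (f u)) ∧ T.Dr f v ⊆ R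

/-- The star formed by the origin and the subtrees at a set `S` of children of `v` has a planar
grid drawing in which everything, including the edges at the origin, lies inside `R`. -/
def StarD (v : V) (S : Finset V) (R : Set (ℝ × ℝ)) : Prop :=
  S ⊆ T.ch v ∧ ∃ f : V → ℝ × ℝ,
    (∀ c ∈ S, T.Planar f c ∧ (∀ u ∈ T.D c, IsInt (f u)) ∧ T.limb f 0 c ⊆ R) ∧ T.Fan f 0 S

variable {T}

lemma Dr_congr {f g : V → ℝ × ℝ} {v : V} (h : ∀ u ∈ T.D v, f u = g u) : T.Dr f v = T.Dr g v := by
  ext z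
  unfold Dr
  constructor
  · rintro ⟨u, hu, hz⟩
    refine ⟨u, hu, ?_⟩
    rw [← h u hu]
    refine hz.imp_right ?_
    rintro ⟨c, hc, hz⟩
    exact ⟨c, hc, by rwa [← h c (T.D_trans hu (T.D_sub hc (T.self_mem_D c)))]⟩
  · rintro ⟨u, hu, hz⟩
    refine ⟨u, hu, ?_⟩
    rw [h u hu]
    refine hz.imp_right ?_
    rintro ⟨c, hc, hz⟩
    exact ⟨c, hc, by rwa [h c (T.D_trans hu (T.D_sub hc (T.self_mem_D c)))]⟩

lemma limb_congr {f g : V → ℝ × ℝ} {p : ℝ × ℝ} {c : V} (h : ∀ u ∈ T.D c, f u = g u) :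
    T.limb f p c = T.limb g p c := by
  unfold limb
  rw [Dr_congr h, h c (T.self_mem_D c)]

lemma Fan_congr {f g : V → ℝ × ℝ} {p : ℝ × ℝ} {S : Finset V}
    (h : ∀ c ∈ S, ∀ u ∈ T.D c, f u = g u) (hf : T.Fan f p S) : T.Fan g p S := by
  refine ⟨fun c hc => ?_, fun c hc c' hc' hne => ?_⟩
  · rw [← Dr_congr (h c hc), ← h c hc c (T.self_mem_D c)]
    exact hf.1 c hc
  · rw [← limb_congr (h c hc), ← limb_congr (h c' hc')]
    exact hf.2 c hc c' hc' hne

lemma Planar_congr {f g : V → ℝ × ℝ} {v : V} (h : ∀ u ∈ T.D v, f u = g u)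
    (hf : T.Planar f v) : T.Planar g v := by
  intro u hu
  rw [← h u hu]
  exact Fan_congr (fun c hc w hw => h w (T.D_trans hu (T.D_sub hc hw))) (hf u hu)

lemma Dr_root (f : V → ℝ × ℝ) (v : V) : f v ∈ T.Dr f v := ⟨v, T.self_mem_D v, .inl rfl⟩

lemma Dr_cases {f : V → ℝ × ℝ} {v : V} {z : ℝ × ℝ} (hz : z ∈ T.Dr f v) :
    z = f v ∨ ∃ c ∈ T.ch v, z ∈ T.limb f (f v) c := by
  obtain ⟨u, hu, hz⟩ := hz
  rcases T.D_cases hu with rfl | ⟨c, hc, huc⟩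
  · refine hz.imp_right ?_
    rintro ⟨c, hc, hz⟩
    exact ⟨c, hc, .inl hz⟩
  · exact .inr ⟨c, hc, .inr ⟨u, huc, hz⟩⟩

lemma DrawD.mono {v : V} {p : ℝ × ℝ} {R R' : Set (ℝ × ℝ)} (h : T.DrawD v p R) (hR : R ⊆ R') :
    T.DrawD v p R' := by
  obtain ⟨f, h1, h2, h3, h4⟩ := h
  exact ⟨f, h1, h2, h3, h4.trans hR⟩

lemma StarD.mono {v : V} {S : Finset V} {R R' : Set (ℝ × ℝ)} (h : T.StarD v S R) (hR : R ⊆ R') :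
    T.StarD v S R' := by
  obtain ⟨h0, f, h1, h2⟩ := h
  exact ⟨h0, f, fun c hc => ⟨(h1 c hc).1, (h1 c hc).2.1, (h1 c hc).2.2.trans hR⟩, h2⟩

lemma StarD.empty (v : V) (R : Set (ℝ × ℝ)) : T.StarD v ∅ R :=
  ⟨by simp, fun _ => 0, by simp, by simp [Fan]⟩

/-- A single child, drawn with its root at `p`. -/
lemma StarD.single {v c : V} (hc : c ∈ T.ch v) {p : ℝ × ℝ} {R : Set (ℝ × ℝ)}
    (h : T.DrawD c p R) (h0 : (0 : ℝ × ℝ) ∉ R) (hp : ∀ z ∈ segment ℝ 0 p, z ∈ R → z = p) :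
    T.StarD v {c} (segment ℝ 0 p ∪ R) := by
  obtain ⟨f, h1, h2, h3, h4⟩ := h
  refine ⟨by simpa using hc, f, ?_, ?_, ?_⟩
  · intro d hd
    obtain rfl := Finset.mem_singleton.1 hd
    refine ⟨h2, h3, ?_⟩
    unfold limb
    rw [h1]
    exact Set.union_subset_union_right _ h4
  · intro d hd
    obtain rfl := Finset.mem_singleton.1 hd
    rw [h1]
    exact ⟨fun h => h0 (h4 h), fun z hz hz' => hp z hz (h4 hz')⟩
  · intro d hd d' hd' hne
    rw [Finset.mem_singleton] at hd hd'
    exact absurd (hd.trans hd'.symm) hne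

/-- Two stars at the same centre whose regions meet only at the centre can be superimposed. -/
lemma StarD.merge [DecidableEq V] {v : V} {S S' : Finset V} {R R' : Set (ℝ × ℝ)}
    (h : T.StarD v S R) (h' : T.StarD v S' R') (hS : Disjoint S S')
    (hR : ∀ z ∈ R, z ∈ R' → z = 0) : T.StarD v (S ∪ S') (R ∪ R') := by
  classical
  obtain ⟨h0, f, h1, h2⟩ := h
  obtain ⟨h0', f', h1', h2'⟩ := h'
  let g : V → ℝ × ℝ := fun u => if u ∈ S.biUnion T.D then f u else f' u
  have hg : ∀ c ∈ S, ∀ u ∈ T.D c, f u = g u := fun c hc u hu => by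
    simp only [g]
    rw [if_pos (Finset.mem_biUnion.2 ⟨c, hc, hu⟩)]
  have hg' : ∀ c ∈ S', ∀ u ∈ T.D c, f' u = g u := fun c hc u hu => by
    simp only [g]
    rw [if_neg]
    intro hm
    obtain ⟨d, hd, hud⟩ := Finset.mem_biUnion.1 hm
    obtain rfl := T.ch_unique (h0 hd) (h0' hc) hud hu
    exact Finset.disjoint_left.1 hS hd hc
  have k2 := Fan_congr hg h2
  have k2' := Fan_congr hg' h2'
  have k1 : ∀ c ∈ S, T.limb g 0 c ⊆ R := fun c hc => by
    rw [← limb_congr (hg c hc)]; exact (h1 c hc).2.2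
  have k1' : ∀ c ∈ S', T.limb g 0 c ⊆ R' := fun c hc => by
    rw [← limb_congr (hg' c hc)]; exact (h1' c hc).2.2
  refine ⟨Finset.union_subset h0 h0', g, ?_, ?_, ?_⟩
  · intro c hc
    rcases Finset.mem_union.1 hc with hc | hc
    · exact ⟨Planar_congr (hg c hc) (h1 c hc).1,
        fun u hu => by rw [← hg c hc u hu]; exact (h1 c hc).2.1 u hu,
        (k1 c hc).trans Set.subset_union_left⟩
    · exact ⟨Planar_congr (hg' c hc) (h1' c hc).1,
        fun u hu => by rw [← hg' c hc u hu]; exact (h1' c hc).2.1 u hu,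
        (k1' c hc).trans Set.subset_union_right⟩
  · intro c hc
    rcases Finset.mem_union.1 hc with hc | hc
    · exact k2.1 c hc
    · exact k2'.1 c hc
  · intro c hc c' hc' hne z hz hz'
    rcases Finset.mem_union.1 hc with hc | hc <;> rcases Finset.mem_union.1 hc' with hc' | hc'
    · exact k2.2 c hc c' hc' hne z hz hz'
    · exact hR z (k1 c hc hz) (k1' c' hc' hz')
    · exact hR z (k1 c' hc' hz') (k1' c hc hz)
    · exact k2'.2 c hc c' hc' hne z hz hz'

lemma StarD.biUnion [DecidableEq V] {v : V} {ι : Type*} [DecidableEq ι] (I : Finset ι)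
    (S : ι → Finset V) (R : ι → Set (ℝ × ℝ)) (h : ∀ i ∈ I, T.StarD v (S i) (R i))
    (hS : ∀ i ∈ I, ∀ j ∈ I, i ≠ j → Disjoint (S i) (S j))
    (hR : ∀ i ∈ I, ∀ j ∈ I, i ≠ j → ∀ z ∈ R i, z ∈ R j → z = 0) :
    T.StarD v (I.biUnion S) (⋃ i ∈ I, R i) := by
  induction I using Finset.induction_on with
  | empty => simpa using StarD.empty v _
  | insert i I hi ih =>
    rw [Finset.biUnion_insert, Finset.set_biUnion_insert]
    refine (h i (Finset.mem_insert_self _ _)).merge (ih ?_ ?_ ?_) ?_ ?_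
    · exact fun j hj => h j (Finset.mem_insert_of_mem hj)
    · exact fun j hj k hk => hS j (Finset.mem_insert_of_mem hj) k (Finset.mem_insert_of_mem hk)
    · exact fun j hj k hk => hR j (Finset.mem_insert_of_mem hj) k (Finset.mem_insert_of_mem hk)
    · rw [Finset.disjoint_biUnion_right]
      exact fun j hj => hS i (Finset.mem_insert_self _ _) j (Finset.mem_insert_of_mem hj)
        (fun h => hi (h ▸ hj))
    · intro z hz hz'
      simp only [Set.mem_iUnion] at hz'
      obtain ⟨j, hj, hz'⟩ := hz'
      exact hR i (Finset.mem_insert_self _ _) j (Finset.mem_insert_of_mem hj)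
        (fun h => hi (h ▸ hj)) z hz hz'

/-- A star on all children of `v` is a drawing of the subtree at `v`. -/
lemma StarD.close {v : V} {R : Set (ℝ × ℝ)} (h : T.StarD v (T.ch v) R) (h0 : (0 : ℝ × ℝ) ∈ R) :
    T.DrawD v 0 R := by
  classical
  obtain ⟨-, f, h1, h2⟩ := h
  let g : V → ℝ × ℝ := Function.update f v 0
  have hv : g v = 0 := by simp [g]
  have hg : ∀ c ∈ T.ch v, ∀ u ∈ T.D c, f u = g u := fun c hc u hu => by
    have : u ≠ v := fun h => T.not_mem_D hc (h ▸ hu)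
    simp [g, this]
  refine ⟨g, hv, ?_, ?_, ?_⟩
  · intro u hu
    rcases T.D_cases hu with rfl | ⟨c, hc, huc⟩
    · rw [hv]; exact Fan_congr hg h2
    · exact Planar_congr (hg c hc) (h1 c hc).1 u huc
  · intro u hu
    rcases T.D_cases hu with rfl | ⟨c, hc, huc⟩
    · rw [hv]; exact ⟨0, 0, by ext <;> simp⟩
    · rw [← hg c hc u huc]; exact (h1 c hc).2.1 u huc
  · intro z hz
    rcases Dr_cases hz with rfl | ⟨c, hc, hz⟩
    · rwa [hv]
    · rw [hv, ← limb_congr (hg c hc)] at hz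
      exact (h1 c hc).2.2 hz

/-! ### Affine changes of coordinates -/

/-- The affine map with integer coefficients of matrix `(a b; c d)` and translation `(e, g)`. -/
def _root_.aff (a b c d e g : ℤ) (z : ℝ × ℝ) : ℝ × ℝ :=
  (a * z.1 + b * z.2 + e, c * z.1 + d * z.2 + g)

lemma _root_.aff_injective {a b c d e g : ℤ} (hd : a * d - b * c ≠ 0) :
    Function.Injective (aff a b c d e g) := by
  rintro ⟨x, y⟩ ⟨x', y'⟩ h
  simp only [aff, Prod.mk.injEq] at h
  obtain ⟨h1, h2⟩ := h
  have hd' : ((a : ℝ) * d - b * c) ≠ 0 := by exact_mod_cast hd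
  have e1 : ((a : ℝ) * d - b * c) * (x - x') = 0 := by linear_combination d * h1 - b * h2
  have e2 : ((a : ℝ) * d - b * c) * (y - y') = 0 := by linear_combination a * h2 - c * h1
  ext
  · simpa [hd', sub_eq_zero] using e1
  · simpa [hd', sub_eq_zero] using e2

lemma _root_.aff_segment (a b c d e g : ℤ) (p q : ℝ × ℝ) :
    segment ℝ (aff a b c d e g p) (aff a b c d e g q) = aff a b c d e g '' segment ℝ p q := by
  have key : ∀ s t : ℝ, s + t = 1 → s • aff a b c d e g p + t • aff a b c d e g q =
      aff a b c d e g (s • p + t • q) := by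
    intro s t h
    obtain rfl : t = 1 - s := by linarith
    ext <;> simp [aff] <;> ring
  ext z
  constructor
  · rintro ⟨s, t, hs, ht, hst, rfl⟩
    exact ⟨_, ⟨s, t, hs, ht, hst, rfl⟩, (key s t hst).symm⟩
  · rintro ⟨_, ⟨s, t, hs, ht, hst, rfl⟩, rfl⟩
    exact ⟨s, t, hs, ht, hst, key s t hst⟩

lemma _root_.aff_isInt (a b c d e g : ℤ) {z : ℝ × ℝ} (h : IsInt z) :
    IsInt (aff a b c d e g z) := by
  obtain ⟨i, j, rfl⟩ := h
  exact ⟨a * i + b * j + e, c * i + d * j + g, by simp [aff]⟩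

lemma Dr_aff (a b c d e g : ℤ) (f : V → ℝ × ℝ) (v : V) :
    T.Dr (aff a b c d e g ∘ f) v = aff a b c d e g '' T.Dr f v := by
  ext z
  constructor
  · rintro ⟨u, hu, rfl | ⟨w, hw, hz⟩⟩
    · exact ⟨_, ⟨u, hu, .inl rfl⟩, rfl⟩
    · simp only [Function.comp, aff_segment] at hz
      obtain ⟨y, hy, rfl⟩ := hz
      exact ⟨y, ⟨u, hu, .inr ⟨w, hw, hy⟩⟩, rfl⟩
  · rintro ⟨y, ⟨u, hu, rfl | ⟨w, hw, hy⟩⟩, rfl⟩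
    · exact ⟨u, hu, .inl rfl⟩
    · refine ⟨u, hu, .inr ⟨w, hw, ?_⟩⟩
      simp only [Function.comp, aff_segment]
      exact ⟨y, hy, rfl⟩

lemma limb_aff (a b c d e g : ℤ) (f : V → ℝ × ℝ) (p : ℝ × ℝ) (v : V) :
    T.limb (aff a b c d e g ∘ f) (aff a b c d e g p) v = aff a b c d e g '' T.limb f p v := by
  unfold limb
  rw [Dr_aff, Set.image_union, ← aff_segment]
  rfl

lemma Fan.aff {a b c d e g : ℤ} (hd : a * d - b * c ≠ 0) {f : V → ℝ × ℝ} {p : ℝ × ℝ}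
    {S : Finset V} (h : T.Fan f p S) : T.Fan (aff a b c d e g ∘ f) (aff a b c d e g p) S := by
  have hi := aff_injective (e := e) (g := g) hd
  refine ⟨fun w hw => ⟨?_, ?_⟩, fun w hw w' hw' hne => ?_⟩
  · rw [Dr_aff, hi.mem_set_image]
    exact (h.1 w hw).1
  · rw [Dr_aff, Function.comp, aff_segment]
    rintro _ ⟨y, hy, rfl⟩ hz
    rw [hi.mem_set_image] at hz
    rw [(h.1 w hw).2 y hy hz]
  · rw [limb_aff, limb_aff]
    rintro _ ⟨y, hy, rfl⟩ hz
    rw [hi.mem_set_image] at hz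
    rw [h.2 w hw w' hw' hne y hy hz]

lemma Planar.aff {a b c d e g : ℤ} (hd : a * d - b * c ≠ 0) {f : V → ℝ × ℝ} {v : V}
    (h : T.Planar f v) : T.Planar (aff a b c d e g ∘ f) v := fun u hu => (h u hu).aff hd

lemma DrawD.aff (a b c d e g : ℤ) (hd : a * d - b * c ≠ 0) {v : V} {p : ℝ × ℝ}
    {R : Set (ℝ × ℝ)} (h : T.DrawD v p R) :
    T.DrawD v (aff a b c d e g p) (aff a b c d e g '' R) := by
  obtain ⟨f, rfl, h2, h3, h4⟩ := h
  refine ⟨_root_.aff a b c d e g ∘ f, rfl, h2.aff hd, fun u hu => aff_isInt _ _ _ _ _ _ (h3 u hu),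
    ?_⟩
  rw [Dr_aff]
  exact Set.image_mono h4

lemma StarD.lin (a b c d : ℤ) (hd : a * d - b * c ≠ 0) {v : V} {S : Finset V}
    {R : Set (ℝ × ℝ)} (h : T.StarD v S R) : T.StarD v S (aff a b c d 0 0 '' R) := by
  obtain ⟨h0, f, h1, h2⟩ := h
  have hz : aff a b c d 0 0 0 = 0 := by simp [_root_.aff]
  refine ⟨h0, aff a b c d 0 0 ∘ f, fun w hw => ⟨(h1 w hw).1.aff hd,
    fun u hu => aff_isInt _ _ _ _ _ _ ((h1 w hw).2.1 u hu), ?_⟩, ?_⟩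
  · have := limb_aff (T := T) a b c d 0 0 f 0 w
    rw [hz] at this
    rw [this]
    exact Set.image_mono (h1 w hw).2.2
  · have := h2.aff (e := 0) (g := 0) hd
    rwa [hz] at this

/-! ### Rows of subtrees and the logarithmic-height drawing -/

lemma _root_.seg_zero {p z : ℝ × ℝ} (h : z ∈ segment ℝ 0 p) :
    ∃ t : ℝ, 0 ≤ t ∧ t ≤ 1 ∧ z.1 = t * p.1 ∧ z.2 = t * p.2 := by
  obtain ⟨s, t, hs, ht, hst, rfl⟩ := h
  exact ⟨t, ht, by linarith, by simp, by simp⟩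

/-- The rectangle `[0, w] × [0, h]`. -/
def _root_.Rect (w h : ℕ) : Set (ℝ × ℝ) := {z | 0 ≤ z.1 ∧ z.1 ≤ w ∧ 0 ≤ z.2 ∧ z.2 ≤ h}

/-- The part of `[0, N] × [0, s]` between the line through the origin and `(N, 1)` and the line
through the origin and `(X, s)`. -/
def _root_.Rg (X N s : ℕ) : Set (ℝ × ℝ) :=
  {z | 0 ≤ z.1 ∧ z.1 ≤ N ∧ z.1 ≤ N * z.2 ∧ 0 ≤ z.2 ∧ z.2 ≤ s ∧ X * z.2 ≤ s * z.1}

lemma _root_.Rect_mono {w w' h h' : ℕ} (hw : w ≤ w') (hh : h ≤ h') : Rect w h ⊆ Rect w' h' := by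
  rintro z ⟨h1, h2, h3, h4⟩
  have : (w : ℝ) ≤ w' := by exact_mod_cast hw
  have : (h : ℝ) ≤ h' := by exact_mod_cast hh
  exact ⟨h1, by linarith, h3, by linarith⟩

lemma _root_.Rg_mono {X N N' s : ℕ} (hN : N ≤ N') : Rg X N s ⊆ Rg X N' s := by
  rintro z ⟨h1, h2, h3, h4, h5, h6⟩
  have : (N : ℝ) ≤ N' := by exact_mod_cast hN
  exact ⟨h1, by linarith, by nlinarith, h4, h5, h6⟩

lemma _root_.zero_mem_Rg (X N s : ℕ) : (0 : ℝ × ℝ) ∈ Rg X N s := by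
  simp [Rg]

lemma DrawD.translate (e g : ℤ) {v : V} {p : ℝ × ℝ} {R : Set (ℝ × ℝ)} (h : T.DrawD v p R) :
    T.DrawD v (p.1 + e, p.2 + g) {z | (z.1 - e, z.2 - g) ∈ R} := by
  have := (h.aff 1 0 0 1 e g (by norm_num)).mono (R' := {z | (z.1 - e, z.2 - g) ∈ R}) (by
    rintro _ ⟨y, hy, rfl⟩
    simpa [_root_.aff] using hy)
  simpa [_root_.aff] using this

lemma DrawD.swap {v : V} {w h : ℕ} (hd : T.DrawD v 0 (Rect w h)) : T.DrawD v 0 (Rect h w) := by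
  have := (hd.aff 0 1 1 0 0 0 (by norm_num)).mono (R' := Rect h w) (by
    rintro _ ⟨y, ⟨h1, h2, h3, h4⟩, rfl⟩
    simp [_root_.aff, Rect, *])
  have h0 : _root_.aff 0 1 1 0 0 0 0 = 0 := by ext <;> simp [_root_.aff]
  rwa [h0] at this

lemma StarD.swap {v : V} {S : Finset V} {R R' : Set (ℝ × ℝ)} (h : T.StarD v S R)
    (hR : ∀ z ∈ R, (z.2, z.1) ∈ R') : T.StarD v S R' :=
  (h.lin 0 1 1 0 (by norm_num)).mono (by
    rintro _ ⟨y, hy, rfl⟩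
    simpa [_root_.aff] using hR y hy)

/-- A further subtree, with its root at `(N + 1, 1)`, can be appended to a row. -/
lemma StarD.addItem [DecidableEq V] {v c : V} {S : Finset V} {X N s w h : ℕ}
    (hS : T.StarD v S (Rg X N s)) (hc : c ∈ T.ch v) (hcS : c ∉ S) (hd : T.DrawD c 0 (Rect w h))
    (hh : h + 1 ≤ s) (hX : X ≤ N + 1) : T.StarD v (insert c S) (Rg X (N + 1 + w) s) := by
  have h1 := hd.translate ((N : ℤ) + 1) 1
  push_cast at h1
  simp only [Prod.fst_zero, Prod.snd_zero, zero_add] at h1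
  have hh' : (h : ℝ) + 1 ≤ s := by exact_mod_cast hh
  have hX' : (X : ℝ) ≤ N + 1 := by exact_mod_cast hX
  have h0N : (0 : ℝ) ≤ N := by positivity
  have h0X : (0 : ℝ) ≤ X := by positivity
  have h0h : (0 : ℝ) ≤ h := by positivity
  have h0w : (0 : ℝ) ≤ w := by positivity
  have h2 := StarD.single hc h1 ?_ ?_
  rotate_left
  · rintro ⟨-, -, h3, -⟩
    norm_num at h3
  · rintro z hz ⟨h3, h4, h5, h6⟩
    obtain ⟨t, ht0, ht1, e1, e2⟩ := seg_zero hz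
    simp only at h3 h4 h5 h6 e1 e2
    obtain rfl : t = 1 := by linarith
    ext <;> simp [e1, e2]
  have h3 := hS.merge h2 (by simpa using hcS) ?_
  · rw [Finset.union_comm, ← Finset.insert_eq] at h3
    refine h3.mono ?_
    rintro z (hz | hz | hz)
    · exact Rg_mono (by omega) hz
    · obtain ⟨t, ht0, ht1, e1, e2⟩ := seg_zero hz
      simp only at e1 e2
      simp only [Rg, Set.mem_ofPred_eq, e1, e2]
      push_cast
      refine ⟨by positivity, by nlinarith, by nlinarith, by linarith, by nlinarith, ?_⟩
      have : t * X ≤ t * (N + 1) := by gcongr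
      have h7 : 0 ≤ t * ((N : ℝ) + 1) := by positivity
      nlinarith
    · obtain ⟨h3, h4, h5, h6⟩ := hz
      simp only at h3 h4 h5 h6
      simp only [Rg, Set.mem_ofPred_eq]
      push_cast
      refine ⟨by linarith, by linarith, ?_, by linarith, by linarith, ?_⟩
      · have : ((N : ℝ) + 1 + w) * 1 ≤ (N + 1 + w) * z.2 := by gcongr; linarith
        linarith
      · calc (X : ℝ) * z.2 ≤ (N + 1) * s := by gcongr <;> linarith
          _ ≤ s * z.1 := by nlinarith
  · rintro z ⟨g1, g2, g3, g4, g5, g6⟩ (hz | hz)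
    · obtain ⟨t, ht0, ht1, e1, e2⟩ := seg_zero hz
      simp only at e1 e2
      rw [e1, e2] at g3
      obtain rfl : t = 0 := by nlinarith
      ext <;> simp [e1, e2]
    · obtain ⟨h3, -⟩ := hz
      simp only at h3
      linarith

/-- Subtrees of height less than `s` are placed side by side, from column `X` on and with their
roots on the line `y = 1`. -/
lemma StarD.row {v : V} {S : Finset V} {X s : ℕ} (hX : 1 ≤ X) (w h : V → ℕ) (hS : S ⊆ T.ch v)
    (hd : ∀ c ∈ S, T.DrawD c 0 (Rect (w c) (h c))) (hs : ∀ c ∈ S, h c + 1 ≤ s) :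
    T.StarD v S (Rg X (X - 1 + ∑ c ∈ S, (w c + 1)) s) := by
  classical
  induction S using Finset.induction_on with
  | empty => exact StarD.empty _ _
  | insert c S hc ih =>
    have := (ih (fun d hd => hS (Finset.mem_insert_of_mem hd))
      (fun d hd' => hd d (Finset.mem_insert_of_mem hd'))
      (fun d hd' => hs d (Finset.mem_insert_of_mem hd'))).addItem
      (hS (Finset.mem_insert_self _ _)) hc
      (hd c (Finset.mem_insert_self _ _)) (hs c (Finset.mem_insert_self _ _)) (by omega)
    refine this.mono (Rg_mono ?_)
    rw [Finset.sum_insert hc]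
    omega

/-- The last subtree may use the full height, including the bottom line, if its root is placed
level with the centre. -/
lemma StarD.addLast [DecidableEq V] {v e : V} {S : Finset V} {N s w : ℕ}
    (hS : T.StarD v S (Rg 1 N s)) (hch : T.ch v = insert e S) (heS : e ∉ S)
    (hd : T.DrawD e 0 (Rect w s)) : T.DrawD v 0 (Rect (N + 1 + w) s) := by
  have h1 := hd.translate ((N : ℤ) + 1) 0
  push_cast at h1
  simp only [Prod.fst_zero, Prod.snd_zero, zero_add] at h1
  have h0N : (0 : ℝ) ≤ N := by positivity
  have h0w : (0 : ℝ) ≤ w := by positivity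
  have h0s : (0 : ℝ) ≤ s := by positivity
  have h2 := StarD.single (v := v) (by rw [hch]; exact Finset.mem_insert_self _ _) h1 ?_ ?_
  rotate_left
  · rintro ⟨h3, -⟩
    simp only [Prod.fst_zero] at h3
    linarith
  · rintro z hz ⟨h3, h4, h5, h6⟩
    obtain ⟨t, ht0, ht1, e1, e2⟩ := seg_zero hz
    simp only at h3 h4 h5 h6 e1 e2
    obtain rfl : t = 1 := by
      by_contra hne
      have : t < 1 := lt_of_le_of_ne ht1 hne
      nlinarith
    ext <;> simp [e1, e2]
  have h3 := hS.merge h2 (by simpa using heS) ?_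
  · rw [Finset.union_comm, ← Finset.insert_eq, ← hch] at h3
    refine (h3.close (.inl (zero_mem_Rg _ _ _))).mono ?_
    rintro z (hz | hz | hz)
    · obtain ⟨g1, g2, g3, g4, g5, g6⟩ := hz
      exact ⟨g1, by push_cast; linarith, g4, g5⟩
    · obtain ⟨t, ht0, ht1, e1, e2⟩ := seg_zero hz
      simp only at e1 e2
      simp only [Rect, Set.mem_ofPred_eq, e1, e2]
      push_cast
      exact ⟨by positivity, by nlinarith, by simp, by simp⟩
    · obtain ⟨h3, h4, h5, h6⟩ := hz
      simp only at h3 h4 h5 h6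
      simp only [Rect, Set.mem_ofPred_eq]
      push_cast
      exact ⟨by linarith, by linarith, by linarith, by linarith⟩
  · rintro z ⟨g1, g2, g3, g4, g5, g6⟩ (hz | hz)
    · obtain ⟨t, ht0, ht1, e1, e2⟩ := seg_zero hz
      simp only [mul_zero] at e1 e2
      rw [e2] at g3
      ext
      · simp only [Prod.fst_zero]; linarith
      · simpa using e2
    · obtain ⟨h3, -⟩ := hz
      simp only at h3
      linarith

lemma DrawD.ofRg {v : V} {X N s : ℕ} (h : T.StarD v (T.ch v) (Rg X N s)) :
    T.DrawD v 0 (Rect N s) :=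
  (h.close (zero_mem_Rg _ _ _)).mono fun _ hz => ⟨hz.1, hz.2.1, hz.2.2.2.1, hz.2.2.2.2.1⟩

variable (T) in
/-- The classical drawing of width `n - 1` and height `log₂ n`: the heaviest child is level with
its parent, the other children are one unit higher, and their subtrees are at most half as
large. -/
lemma log_height (v : V) : T.DrawD v 0 (Rect (T.sz v - 1) (Nat.log 2 (T.sz v))) := by
  classical
  induction hn : T.sz v using Nat.strong_induction_on generalizing v with
  | _ n ih =>
  subst hn
  have ih' : ∀ c ∈ T.ch v, T.DrawD c 0 (Rect (T.sz c - 1) (Nat.log 2 (T.sz c))) :=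
    fun c hc => ih _ (T.sz_lt hc) c rfl
  have hsum := T.sz_eq v
  rcases (T.ch v).eq_empty_or_nonempty with h0 | hne
  · have := DrawD.ofRg (T := T) (v := v) (X := 1) (N := 0) (s := 0) (by
      rw [h0]; exact StarD.empty _ _)
    exact this.mono (Rect_mono (by omega) (by omega))
  · obtain ⟨e, he, hmax⟩ := Finset.exists_max_image (T.ch v) T.sz hne
    rw [← Finset.add_sum_erase _ _ he] at hsum
    have hrow := StarD.row (T := T) (v := v) (S := (T.ch v).erase e) (X := 1)
      (s := Nat.log 2 (T.sz v)) le_rfl (fun c => T.sz c - 1) (fun c => Nat.log 2 (T.sz c))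
      (Finset.erase_subset _ _) (fun c hc => ih' c (Finset.mem_of_mem_erase hc)) (by
        intro c hc
        have h1 := Finset.single_le_sum (f := T.sz) (fun _ _ => Nat.zero_le _) hc
        have h2 := hmax c (Finset.mem_of_mem_erase hc)
        have h3 := T.sz_pos c
        rw [← Nat.log_mul_base (by norm_num) h3.ne']
        exact Nat.log_mono_right (by omega))
    have hlast := hrow.addLast (e := e) (by rw [Finset.insert_erase he]) (by simp)
      ((ih' e he).mono (Rect_mono le_rfl (Nat.log_mono_right (T.sz_lt he).le)))
    refine hlast.mono (Rect_mono ?_ le_rfl)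
    have h3 := T.sz_pos e
    have h4 : ∑ c ∈ (T.ch v).erase e, (T.sz c - 1 + 1) = ∑ c ∈ (T.ch v).erase e, T.sz c :=
      Finset.sum_congr rfl fun c _ => by have := T.sz_pos c; omega
    simp only [h4]
    omega

/-! ### Coprime pairs in a box -/

lemma _root_.sum_inv_sq_le (n : ℕ) : ∑ d ∈ Finset.Icc 2 n, 1 / (d : ℝ) ^ 2 ≤ 3 / 4 := by
  rcases lt_or_ge n 2 with h | h
  · rw [Finset.Icc_eq_empty (by omega)]; norm_num
  · suffices ∑ d ∈ Finset.Icc 2 n, 1 / (d : ℝ) ^ 2 ≤ 3 / 4 - 1 / (n : ℝ) by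
      have : (0 : ℝ) ≤ 1 / n := by positivity
      linarith
    induction n, h using Nat.le_induction with
    | base => norm_num
    | succ n hn ih =>
      rw [Finset.sum_Icc_succ_top (by omega)]
      have hn' : (0 : ℝ) < n := by positivity
      have : 1 / ((n + 1 : ℕ) : ℝ) ^ 2 ≤ 1 / n - 1 / ((n + 1 : ℕ) : ℝ) := by
        push_cast
        rw [div_sub_div _ _ hn'.ne' (by positivity), div_le_div_iff₀ (by positivity) (by positivity)]
        nlinarith
      linarith

/-- The coprime pairs `(p, q)` in `[1, A] × [1, B]` with `p > A / 8`. -/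
def _root_.cop (A B : ℕ) : Finset (ℕ × ℕ) :=
  (Finset.Ioc 0 A ×ˢ Finset.Ioc 0 B).filter (fun z => Nat.Coprime z.1 z.2 ∧ A < 8 * z.1)

/-- At least one eighth of all pairs belong to `cop A B`: at most `AB ∑_{d ≥ 2} d⁻² ≤ 3AB/4` pairs
are not coprime, and at most `AB/8` pairs have `p ≤ A/8`. -/
lemma _root_.card_cop (A B : ℕ) : A * B ≤ 8 * (cop A B).card := by
  classical
  let U := Finset.Ioc 0 A ×ˢ Finset.Ioc 0 B
  let E : ℕ → Finset (ℕ × ℕ) := fun d =>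
    (Finset.Ioc 0 A).filter (d ∣ ·) ×ˢ (Finset.Ioc 0 B).filter (d ∣ ·)
  have hU : U ⊆ cop A B ∪ ((Finset.Icc 2 A).biUnion E ∪
      Finset.Ioc 0 (A / 8) ×ˢ Finset.Ioc 0 B) := by
    rintro ⟨p, q⟩ h
    simp only [U, Finset.mem_product, Finset.mem_Ioc] at h
    simp only [cop, E, Finset.mem_union, Finset.mem_filter, Finset.mem_product, Finset.mem_Ioc,
      Finset.mem_biUnion, Finset.mem_Icc]
    by_cases hc : Nat.Coprime p q
    · by_cases hp : A < 8 * p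
      · exact .inl ⟨h, hc, hp⟩
      · exact .inr (.inr ⟨⟨h.1.1, by omega⟩, h.2⟩)
    · refine .inr (.inl ⟨Nat.gcd p q, ⟨?_, ?_⟩, ⟨h.1, Nat.gcd_dvd_left _ _⟩,
        ⟨h.2, Nat.gcd_dvd_right _ _⟩⟩)
      · have := Nat.gcd_pos_of_pos_left q h.1.1
        unfold Nat.Coprime at hc
        omega
      · exact (Nat.le_of_dvd h.1.1 (Nat.gcd_dvd_left _ _)).trans h.1.2
  have h1 := (Finset.card_le_card hU).trans ((Finset.card_union_le _ _).trans
    (Nat.add_le_add_left (Finset.card_union_le _ _) _))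
  have h2 : (((Finset.Icc 2 A).biUnion E).card : ℝ) ≤ 3 / 4 * (A * B) := by
    calc (((Finset.Icc 2 A).biUnion E).card : ℝ)
        ≤ ((∑ d ∈ Finset.Icc 2 A, (E d).card : ℕ) : ℝ) := by
          exact_mod_cast Finset.card_biUnion_le
      _ ≤ ∑ d ∈ Finset.Icc 2 A, 1 / (d : ℝ) ^ 2 * (A * B) := by
          push_cast
          refine Finset.sum_le_sum fun d hd => ?_
          have hE : (E d).card = (A / d) * (B / d) := by
            simp only [E, Finset.card_product, Nat.Ioc_filter_dvd_card_eq_div]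
          rw [hE]
          push_cast
          calc (((A / d : ℕ) : ℝ) * ((B / d : ℕ) : ℝ)) ≤ ((A : ℝ) / d) * ((B : ℝ) / d) := by
                gcongr <;> exact Nat.cast_div_le
            _ = _ := by ring
      _ ≤ _ := by
          rw [← Finset.sum_mul]
          gcongr
          exact sum_inv_sq_le A
  have h3 : ((A / 8 : ℕ) : ℝ) ≤ (A : ℝ) / 8 := by exact_mod_cast Nat.cast_div_le (α := ℝ)
  simp only [U, Finset.card_product, Nat.card_Ioc, Nat.sub_zero] at h1
  have h1' : (A : ℝ) * B ≤ (cop A B).card + (((Finset.Icc 2 A).biUnion E).card +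
    ((A / 8 : ℕ) : ℝ) * B) := by exact_mod_cast h1
  have h4 : ((A / 8 : ℕ) : ℝ) * B ≤ A / 8 * B := by gcongr
  have : (A : ℝ) * B ≤ 8 * (cop A B).card := by linarith
  exact_mod_cast this

/-- A coprime pair is the first column of a unimodular matrix. -/
lemma _root_.exists_unimodular {p q : ℕ} (hp : 0 < p) (h : Nat.Coprime p q) :
    ∃ w₁ w₂ : ℤ, 0 ≤ w₁ ∧ w₁ ≤ p ∧ p * w₂ - q * w₁ = 1 := by
  have hb := Nat.gcd_eq_gcd_ab p q
  rw [Nat.Coprime.gcd_eq_one h] at hb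
  have hp' : (0 : ℤ) < p := by exact_mod_cast hp
  set x := Nat.gcdA p q
  set y := Nat.gcdB p q
  refine ⟨(-y) % p, x - q * ((-y) / p), Int.emod_nonneg _ hp'.ne', (Int.emod_lt_of_pos _ hp').le, ?_⟩
  have := Int.emod_add_mul_ediv (-y) p
  push_cast at hb
  linear_combination (-q : ℤ) * this - hb

/-! ### Disjoint sectors and stars of subtrees of similar size -/

lemma _root_.exists_partition {V ι : Type*} [DecidableEq V] [DecidableEq ι] (P : Finset ι) (J : ℕ)
    (S : Finset V) (h : S.card ≤ P.card * J) :
    ∃ F : ι → Finset V, (∀ p ∈ P, (F p).card ≤ J) ∧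
      (∀ p ∈ P, ∀ q ∈ P, p ≠ q → Disjoint (F p) (F q)) ∧ P.biUnion F = S := by
  induction P using Finset.induction_on generalizing S with
  | empty =>
    obtain rfl : S = ∅ := by simpa using h
    exact ⟨fun _ => ∅, by simp⟩
  | insert p P hp ih =>
    rw [Finset.card_insert_of_notMem hp] at h
    obtain ⟨S', hS', hc⟩ := Finset.exists_subset_card_eq (Nat.min_le_right J S.card)
    obtain ⟨F, h1, h2, h3⟩ := ih (S \ S') (by
      rw [Finset.card_sdiff_of_subset hS', hc]
      have : (P.card + 1) * J = P.card * J + J := by ring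
      omega)
    have hF : ∀ q ∈ P, F q ⊆ S \ S' := fun q hq => h3 ▸ Finset.subset_biUnion_of_mem F hq
    have hne : ∀ q ∈ P, q ≠ p := fun q hq e => hp (e ▸ hq)
    have hd : ∀ q ∈ P, Disjoint S' (F q) := fun q hq =>
      Finset.disjoint_of_subset_right (hF q hq) Finset.disjoint_sdiff
    refine ⟨Function.update F p S', ?_, ?_, ?_⟩
    · intro q hq
      rcases Finset.mem_insert.1 hq with rfl | hq
      · simp [hc]
      · rw [Function.update_of_ne (hne q hq)]; exact h1 q hq
    · intro q hq r hr hqr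
      rcases Finset.mem_insert.1 hq with hqp | hqP <;>
        rcases Finset.mem_insert.1 hr with hrp | hrP
      · exact absurd (hqp.trans hrp.symm) hqr
      · rw [hqp, Function.update_self, Function.update_of_ne (hne r hrP)]; exact hd r hrP
      · rw [hrp, Function.update_self, Function.update_of_ne (hne q hqP)]
        exact (hd q hqP).symm
      · rw [Function.update_of_ne (hne r hrP), Function.update_of_ne (hne q hqP)]
        exact h2 q hqP r hrP hqr
    · rw [Finset.biUnion_insert, Function.update_self,
        Finset.biUnion_congr rfl (fun q hq => Function.update_of_ne (hne q hq) S' F), h3,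
        Finset.union_sdiff_of_subset hS']

/-- The half-open sector of slopes in `[α, β)` in the right half-plane, with its apex. -/
def _root_.Sec (α β : ℝ) : Set (ℝ × ℝ) :=
  {z | z = 0 ∨ (0 < z.1 ∧ α * z.1 ≤ z.2 ∧ z.2 < β * z.1)}

lemma _root_.Sec_mono {α β α' β' : ℝ} (h : α' ≤ α) (h' : β ≤ β') : Sec α β ⊆ Sec α' β' := by
  rintro z (hz | ⟨h1, h2, h3⟩)
  · exact .inl hz
  · exact .inr ⟨h1, by nlinarith, by nlinarith⟩

/-- Stars at the same centre that lie in pairwise disjoint sectors can be superimposed. -/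
lemma StarD.sectors [DecidableEq V] {v : V} {ι : Type*} [DecidableEq ι] (I : Finset ι)
    (S : ι → Finset V) (R : Set (ℝ × ℝ)) (α β : ι → ℝ)
    (h : ∀ i ∈ I, T.StarD v (S i) (Sec (α i) (β i) ∩ R))
    (hS : ∀ i ∈ I, ∀ j ∈ I, i ≠ j → Disjoint (S i) (S j))
    (hab : ∀ i ∈ I, ∀ j ∈ I, i ≠ j → β i ≤ α j ∨ β j ≤ α i) :
    T.StarD v (I.biUnion S) {z | (z = 0 ∨ ∃ i ∈ I, z ∈ Sec (α i) (β i)) ∧ (z = 0 ∨ z ∈ R)} := by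
  refine (StarD.biUnion I S _ h hS ?_).mono ?_
  · rintro i hi j hj hne z ⟨hz | ⟨h1, h2, h3⟩, -⟩ ⟨hz' | ⟨h1', h2', h3'⟩, -⟩
    · exact hz
    · exact hz
    · exact hz'
    · exfalso
      rcases hab i hi j hj hne with h | h <;> nlinarith
  · intro z hz
    simp only [Set.mem_iUnion] at hz
    obtain ⟨i, hi, h1, h2⟩ := hz
    exact ⟨.inr ⟨i, hi, h1⟩, .inr h2⟩

/-- A row of at most `J` subtrees of size at most `s`, each turned on its side so that its width is
logarithmic. -/
lemma StarD.comb {v : V} {S : Finset V} {X J a s : ℕ} (hX : 1 ≤ X) (hS : S ⊆ T.ch v)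
    (hJ : S.card ≤ J) (hJX : J * a ≤ X) (hs : ∀ c ∈ S, T.sz c ≤ s)
    (ha : ∀ c ∈ S, Nat.log 2 (T.sz c) + 1 ≤ a) : T.StarD v S (Rg X (2 * X) s) := by
  refine (StarD.row hX (fun c => Nat.log 2 (T.sz c)) (fun c => T.sz c - 1) hS
    (fun c _ => (T.log_height c).swap)
    (fun c hc => by have := hs c hc; have := T.sz_pos c; omega)).mono (Rg_mono ?_)
  have : ∑ c ∈ S, (Nat.log 2 (T.sz c) + 1) ≤ S.card * a := Finset.sum_le_card_nsmul _ _ _ ha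
  have := Nat.mul_le_mul_right a hJ
  omega

/-- Subtrees that are larger than the available width: the combs are sheared into consecutive
sectors. -/
lemma StarD.classLarge {v : V} {S : Finset V} {a s R₁ R₂ : ℕ} (hS : S ⊆ T.ch v)
    (hs : ∀ c ∈ S, T.sz c ≤ s) (ha : ∀ c ∈ S, Nat.log 2 (T.sz c) + 1 ≤ a)
    (hk : a * S.card * s ≤ R₁ * R₂) (hs2 : s ≤ 2 * R₂) (ha1 : 1 ≤ a) (haR : a ≤ R₁)
    (h1 : R₁ ≤ s) :
    T.StarD v S (Sec 0 ((17 * (R₂ / R₁ + 1) : ℕ) : ℝ) ∩ {z | z.1 ≤ 34 * a * R₁}) := by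
  classical
  set k := S.card
  set J := R₁ / a with hJ
  set δ := s / R₁ + 1 with hδ
  have hR : 0 < R₁ := by omega
  have hJ1 : 1 ≤ J := Nat.div_pos haR (by omega)
  have hJa : J * a ≤ R₁ := Nat.div_mul_le_self _ _
  have hJa2 : R₁ ≤ 2 * (a * J) := by
    have := Nat.lt_div_mul_add (a := R₁) (b := a) (by omega)
    have : a ≤ a * J := Nat.le_mul_of_pos_right _ hJ1
    rw [mul_comm] at this
    nlinarith
  have hδs : s < δ * R₁ := by
    have := Nat.lt_div_mul_add (a := s) hR
    rw [hδ]; linarith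
  obtain ⟨F, hF1, hF2, hF3⟩ := exists_partition (Finset.range (k / J + 1)) J S (by
    rw [Finset.card_range]
    have := Nat.lt_div_mul_add (a := k) (b := J) (by omega)
    change k ≤ _
    linarith)
  have hFS : ∀ i ∈ Finset.range (k / J + 1), F i ⊆ S := fun i hi =>
    hF3 ▸ Finset.subset_biUnion_of_mem F hi
  have hN : (k / J + 1) * δ ≤ 17 * (R₂ / R₁ + 1) := by
    have e1 : (k / J) * s ≤ 2 * R₂ := by
      have : (k / J) * s * R₁ ≤ 2 * R₂ * R₁ := by
        calc (k / J) * s * R₁ ≤ (k / J) * s * (2 * (a * J)) := by gcongr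
          _ = 2 * (a * (k / J * J) * s) := by ring
          _ ≤ 2 * (a * k * s) := by gcongr; exact Nat.div_mul_le_self _ _
          _ ≤ 2 * (R₁ * R₂) := by gcongr
          _ = _ := by ring
      exact Nat.le_of_mul_le_mul_right this hR
    have e2 : (k / J + 1) * s ≤ 4 * R₂ := by nlinarith
    have e3 : δ * R₁ ≤ 2 * s := by
      have := Nat.div_mul_le_self s R₁
      rw [hδ]; linarith
    have e4 : (k / J + 1) * δ * R₁ * s ≤ 8 * R₂ * s := by
      calc (k / J + 1) * δ * R₁ * s = ((k / J + 1) * s) * (δ * R₁) := by ring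
        _ ≤ (4 * R₂) * (2 * s) := by gcongr
        _ = _ := by ring
    have e5 := Nat.le_of_mul_le_mul_right e4 (by omega : 0 < s)
    have e6 := Nat.lt_div_mul_add (a := R₂) hR
    refine Nat.le_of_mul_le_mul_right (?_ : _ * R₁ ≤ _ * R₁) hR
    nlinarith
  have key := StarD.sectors (T := T) (v := v) (Finset.range (k / J + 1)) F
    {z | z.1 ≤ 34 * a * R₁} (fun i => (i : ℝ) * δ) (fun i => ((i : ℝ) + 1) * δ) ?_ hF2 ?_
  · rw [hF3] at key
    refine key.mono ?_
    have hpos : (0 : ℝ) ≤ 34 * a * R₁ := by positivity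
    rintro z ⟨hz1, hz2⟩
    refine ⟨?_, ?_⟩
    · rcases hz1 with rfl | ⟨i, hi, hz⟩
      · exact .inl rfl
      · refine Sec_mono (by positivity) ?_ hz
        have : ((i + 1) * δ : ℕ) ≤ 17 * (R₂ / R₁ + 1) := by
          refine le_trans ?_ hN
          gcongr
          have := Finset.mem_range.1 hi
          omega
        calc ((i : ℝ) + 1) * δ = (((i + 1) * δ : ℕ) : ℝ) := by push_cast; ring
          _ ≤ _ := by exact_mod_cast this
    · rcases hz2 with rfl | hz
      · exact hpos
      · exact hz
  · intro i hi
    have hc := StarD.comb (T := T) (v := v) (X := R₁) hR ((hFS i hi).trans hS) (hF1 i hi) hJa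
      (fun c hc => hs c (hFS i hi hc)) (fun c hc => ha c (hFS i hi hc))
    refine (hc.lin 1 0 (i * δ : ℕ) 1 (by norm_num)).mono ?_
    rintro _ ⟨z, ⟨g1, g2, g3, g4, g5, g6⟩, rfl⟩
    have ha1' : (1 : ℝ) ≤ a := by exact_mod_cast ha1
    have hR' : (0 : ℝ) < R₁ := by exact_mod_cast hR
    have hδs' : (s : ℝ) < δ * R₁ := by exact_mod_cast hδs
    refine ⟨?_, ?_⟩
    · rcases g1.eq_or_lt with h0 | h0
      · left
        have : z.2 = 0 := by
          rw [← h0] at g6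
          nlinarith
        ext <;> simp [_root_.aff, ← h0, this]
      · right
        have : z.2 < δ * z.1 := by
          have : (R₁ : ℝ) * z.2 < R₁ * (δ * z.1) := by nlinarith
          exact lt_of_mul_lt_mul_left this hR'.le
        simp only [_root_.aff]
        push_cast
        exact ⟨by linarith, by linarith, by linarith⟩
    · simp only [_root_.aff, Set.mem_ofPred_eq]
      push_cast at g2 ⊢
      nlinarith
  · intro i _ j _ hij
    have hδ0 : (0 : ℝ) ≤ δ := by positivity
    rcases lt_or_gt_of_ne hij with h | h
    · left
      have : (i : ℝ) + 1 ≤ j := by exact_mod_cast h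
      exact mul_le_mul_of_nonneg_right this hδ0
    · right
      have : (j : ℝ) + 1 ≤ i := by exact_mod_cast h
      exact mul_le_mul_of_nonneg_right this hδ0

/-- Subtrees that are smaller than the available width: the combs are mapped along the primitive
directions `(p, q)` by unimodular maps. Two distinct fractions `q / p`, `q' / p'` with denominators
at most `A` differ by at least `1 / (p p')`, which leaves a sector of slopes
`[q / p, q / p + 1 / (p A))` for each of them. -/
lemma StarD.classSmall {v : V} {S : Finset V} {a s R₁ R₂ : ℕ} (hS : S ⊆ T.ch v)
    (hs : ∀ c ∈ S, T.sz c ≤ s) (ha : ∀ c ∈ S, Nat.log 2 (T.sz c) + 1 ≤ a)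
    (hk : a * S.card * s ≤ R₁ * R₂) (hs1 : 1 ≤ s) (ha1 : 1 ≤ a) (hR : R₁ ≤ R₂)
    (h1 : s ≤ R₁) :
    T.StarD v S (Sec 0 ((17 * (R₂ / R₁ + 1) : ℕ) : ℝ) ∩ {z | z.1 ≤ 34 * a * R₁}) := by
  classical
  set k := S.card
  set A := R₁ / s + 1 with hA
  set B := R₂ / s + 1 with hB
  have hAs : R₁ ≤ A * s := by
    have := Nat.lt_div_mul_add (a := R₁) (b := s) (by omega)
    rw [hA]; linarith
  have hBs : R₂ ≤ B * s := by
    have := Nat.lt_div_mul_add (a := R₂) (b := s) (by omega)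
    rw [hB]; linarith
  have hAs2 : A * s ≤ 2 * R₁ := by
    have := Nat.div_mul_le_self R₁ s
    rw [hA]; linarith
  have hBs2 : B * s ≤ 2 * R₂ := by
    have := Nat.div_mul_le_self R₂ s
    rw [hB]; linarith
  obtain ⟨F, hF1, hF2, hF3⟩ := exists_partition (cop A B) (8 * s) S (by
    have e1 := card_cop A B
    have e2 : k * s ≤ ((cop A B).card * (8 * s)) * s := by
      calc k * s ≤ a * k * s := by
            rw [mul_assoc]; exact Nat.le_mul_of_pos_left _ ha1
        _ ≤ R₁ * R₂ := hk
        _ ≤ (A * s) * (B * s) := by gcongr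
        _ = A * B * s * s := by ring
        _ ≤ (8 * (cop A B).card) * s * s := by gcongr
        _ = _ := by ring
    exact Nat.le_of_mul_le_mul_right e2 (by omega))
  have hFS : ∀ i ∈ cop A B, F i ⊆ S := fun i hi => hF3 ▸ Finset.subset_biUnion_of_mem F hi
  have hcop : ∀ i ∈ cop A B, (0 < i.1 ∧ i.1 ≤ A) ∧ (0 < i.2 ∧ i.2 ≤ B) ∧ Nat.Coprime i.1 i.2 ∧
      A < 8 * i.1 := by
    intro i hi
    simp only [cop, Finset.mem_filter, Finset.mem_product, Finset.mem_Ioc] at hi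
    tauto
  have hA0 : (0 : ℝ) < A := by rw [hA]; positivity
  have ha0 : (1 : ℝ) ≤ a := by exact_mod_cast ha1
  have hs0 : (1 : ℝ) ≤ s := by exact_mod_cast hs1
  have hA1 : (1 : ℝ) ≤ A := by rw [hA]; push_cast; linarith [Nat.cast_nonneg (α := ℝ) (R₁ / s)]
  have key := StarD.sectors (T := T) (v := v) (cop A B) F {z | z.1 ≤ 34 * a * R₁}
    (fun i => (i.2 : ℝ) / i.1) (fun i => (i.2 : ℝ) / i.1 + 1 / (i.1 * A)) ?_ hF2 ?_
  · rw [hF3] at key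
    refine key.mono ?_
    have hpos : (0 : ℝ) ≤ 34 * a * R₁ := by positivity
    rintro z ⟨hz1, hz2⟩
    refine ⟨?_, ?_⟩
    · rcases hz1 with rfl | ⟨i, hi, hz⟩
      · exact .inl rfl
      · refine Sec_mono (by positivity) ?_ hz
        obtain ⟨⟨p0, pA⟩, ⟨q0, qB⟩, -, hp8⟩ := hcop i hi
        have p0' : (1 : ℝ) ≤ i.1 := by exact_mod_cast p0
        have e1 : i.2 ≤ 16 * (R₂ / R₁ + 1) * i.1 := by
          refine qB.trans ?_
          have e2 : B * R₁ ≤ 2 * R₂ * A := by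
            refine Nat.le_of_mul_le_mul_right (?_ : _ * s ≤ _ * s) (by omega : 0 < s)
            calc B * R₁ * s = (B * s) * R₁ := by ring
              _ ≤ (2 * R₂) * (A * s) := by gcongr
              _ = _ := by ring
          have e3 := Nat.lt_div_mul_add (a := R₂) (b := R₁) (by omega)
          have e4 : B * R₁ ≤ 16 * (R₂ / R₁ + 1) * i.1 * R₁ := by
            calc B * R₁ ≤ 2 * R₂ * A := e2
              _ ≤ 2 * (R₂ / R₁ * R₁ + R₁) * (8 * i.1) := by gcongr
              _ = _ := by ring
          exact Nat.le_of_mul_le_mul_right e4 (by omega)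
        have e2 : (i.2 : ℝ) / i.1 ≤ (16 * (R₂ / R₁ + 1) : ℕ) := by
          rw [div_le_iff₀ (by linarith)]
          exact_mod_cast e1
        have e3 : 1 / ((i.1 : ℝ) * A) ≤ 1 := by
          rw [div_le_one (by positivity)]
          nlinarith
        push_cast at e2 ⊢
        have : (0 : ℝ) ≤ ((R₂ / R₁ : ℕ) : ℝ) := by positivity
        linarith
    · rcases hz2 with rfl | hz
      · exact hpos
      · exact hz
  · intro i hi
    obtain ⟨⟨p0, pA⟩, ⟨q0, qB⟩, hco, hp8⟩ := hcop i hi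
    obtain ⟨w₁, w₂, hw0, hwp, hdet⟩ := exists_unimodular p0 hco
    have hc := StarD.comb (T := T) (v := v) (X := 8 * s * a) (by nlinarith)
      ((hFS i hi).trans hS) (hF1 i hi) le_rfl
      (fun c hc => hs c (hFS i hi hc)) (fun c hc => ha c (hFS i hi hc))
    refine (hc.lin i.1 w₁ i.2 w₂ (by rw [mul_comm w₁, hdet]; norm_num)).mono ?_
    rintro _ ⟨z, ⟨g1, g2, g3, g4, g5, g6⟩, rfl⟩
    have p0' : (0 : ℝ) < i.1 := by exact_mod_cast p0
    have pA' : (i.1 : ℝ) ≤ A := by exact_mod_cast pA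
    have hp8' : (A : ℝ) < 8 * i.1 := by exact_mod_cast hp8
    have hw0' : (0 : ℝ) ≤ w₁ := by exact_mod_cast hw0
    have hwp' : (w₁ : ℝ) ≤ i.1 := by exact_mod_cast hwp
    have hdet' : (i.1 : ℝ) * w₂ - i.2 * w₁ = 1 := by exact_mod_cast hdet
    have g7 : 8 * z.2 ≤ z.1 := by
      push_cast at g6
      have e1 : (s : ℝ) * (8 * z.2) ≤ s * z.1 := by
        have : (s : ℝ) * (8 * z.2) * 1 ≤ (s : ℝ) * (8 * z.2) * a := by gcongr
        linarith
      exact le_of_mul_le_mul_left e1 (by linarith)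
    simp only [_root_.aff]
    push_cast
    refine ⟨?_, ?_⟩
    · rcases g1.eq_or_lt with h0 | h0
      · left
        have : z.2 = 0 := by linarith
        ext <;> simp [← h0, this]
      · right
        have hx : 0 < (i.1 : ℝ) * z.1 + w₁ * z.2 := by positivity
        have hy : (i.2 : ℝ) * z.1 + w₂ * z.2 =
            i.2 / i.1 * (i.1 * z.1 + w₁ * z.2) + z.2 / i.1 := by
          field_simp
          linear_combination z.2 * hdet'
        simp only [add_zero]
        rw [hy]
        refine ⟨hx, by have : 0 ≤ z.2 / i.1 := by positivity
                       linarith, ?_⟩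
        rw [add_mul]
        gcongr
        rw [div_mul_eq_mul_div, one_mul, div_lt_div_iff₀ p0' (by positivity)]
        have e1 : z.2 * A < i.1 * z.1 + w₁ * z.2 := by
          have e2 : z.2 * A ≤ z.2 * (8 * i.1) := by gcongr
          have e3 : (i.1 : ℝ) * (8 * z.2) ≤ i.1 * z.1 := by gcongr
          rcases g4.eq_or_lt with h | h
          · rw [← h]; simpa using by positivity
          · have : z.2 * A < z.2 * (8 * i.1) := by gcongr
            have : 0 ≤ (w₁ : ℝ) * z.2 := by positivity
            linarith
        calc z.2 * (i.1 * A) = i.1 * (z.2 * A) := by ring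
          _ < i.1 * (i.1 * z.1 + w₁ * z.2) := by gcongr
          _ = _ := by ring
    · simp only [Set.mem_ofPred_eq]
      have e1 : (A : ℝ) * s ≤ 2 * R₁ := by exact_mod_cast hAs2
      push_cast at g2
      calc (i.1 : ℝ) * z.1 + w₁ * z.2 + 0 ≤ A * (2 * (8 * s * a)) + A * s := by
            rw [add_zero]
            have : (w₁ : ℝ) ≤ A := by linarith
            gcongr
        _ ≤ A * (2 * (8 * s * a)) + A * s * a := by
            have : (A : ℝ) * s * 1 ≤ A * s * a := by gcongr
            linarith
        _ = 17 * a * (A * s) := by ring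
        _ ≤ 17 * a * (2 * R₁) := by gcongr
        _ = _ := by ring
  · rintro i hi j hj hij
    obtain ⟨⟨p0, pA⟩, ⟨q0, qB⟩, hco, hp8⟩ := hcop i hi
    obtain ⟨⟨p0', pA'⟩, ⟨q0', qB'⟩, hco', hp8'⟩ := hcop j hj
    have gap : ∀ i j : ℕ × ℕ, 0 < i.1 → 0 < j.1 → j.1 ≤ A → i.2 * j.1 < j.2 * i.1 →
        (i.2 : ℝ) / i.1 + 1 / (i.1 * A) ≤ (j.2 : ℝ) / j.1 := by
      intro i j hi hj hjA h
      have hi' : (0 : ℝ) < i.1 := by exact_mod_cast hi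
      have hj' : (0 : ℝ) < j.1 := by exact_mod_cast hj
      have hjA' : (j.1 : ℝ) ≤ A := by exact_mod_cast hjA
      have h' : (i.2 : ℝ) * j.1 + 1 ≤ j.2 * i.1 := by exact_mod_cast h
      calc (i.2 : ℝ) / i.1 + 1 / (i.1 * A) ≤ (i.2 : ℝ) / i.1 + 1 / (i.1 * j.1) := by gcongr
        _ = (i.2 * j.1 + 1) / (i.1 * j.1) := by field_simp
        _ ≤ (j.2 * i.1) / (i.1 * j.1) := by gcongr
        _ = _ := by field_simp
    rcases lt_trichotomy (i.2 * j.1) (j.2 * i.1) with h | h | h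
    · exact .inl (gap i j p0 p0' pA' h)
    · exfalso
      have d1 : i.1 ∣ j.1 := hco.dvd_of_dvd_mul_left (h ▸ Dvd.intro_left _ rfl)
      have d2 : j.1 ∣ i.1 := hco'.dvd_of_dvd_mul_left (h ▸ Dvd.intro_left _ rfl)
      have e1 := Nat.dvd_antisymm d1 d2
      rw [e1] at h
      exact hij (Prod.ext e1 (Nat.eq_of_mul_eq_mul_right p0' h))
    · exact .inr (gap j i p0' p0 pA h)

/-! ### Stars of small subtrees -/

lemma StarD.class {v : V} {S : Finset V} {a s R₁ R₂ : ℕ} (hS : S ⊆ T.ch v)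
    (hs : ∀ c ∈ S, T.sz c ≤ s) (ha : ∀ c ∈ S, Nat.log 2 (T.sz c) + 1 ≤ a)
    (hk : a * S.card * s ≤ R₁ * R₂) (hs1 : 1 ≤ s) (hs2 : s ≤ 2 * R₂) (ha1 : 1 ≤ a)
    (haR : a ≤ R₁) (hR : R₁ ≤ R₂) :
    T.StarD v S (Sec 0 ((17 * (R₂ / R₁ + 1) : ℕ) : ℝ) ∩ {z | z.1 ≤ 34 * a * R₁}) := by
  rcases le_total R₁ s with h | h
  · exact StarD.classLarge hS hs ha hk hs2 ha1 haR h
  · exact StarD.classSmall hS hs ha hk hs1 ha1 hR h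

lemma _root_.Rg_mono_height {X N s s' : ℕ} (hs : s ≤ s') : Rg X N s ⊆ Rg X N s' := by
  rintro z ⟨h1, h2, h3, h4, h5, h6⟩
  have : (s : ℝ) ≤ s' := by exact_mod_cast hs
  exact ⟨h1, h2, h3, h4, by linarith, by nlinarith⟩

/-- The subtrees are grouped by the integer part of the logarithm of their size, and the groups are
sheared into consecutive sectors. -/
lemma StarD.star {v : V} {S : Finset V} {a σ R₁ R₂ : ℕ} (hS : S ⊆ T.ch v)
    (hσ : ∑ c ∈ S, T.sz c ≤ σ) (hs : ∀ c ∈ S, T.sz c ≤ R₂)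
    (ha : ∀ c ∈ S, Nat.log 2 (T.sz c) + 1 ≤ a) (hR12 : 2 * a * σ ≤ R₁ * R₂) (ha1 : 1 ≤ a)
    (haR : a ≤ R₁) (hR : R₁ ≤ R₂) :
    T.StarD v S (Rg 1 (34 * a * R₁) (2312 * a ^ 2 * R₂)) := by
  classical
  set K := 17 * (R₂ / R₁ + 1) with hK
  have hKR : K * R₁ ≤ 34 * R₂ := by
    have := Nat.div_mul_le_self R₂ R₁
    rw [hK]; linarith
  have hK1 : 1 ≤ K := Nat.mul_pos (by norm_num) (Nat.succ_pos _)
  let F : ℕ → Finset V := fun j => S.filter (fun c => Nat.log 2 (T.sz c) = j)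
  have hF : (Finset.range a).biUnion F = S := by
    ext c
    simp only [F, Finset.mem_biUnion, Finset.mem_range, Finset.mem_filter]
    refine ⟨fun ⟨j, _, h, _⟩ => h, fun h => ⟨_, ?_, h, rfl⟩⟩
    have := ha c h
    omega
  have key := StarD.sectors (T := T) (v := v) (Finset.range a) F {z | z.1 ≤ 34 * a * R₁}
    (fun j => ((j : ℝ) + 1) * K) (fun j => ((j : ℝ) + 2) * K) ?_ ?_ ?_
  · rw [hF] at key
    refine key.mono ?_
    have hpos : (0 : ℝ) ≤ 34 * a * R₁ := by positivity
    rintro z ⟨hz1, hz2⟩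
    have hz2' : z.1 ≤ 34 * a * R₁ := by
      rcases hz2 with rfl | hz
      · exact hpos
      · exact hz
    rcases hz1 with rfl | ⟨j, hj, hz⟩
    · exact zero_mem_Rg _ _ _
    rcases hz with rfl | ⟨h1, h2, h3⟩
    · exact zero_mem_Rg _ _ _
    have hK1' : (1 : ℝ) ≤ K := by exact_mod_cast hK1
    have hKR' : (K : ℝ) * R₁ ≤ 34 * R₂ := by exact_mod_cast hKR
    have ha' : (1 : ℝ) ≤ a := by exact_mod_cast ha1
    have hR1' : (1 : ℝ) ≤ R₁ := by exact_mod_cast (ha1.trans haR)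
    have hja : (j : ℝ) + 2 ≤ 2 * a := by
      have := Finset.mem_range.1 hj
      have : j + 2 ≤ 2 * a := by omega
      exact_mod_cast this
    have hxy : z.1 ≤ z.2 := by
      have : (1 : ℝ) ≤ ((j : ℝ) + 1) * K := by
        have : (0 : ℝ) ≤ j := by positivity
        nlinarith
      nlinarith
    have hyx : z.2 ≤ 2 * a * K * z.1 := by
      refine h3.le.trans ?_
      gcongr
    have hN1 : (1 : ℝ) ≤ 34 * a * R₁ := by nlinarith
    simp only [Rg, Set.mem_ofPred_eq]
    push_cast
    refine ⟨h1.le, hz2', by nlinarith, by linarith, ?_, ?_⟩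
    · calc z.2 ≤ 2 * a * K * (34 * a * R₁) := hyx.trans (by gcongr)
        _ = 68 * a ^ 2 * (K * R₁) := by ring
        _ ≤ 68 * a ^ 2 * (34 * R₂) := by gcongr
        _ = _ := by ring
    · calc 1 * z.2 = z.2 := one_mul _
        _ ≤ 2 * a * K * z.1 := hyx
        _ = 2 * (a * 1) * (K * 1) * z.1 := by ring
        _ ≤ 2 * (a * a) * (K * R₁) * z.1 := by gcongr
        _ ≤ 2 * (a * a) * (34 * R₂) * z.1 := by gcongr
        _ ≤ 2312 * (a * a) * R₂ * z.1 := by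
            have : 0 ≤ (a : ℝ) * a * R₂ * z.1 := by positivity
            nlinarith
        _ = _ := by ring
  · intro j hj
    rcases (F j).eq_empty_or_nonempty with h0 | ⟨c₀, hc₀⟩
    · rw [h0]; exact StarD.empty _ _
    have hFS : F j ⊆ S := Finset.filter_subset _ _
    have hlog : ∀ c ∈ F j, Nat.log 2 (T.sz c) = j := fun c hc => (Finset.mem_filter.1 hc).2
    have hlo : ∀ c ∈ F j, 2 ^ j ≤ T.sz c := fun c hc => by
      rw [← hlog c hc]; exact Nat.pow_log_le_self 2 (T.sz_pos c).ne'
    have hhi : ∀ c ∈ F j, T.sz c ≤ 2 ^ (j + 1) := fun c hc => by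
      rw [← hlog c hc]; exact (Nat.lt_pow_succ_log_self (by norm_num) _).le
    have hcl := StarD.class (T := T) (v := v) (S := F j) (a := a) (s := 2 ^ (j + 1)) (R₁ := R₁)
      (R₂ := R₂) (hFS.trans hS) hhi (fun c hc => ha c (hFS hc)) (by
        have e1 : (F j).card * 2 ^ j ≤ ∑ c ∈ F j, T.sz c :=
          Finset.card_nsmul_le_sum _ _ _ hlo
        have e2 : ∑ c ∈ F j, T.sz c ≤ ∑ c ∈ S, T.sz c := Finset.sum_le_sum_of_subset hFS
        calc a * (F j).card * 2 ^ (j + 1) = 2 * a * ((F j).card * 2 ^ j) := by ring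
          _ ≤ 2 * a * σ := by gcongr; omega
          _ ≤ _ := hR12) Nat.one_le_two_pow (by
        have := hlo c₀ hc₀
        have := hs c₀ (hFS hc₀)
        rw [pow_succ]; omega) ha1 haR hR
    refine (hcl.lin 1 0 ((j + 1) * K : ℕ) 1 (by norm_num)).mono ?_
    rintro _ ⟨z, ⟨hz, hz'⟩, rfl⟩
    refine ⟨?_, by simpa [_root_.aff] using hz'⟩
    rcases hz with rfl | ⟨h1, h2, h3⟩
    · left
      ext <;> simp [_root_.aff]
    · right
      simp only [_root_.aff]
      push_cast at h3 ⊢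
      exact ⟨by linarith, by linarith, by rw [hK]; push_cast; linarith⟩
  · intro i _ j _ hij
    rw [Finset.disjoint_left]
    intro c hc hc'
    exact hij ((Finset.mem_filter.1 hc).2.symm.trans (Finset.mem_filter.1 hc').2)
  · intro i _ j _ hij
    have hK0 : (0 : ℝ) ≤ K := by positivity
    rcases lt_or_gt_of_ne hij with h | h
    · left
      have : (i : ℝ) + 1 ≤ j := by exact_mod_cast h
      exact mul_le_mul_of_nonneg_right (by linarith) hK0
    · right
      have : (j : ℝ) + 1 ≤ i := by exact_mod_cast h
      exact mul_le_mul_of_nonneg_right (by linarith) hK0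

/-- A star of subtrees of size at most `H` and total size `σ` fits, up to factors polynomial in
`log H`, into height `H` and width `1 + σ / H`. -/
lemma StarD.main {v : V} {S : Finset V} {H a : ℕ} (hS : S ⊆ T.ch v) (hH : 1 ≤ H)
    (ha : a = Nat.log 2 H + 1) (hs : ∀ c ∈ S, T.sz c ≤ H) :
    ∃ N, T.StarD v S (Rg 1 N (2312 * a ^ 2 * H)) ∧
      N * H ≤ 4624 * a ^ 3 * (H + ∑ c ∈ S, T.sz c) := by
  set σ := ∑ c ∈ S, T.sz c with hσ
  set R := 2 * a * σ / H + a + 1 with hR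
  have ha1 : 1 ≤ a := by omega
  have haH : a ≤ H := by
    have := Nat.log_lt_self 2 (show H ≠ 0 by omega)
    omega
  have h1 : 2 * a * σ ≤ R * H := by
    have := Nat.lt_div_mul_add (a := 2 * a * σ) (b := H) (by omega)
    have h0 : a * H ≥ 0 := Nat.zero_le _
    rw [hR]; nlinarith
  have h2 : R * H ≤ 2 * a * (H + σ) := by
    have := Nat.div_mul_le_self (2 * a * σ) H
    rw [hR]; nlinarith
  have hsa : ∀ c ∈ S, Nat.log 2 (T.sz c) + 1 ≤ a := fun c hc => by
    have := Nat.log_mono_right (b := 2) (hs c hc)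
    omega
  rcases le_total R H with h | h
  · refine ⟨_, StarD.star hS le_rfl hs hsa h1 ha1
      (by rw [hR]; linarith [Nat.zero_le (2 * a * σ / H)]) h, ?_⟩
    calc 34 * a * R * H = 34 * a * (R * H) := by ring
      _ ≤ 34 * a * (2 * a * (H + σ)) := by gcongr
      _ = 68 * (a ^ 2 * 1) * (H + σ) := by ring
      _ ≤ 4624 * (a ^ 2 * a) * (H + σ) := by gcongr; norm_num
      _ = _ := by ring
  · have := StarD.star hS (σ := σ) (R₁ := H) (R₂ := R) le_rfl (fun c hc => (hs c hc).trans h) hsa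
      (by rwa [mul_comm H]) ha1 haH h
    refine ⟨2312 * a ^ 2 * R, (this.swap (R' := Rg 1 (2312 * a ^ 2 * R) (34 * a * H)) ?_).mono
      (Rg_mono_height ?_), ?_⟩
    · rintro z ⟨g1, g2, g3, g4, g5, g6⟩
      rw [Nat.cast_one, one_mul] at g6
      exact ⟨g4, g5, g6, g1, g2, by simpa using g3⟩
    · have : a ≤ a ^ 2 := Nat.le_self_pow (by norm_num) a
      gcongr
      norm_num
    · calc 2312 * a ^ 2 * R * H = 2312 * a ^ 2 * (R * H) := by ring
        _ ≤ 2312 * a ^ 2 * (2 * a * (H + σ)) := by gcongr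
        _ = _ := by ring

/-! ### Chains of subtrees with a single large child -/

/-- The region available to a subtree at the upper end of a chain whose lower part occupies the
columns `0, …, a` up to height `y`; the root, in column `0`, has height `r`. -/
def _root_.Cr (a w h y r : ℕ) : Set (ℝ × ℝ) :=
  {z | 0 ≤ z.1 ∧ z.1 ≤ a + 1 + w ∧ 0 ≤ z.2 ∧ z.2 ≤ h ∧ ((a : ℝ) + 1 ≤ z.1 ∨ y ≤ z.2) ∧
    (z.1 = 0 → r ≤ z.2)}

lemma DrawD.root_mem {v : V} {p : ℝ × ℝ} {R : Set (ℝ × ℝ)} (h : T.DrawD v p R) : p ∈ R := by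
  obtain ⟨f, rfl, -, -, h⟩ := h
  exact h (Dr_root f v)

/-- A whole row of further subtrees can be appended to a star. -/
lemma StarD.addRow [DecidableEq V] {v : V} {S₀ S : Finset V} {N s : ℕ}
    (h₀ : T.StarD v S₀ (Rg 1 N s)) (w h : V → ℕ) (hS : S ⊆ T.ch v) (hdis : Disjoint S₀ S)
    (hd : ∀ c ∈ S, T.DrawD c 0 (Rect (w c) (h c))) (hs : ∀ c ∈ S, h c + 1 ≤ s) :
    T.StarD v (S₀ ∪ S) (Rg 1 (N + ∑ c ∈ S, (w c + 1)) s) := by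
  induction S using Finset.induction_on with
  | empty => simpa using h₀
  | insert c S hc ih =>
    rw [Finset.disjoint_insert_right] at hdis
    have := (ih (fun d hd => hS (Finset.mem_insert_of_mem hd)) hdis.2
      (fun d hd' => hd d (Finset.mem_insert_of_mem hd'))
      (fun d hd' => hs d (Finset.mem_insert_of_mem hd'))).addItem
      (hS (Finset.mem_insert_self _ _)) (by simp [hc, hdis.1])
      (hd c (Finset.mem_insert_self _ _)) (hs c (Finset.mem_insert_self _ _)) (by omega)
    rw [Finset.union_insert]
    refine this.mono (Rg_mono ?_)
    rw [Finset.sum_insert hc]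
    omega

/-- The chain continues upwards: the large child is drawn above its parent, in the same column. -/
lemma DrawD.chain [DecidableEq V] {v e : V} {S : Finset V} {σ a w h y r : ℕ}
    (hS : T.StarD v S {z | (z.2, z.1) ∈ Rg 1 σ a}) (hch : T.ch v = insert e S) (heS : e ∉ S)
    (hd : T.DrawD e ((0 : ℝ), (r : ℝ)) (Cr a w h (y + σ + 1) r)) (hr : y + σ + 1 ≤ r)
    (hh : y + σ ≤ h) : T.DrawD v ((0 : ℝ), (y : ℝ)) (Cr a w h y y) := by
  have hrh : (r : ℝ) ≤ h := hd.root_mem.2.2.2.1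
  have h1 := hd.translate 0 (-y)
  push_cast at h1
  simp only [add_zero, sub_zero, sub_neg_eq_add] at h1
  have hr' : (y : ℝ) + σ + 1 ≤ r := by exact_mod_cast hr
  have hh' : (y : ℝ) + σ ≤ h := by exact_mod_cast hh
  have h0σ : (0 : ℝ) ≤ σ := by positivity
  have h0y : (0 : ℝ) ≤ y := by positivity
  have h0a : (0 : ℝ) ≤ a := by positivity
  have h0w : (0 : ℝ) ≤ w := by positivity
  have h2 := StarD.single (v := v) (by rw [hch]; exact Finset.mem_insert_self _ _) h1 ?_ ?_
  rotate_left
  · rintro ⟨-, -, -, -, -, h6⟩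
    have := h6 rfl
    simp only [Prod.snd_zero] at this
    linarith
  · rintro z hz ⟨-, -, -, -, -, h6⟩
    obtain ⟨t, ht0, ht1, e1, e2⟩ := seg_zero hz
    simp only [mul_zero] at h6 e1 e2
    have := h6 e1
    obtain rfl : t = 1 := by
      by_contra hne
      have : t < 1 := lt_of_le_of_ne ht1 hne
      nlinarith
    ext <;> simp [e1, e2]
  have h3 := hS.merge h2 (by simpa using heS) ?_
  · rw [Finset.union_comm, ← Finset.insert_eq, ← hch] at h3
    have h4 := (h3.close (.inl (by simp [Rg]))).translate 0 y
    simp only [Prod.fst_zero, Prod.snd_zero, Int.cast_zero, zero_add, sub_zero,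
      Int.cast_natCast] at h4
    refine h4.mono ?_
    rintro z (⟨g1, g2, g3, g4, g5, g6⟩ | hz | hz)
    · simp only [Nat.cast_one, one_mul] at g1 g2 g3 g4 g5 g6
      exact ⟨g4, by linarith, by linarith, by linarith, .inr (by linarith), fun _ => by linarith⟩
    · obtain ⟨t, ht0, ht1, e1, e2⟩ := seg_zero hz
      simp only [mul_zero] at e1 e2
      have e3 : 0 ≤ t * ((r : ℝ) + -y) := mul_nonneg ht0 (by linarith)
      have e4 : t * ((r : ℝ) + -y) ≤ 1 * ((r : ℝ) + -y) := by gcongr; linarith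
      exact ⟨e1.ge, by linarith, by linarith, by linarith, .inr (by linarith),
        fun _ => by linarith⟩
    · obtain ⟨g1, g2, g3, g4, g5, g6⟩ := hz
      simp only [sub_add_cancel] at g1 g2 g3 g4 g5 g6
      push_cast at g5
      exact ⟨g1, g2, g3, g4, g5.imp_right (fun h => by linarith), fun h => by linarith [g6 h]⟩
  · rintro z ⟨g1, g2, g3, g4, g5, g6⟩ (hz | hz)
    · obtain ⟨t, ht0, ht1, e1, e2⟩ := seg_zero hz
      simp only [mul_zero] at e1 e2
      simp only [e1, mul_zero] at g1 g3
      ext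
      · exact e1
      · simp only [Prod.snd_zero]
        simp only [Nat.cast_one, e1, mul_zero] at g6
        linarith
    · obtain ⟨k1, k2, k3, k4, k5, k6⟩ := hz
      simp only at k5 g5 g2
      push_cast at k5
      rcases k5 with k5 | k5 <;> linarith

/-- The chain ends: the large child is drawn to the right of the column strip `[0, a]`. -/
lemma DrawD.chainEnd [DecidableEq V] {v e : V} {S : Finset V} {σ a w h : ℕ}
    (hS : T.StarD v S {z | (z.2, z.1) ∈ Rg 1 σ a}) (hch : T.ch v = insert e S) (heS : e ∉ S)
    (hd : T.DrawD e 0 (Rect w h)) (hh : σ ≤ h) :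
    T.DrawD v 0 {z | 0 ≤ z.1 ∧ z.1 ≤ a + 1 + w ∧ 0 ≤ z.2 ∧ z.2 ≤ h ∧
      ((a : ℝ) + 1 ≤ z.1 ∨ z.2 ≤ σ) ∧ (z.1 = 0 → z.2 = 0)} := by
  have h1 := hd.translate ((a : ℤ) + 1) 0
  push_cast at h1
  simp only [Prod.fst_zero, Prod.snd_zero, zero_add, sub_zero] at h1
  have hh' : (σ : ℝ) ≤ h := by exact_mod_cast hh
  have h0σ : (0 : ℝ) ≤ σ := by positivity
  have h0a : (0 : ℝ) ≤ a := by positivity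
  have h0w : (0 : ℝ) ≤ w := by positivity
  have h0h : (0 : ℝ) ≤ h := by positivity
  have h2 := StarD.single (v := v) (by rw [hch]; exact Finset.mem_insert_self _ _) h1 ?_ ?_
  rotate_left
  · rintro ⟨h3, -⟩
    simp only [Prod.fst_zero] at h3
    linarith
  · rintro z hz ⟨h3, -⟩
    obtain ⟨t, ht0, ht1, e1, e2⟩ := seg_zero hz
    simp only at h3 e1 e2
    obtain rfl : t = 1 := by
      by_contra hne
      have : t < 1 := lt_of_le_of_ne ht1 hne
      nlinarith
    ext <;> simp [e1, e2]
  have h3 := hS.merge h2 (by simpa using heS) ?_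
  · rw [Finset.union_comm, ← Finset.insert_eq, ← hch] at h3
    refine (h3.close (.inl (by simp [Rg]))).mono ?_
    rintro z (⟨g1, g2, g3, g4, g5, g6⟩ | hz | hz)
    · simp only [Nat.cast_one, one_mul] at g1 g2 g3 g4 g5 g6
      refine ⟨g4, by linarith, by linarith, by linarith, .inr g2, fun h => ?_⟩
      rw [h] at g3
      linarith
    · obtain ⟨t, ht0, ht1, e1, e2⟩ := seg_zero hz
      simp only [mul_zero] at e1 e2
      refine ⟨?_, ?_, e2.ge, by linarith, .inr (by linarith), fun _ => e2⟩
      · rw [e1]; positivity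
      · rw [e1]; nlinarith
    · obtain ⟨g1, g2, g3, g4⟩ := hz
      simp only at g1 g2 g3 g4
      exact ⟨by linarith, by linarith, g3, g4, .inl (by linarith), fun h => by linarith⟩
  · rintro z ⟨g1, g2, g3, g4, g5, g6⟩ (hz | hz)
    · obtain ⟨t, ht0, ht1, e1, e2⟩ := seg_zero hz
      simp only [mul_zero] at e1 e2
      simp only [e2, mul_zero, Nat.cast_one, one_mul] at g4 g6
      ext
      · simp only [Prod.fst_zero]; linarith
      · exact e2
    · obtain ⟨k1, -⟩ := hz
      simp only at k1 g5
      linarith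

/-! ### The area bound for rooted trees -/

variable (T) in
/-- The children of `v` with subtrees of size at most `H`. -/
noncomputable def small (H : ℕ) (v : V) : Finset V := (T.ch v).filter (fun c => T.sz c ≤ H)

variable (T) in
/-- The children of `v` with subtrees of size larger than `H`. -/
noncomputable def big (H : ℕ) (v : V) : Finset V := (T.ch v).filter (fun c => ¬ T.sz c ≤ H)

variable (T) in
/-- The total size of the small subtrees at `v`. -/
noncomputable def sig (H : ℕ) (v : V) : ℕ := ∑ c ∈ T.small H v, T.sz c

variable (T) in
lemma sz_split (H : ℕ) (v : V) : T.sz v = 1 + T.sig H v + ∑ c ∈ T.big H v, T.sz c := by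
  rw [T.sz_eq v, add_assoc, sig, small, big, Finset.sum_filter_add_sum_filter_not]

/-- The factor by which the widths in the main induction exceed `n / H`, up to a constant. -/
def _root_.Kf (a : ℕ) : ℕ := 4624 * a ^ 3 + a + 2

variable (T) in
/-- The vertices at which an additional width of order `K` can be charged to the subtree: those
having not exactly one large child, or small subtrees of total size at least `H`. -/
def paid (H : ℕ) (v : V) : Prop := (T.big H v).card ≠ 1 ∨ H ≤ T.sig H v

/-- At a vertex that is paid for, the star of the small subtrees is followed by a row of the large
ones; the largest of them comes last and uses the full height, so that the others, having at most
half of the size, may lose one unit of height. -/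
lemma paid_step {H a h : ℕ} {v : V} (hH : 1 ≤ H) (ha : a = Nat.log 2 H + 1) (hp : T.paid H v)
    (hv : H < T.sz v) (hh : 2312 * a ^ 2 * H + Nat.log 2 (T.sz v) ≤ h)
    (ih : ∀ e ∈ T.big H v, ∀ h', 2312 * a ^ 2 * H + Nat.log 2 (T.sz e) ≤ h' →
      ∃ w, T.DrawD e 0 (Rect w h') ∧ w * H + 2 * Kf a * H ≤ 5 * Kf a * T.sz e) :
    ∃ w, T.DrawD v 0 (Rect w h) ∧ w * H + 3 * Kf a * H ≤ 5 * Kf a * T.sz v := by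
  classical
  have hsplit := T.sz_split H v
  have hsv : T.small H v ⊆ T.ch v := Finset.filter_subset _ _
  have hbv : T.big H v ⊆ T.ch v := Finset.filter_subset _ _
  have hch : T.ch v = T.small H v ∪ T.big H v := (Finset.filter_union_filter_not_eq _ _).symm
  have hdis : Disjoint (T.small H v) (T.big H v) := Finset.disjoint_filter_filter_not _ _ _
  obtain ⟨N, hN, hNH⟩ := StarD.main (v := v) (S := T.small H v) hsv hH ha
    (fun c hc => (Finset.mem_filter.1 hc).2)
  replace hN := hN.mono (Rg_mono_height (s' := h) (by omega))
  change N * H ≤ 4624 * a ^ 3 * (H + T.sig H v) at hNH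
  unfold paid at hp
  set σ := T.sig H v
  set K1 := 4624 * a ^ 3
  have hKe : Kf a = K1 + a + 2 := rfl
  set K := Kf a
  have hK1σ : K1 * σ ≤ K * σ := Nat.mul_le_mul_right _ (by omega)
  have hK1H : K1 * H + 2 * H ≤ K * H := by
    rw [← add_mul]; exact Nat.mul_le_mul_right _ (by omega)
  rcases (T.big H v).eq_empty_or_nonempty with h0 | hne
  · rw [h0, Finset.union_empty] at hch
    rw [h0, Finset.sum_empty, add_zero] at hsplit
    refine ⟨N, DrawD.ofRg (hch ▸ hN), ?_⟩
    have e1 : K * H ≤ K * (1 + σ) := Nat.mul_le_mul_left _ (by omega)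
    rw [hsplit]
    nlinarith
  obtain ⟨e, he, hmax⟩ := Finset.exists_max_image (T.big H v) T.sz hne
  obtain ⟨we, hwe, hwe'⟩ := ih e he h (by
    have := Nat.log_mono_right (b := 2) (T.sz_lt (hbv he)).le
    omega)
  have hw : ∀ c, ∃ w, c ∈ (T.big H v).erase e →
      T.DrawD c 0 (Rect w (h - 1)) ∧ w * H + 2 * K * H ≤ 5 * K * T.sz c ∧ 1 ≤ h := by
    intro c
    by_cases hc : c ∈ (T.big H v).erase e
    · have hcb := Finset.mem_of_mem_erase hc
      have hlog : Nat.log 2 (T.sz c) + 1 ≤ Nat.log 2 (T.sz v) := by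
        rw [← Nat.log_mul_base (by norm_num) (T.sz_pos c).ne']
        refine Nat.log_mono_right ?_
        rw [← Finset.add_sum_erase _ _ he] at hsplit
        have h1 := Finset.single_le_sum (f := T.sz) (fun _ _ => Nat.zero_le _) hc
        have h2 := hmax c hcb
        omega
      obtain ⟨w, h1, h2⟩ := ih c hcb (h - 1) (by omega)
      exact ⟨w, fun _ => ⟨h1, h2, by omega⟩⟩
    · exact ⟨0, fun h => absurd h hc⟩
  choose w hw using hw
  have hrow := hN.addRow (S := (T.big H v).erase e) w (fun _ => h - 1)
    ((Finset.erase_subset _ _).trans hbv)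
    (Finset.disjoint_of_subset_right (Finset.erase_subset _ _) hdis) (fun c hc => (hw c hc).1)
    (fun c hc => by have := (hw c hc).2.2; omega)
  have hes : e ∉ T.small H v := Finset.disjoint_right.1 hdis he
  have hlast := hrow.addLast (e := e) (by
    rw [hch, ← Finset.union_insert, Finset.insert_erase he]) (by simp [hes]) hwe
  refine ⟨_, hlast, ?_⟩
  have hsum : (∑ c ∈ (T.big H v).erase e, w c) * H + ((T.big H v).erase e).card * (2 * K * H) ≤
      5 * K * ∑ c ∈ (T.big H v).erase e, T.sz c := by
    rw [Finset.sum_mul, Finset.mul_sum, ← smul_eq_mul, ← Finset.sum_const,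
      ← Finset.sum_add_distrib]
    exact Finset.sum_le_sum fun c hc => (hw c hc).2.1
  rw [← Finset.add_sum_erase _ _ he] at hsplit
  rw [Finset.sum_add_distrib, Finset.sum_const, smul_eq_mul, mul_one, hsplit]
  have hcard := Finset.card_erase_add_one he
  set b := ((T.big H v).erase e).card
  set W := ∑ c ∈ (T.big H v).erase e, w c
  set Z := ∑ c ∈ (T.big H v).erase e, T.sz c
  rcases Nat.eq_zero_or_pos b with hb | hb
  · have hσ : H ≤ σ := by
      rcases hp with hp | hp
      · omega
      · exact hp
    have : K * H ≤ K * σ := Nat.mul_le_mul_left _ hσ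
    have := Nat.zero_le (K * σ)
    rw [hb] at hsum ⊢
    linarith
  · obtain ⟨b', hb'⟩ : ∃ b', b = b' + 1 := ⟨b - 1, by omega⟩
    rw [hb'] at hsum ⊢
    have : b' * H ≤ b' * (K * H) :=
      Nat.mul_le_mul_left _ (Nat.le_mul_of_pos_left _ (by omega))
    have := Nat.zero_le (K * σ)
    have := Nat.zero_le (b' * (K * H))
    linarith

variable (T) in
/-- The statement proved by induction on the size `n` of the subtree at `v`. Both parts bound the
width of a drawing of given height: with the root in the lower left corner, and, at a vertex that is
not paid for, with the root on the left side and a free corner of height `y` in the columns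
`0, …, a`. In the second part, the width of these columns is not charged to the subtree. -/
def Main (H a : ℕ) (v : V) : Prop :=
  ∀ h, 2312 * a ^ 2 * H + Nat.log 2 (T.sz v) ≤ h →
    (∃ w, T.DrawD v 0 (Rect w h) ∧ w * H + 2 * Kf a * H ≤ 5 * Kf a * T.sz v ∧
      (T.paid H v → w * H + 3 * Kf a * H ≤ 5 * Kf a * T.sz v)) ∧
    (¬ T.paid H v → ∀ y < H, ∃ w r : ℕ, y ≤ r ∧ T.DrawD v ((0 : ℝ), (r : ℝ)) (Cr a w h y r) ∧
      w * H + 3 * Kf a * H ≤ 5 * Kf a * (T.sz v + y))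

/-- At a vertex that is not paid for, the small subtrees, of total size less than `H`, go into the
column strip `[0, a]`. The large child continues the chain in column `0` as long as it is not paid
for either and the strip is filled to a height below `H`. Otherwise the chain ends, and the width
`a + 1` of the strip is charged to the large child or to the `H` vertices in the strip. -/
lemma unpaid_step {H a : ℕ} {v : V} (ha : a = Nat.log 2 H + 1) (hp : ¬ T.paid H v)
    (ih : ∀ e ∈ T.big H v, T.Main H a e) : T.Main H a v := by
  classical
  intro h hh
  have hsplit := T.sz_split H v
  have hsv : T.small H v ⊆ T.ch v := Finset.filter_subset _ _
  have hch : T.ch v = T.small H v ∪ T.big H v := (Finset.filter_union_filter_not_eq _ _).symm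
  have hdis : Disjoint (T.small H v) (T.big H v) := Finset.disjoint_filter_filter_not _ _ _
  have hp' := hp
  simp only [paid, not_or, not_not, not_le] at hp'
  obtain ⟨hcard, hσH⟩ := hp'
  obtain ⟨e, he⟩ := Finset.card_eq_one.1 hcard
  rw [he, Finset.sum_singleton] at hsplit
  rw [he, Finset.union_comm, ← Finset.insert_eq] at hch
  have hes : e ∉ T.small H v := by
    rw [he] at hdis; simpa using hdis
  have hstar : T.StarD v (T.small H v) {z | (z.2, z.1) ∈ Rg 1 (T.sig H v) a} := by
    have := StarD.row (X := 1) (s := a) le_rfl (fun c => T.sz c - 1)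
      (fun c => Nat.log 2 (T.sz c)) hsv (fun c _ => T.log_height c) (fun c hc => by
        have := Nat.log_mono_right (b := 2) (Finset.mem_filter.1 hc).2
        omega)
    refine this.swap fun z hz => ?_
    refine Rg_mono (le_of_eq ?_) hz
    rw [Nat.sub_self, zero_add, sig]
    exact Finset.sum_congr rfl fun c _ => by have := T.sz_pos c; omega
  set σ := T.sig H v
  have hKa : a + 1 ≤ Kf a := by unfold Kf; omega
  set K := Kf a
  have hKaH : (a + 1) * H ≤ K * H := Nat.mul_le_mul_right _ hKa
  have hHh : 2 * H ≤ h := by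
    have : 1 ≤ a ^ 2 := Nat.one_le_pow _ _ (by omega)
    nlinarith
  have heh : 2312 * a ^ 2 * H + Nat.log 2 (T.sz e) ≤ h := by
    have := Nat.log_mono_right (b := 2) (show T.sz e ≤ T.sz v by omega)
    omega
  obtain ⟨⟨we, hwe, hwe2, hwe3⟩, hC⟩ := ih e (by rw [he]; exact Finset.mem_singleton_self _) h heh
  have hend := DrawD.chainEnd hstar hch hes hwe (by omega)
  refine ⟨?_, fun _ y hy => ?_⟩
  · by_cases hpe : ¬ T.paid H e ∧ 0 + σ + 1 < H
    · obtain ⟨w, r, hr, hd, hw⟩ := hC hpe.1 (0 + σ + 1) hpe.2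
      have hd' := DrawD.chain hstar hch hes hd hr (by omega)
      refine ⟨a + 1 + w, ?_, ?_, fun h => absurd h hp⟩
      · have h00 : ((0 : ℝ), ((0 : ℕ) : ℝ)) = 0 := by ext <;> simp
        rw [h00] at hd'
        refine hd'.mono ?_
        rintro z ⟨h1, h2, h3, h4, -⟩
        exact ⟨h1, by push_cast; exact h2, h3, h4⟩
      · rw [hsplit]
        linarith
    · refine ⟨a + 1 + we, hend.mono ?_, ?_, fun h => absurd h hp⟩
      · rintro z ⟨h1, h2, h3, h4, -⟩
        exact ⟨h1, by push_cast; exact h2, h3, h4⟩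
      · rw [hsplit]
        by_cases hpe' : T.paid H e
        · have := hwe3 hpe'
          have := Nat.zero_le (K * σ)
          linarith
        · have hσ : H ≤ σ + 1 := by
            by_contra hlt
            exact hpe ⟨hpe', by omega⟩
          have : K * H ≤ K * (σ + 1) := Nat.mul_le_mul_left _ hσ
          have := Nat.zero_le (K * σ)
          linarith
  · by_cases hpe : ¬ T.paid H e ∧ y + σ + 1 < H
    · obtain ⟨w, r, hr, hd, hw⟩ := hC hpe.1 (y + σ + 1) hpe.2
      refine ⟨w, y, le_rfl, DrawD.chain hstar hch hes hd hr (by omega), ?_⟩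
      rw [hsplit]
      linarith
    -- The root moves to the upper end of the left side when the drawing is reflected.
    · have href := hend.aff 1 0 0 (-1) 0 h (by norm_num)
      have h00 : aff 1 0 0 (-1) 0 h 0 = ((0 : ℝ), ((h : ℕ) : ℝ)) := by
        ext <;> simp [_root_.aff]
      rw [h00] at href
      refine ⟨we, h, by omega, href.mono ?_, ?_⟩
      · rintro _ ⟨z, ⟨h1, h2, h3, h4, h5, h6⟩, rfl⟩
        have hy' : (y : ℝ) + σ ≤ h := by
          have : y + σ ≤ h := by omega
          exact_mod_cast this
        simp only [_root_.aff, Cr, Set.mem_ofPred_eq]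
        push_cast
        refine ⟨by linarith, by linarith, by linarith, by linarith, ?_, fun h => ?_⟩
        · exact h5.imp (fun h => by linarith) (fun h => by linarith)
        · linarith [h6 (by linarith)]
      · rw [hsplit]
        have h5 := Nat.zero_le (K * σ)
        have h6 := Nat.zero_le (K * y)
        by_cases hpe' : T.paid H e
        · have := hwe3 hpe'
          linarith
        · have hσ : H ≤ y + σ + 1 := by
            by_contra hlt
            exact hpe ⟨hpe', by omega⟩
          have : K * H ≤ K * (y + σ + 1) := Nat.mul_le_mul_left _ hσ
          linarith

variable (T) in
lemma main_all {H a : ℕ} (hH : 1 ≤ H) (ha : a = Nat.log 2 H + 1) (v : V) (hv : H < T.sz v) :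
    T.Main H a v := by
  induction hn : T.sz v using Nat.strong_induction_on generalizing v with
  | _ n ih =>
  subst hn
  have ih' : ∀ e ∈ T.big H v, T.Main H a e := fun e he => by
    obtain ⟨h1, h2⟩ := Finset.mem_filter.1 he
    exact ih _ (T.sz_lt h1) e (by omega) rfl
  by_cases hp : T.paid H v
  · intro h hh
    refine ⟨?_, fun h => absurd hp h⟩
    obtain ⟨w, h1, h2⟩ := paid_step hH ha hp hv hh (fun e he h' hh' => by
      obtain ⟨w, h1, h2, -⟩ := (ih' e he h' hh').1
      exact ⟨w, h1, h2⟩)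
    exact ⟨w, h1, by linarith [Nat.zero_le (Kf a * H)], fun _ => h2⟩
  · exact unpaid_step ha hp ih'

/-! ### From local planarity to straight-line drawings -/

lemma Dr_vert {f : V → ℝ × ℝ} {v u : V} (hu : u ∈ T.D v) : f u ∈ T.Dr f v := ⟨u, hu, .inl rfl⟩

lemma Dr_edge {f : V → ℝ × ℝ} {v u c : V} (hu : u ∈ T.D v) (hc : c ∈ T.ch u) {z : ℝ × ℝ}
    (hz : z ∈ segment ℝ (f u) (f c)) : z ∈ T.Dr f v := ⟨u, hu, .inr ⟨c, hc, hz⟩⟩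

lemma Planar.child {f : V → ℝ × ℝ} {v d : V} (h : T.Planar f v) (hd : d ∈ T.ch v) :
    T.Planar f d := fun u hu => h u (T.D_sub hd hu)

/-- Subtrees at distinct children are drawn disjointly. -/
lemma Planar.disj {f : V → ℝ × ℝ} {v d d' : V} (h : T.Planar f v) (hd : d ∈ T.ch v)
    (hd' : d' ∈ T.ch v) {z : ℝ × ℝ} (hz : z ∈ T.Dr f d) (hz' : z ∈ T.Dr f d') : d = d' := by
  have hF := h v (T.self_mem_D v)
  by_contra hne
  have := hF.2 d hd d' hd' hne z (.inr hz) (.inr hz')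
  exact (hF.1 d hd).1 (this ▸ hz)

lemma Planar.root_notMem {f : V → ℝ × ℝ} {v d : V} (h : T.Planar f v) (hd : d ∈ T.ch v) :
    f v ∉ T.Dr f d := ((h v (T.self_mem_D v)).1 d hd).1

/-- An edge at the root meets the drawing of a subtree at most in its far endpoint. -/
lemma Planar.root_edge {f : V → ℝ × ℝ} {v c d : V} (h : T.Planar f v) (hc : c ∈ T.ch v)
    (hd : d ∈ T.ch v) {z : ℝ × ℝ} (hz : z ∈ segment ℝ (f v) (f c)) (hz' : z ∈ T.Dr f d) :
    z = f c ∧ d = c := by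
  have hF := h v (T.self_mem_D v)
  by_cases hdc : d = c
  · subst hdc
    exact ⟨(hF.1 d hd).2 z hz hz', rfl⟩
  · have := hF.2 c hc d hd (Ne.symm hdc) z (.inl hz) (.inr hz')
    exact absurd (this ▸ hz') (hF.1 d hd).1

lemma Planar.inj {f : V → ℝ × ℝ} : ∀ {v : V}, T.Planar f v → ∀ u ∈ T.D v, ∀ w ∈ T.D v,
    f u = f w → u = w := by
  intro v
  induction hn : T.sz v using Nat.strong_induction_on generalizing v with
  | _ n ih =>
    intro h u hu w hw huw
    rcases T.D_cases hu with rfl | ⟨d, hd, hud⟩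
    · rcases T.D_cases hw with rfl | ⟨d, hd, hwd⟩
      · rfl
      · exact absurd (huw ▸ Dr_vert hwd) (h.root_notMem hd)
    · rcases T.D_cases hw with rfl | ⟨d', hd', hwd⟩
      · exact absurd (huw ▸ Dr_vert hud) (h.root_notMem hd)
      · obtain rfl := h.disj hd hd' (Dr_vert hud) (huw ▸ Dr_vert hwd)
        exact ih _ (hn ▸ T.sz_lt hd) rfl (h.child hd) u hud w hwd huw

/-- No vertex lies on an edge of which it is not an endpoint. -/
lemma Planar.vert_edge {f : V → ℝ × ℝ} : ∀ {v : V}, T.Planar f v → ∀ w ∈ T.D v, ∀ u ∈ T.D v,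
    ∀ c ∈ T.ch u, f w ∈ segment ℝ (f u) (f c) → w = u ∨ w = c := by
  intro v
  induction hn : T.sz v using Nat.strong_induction_on generalizing v with
  | _ n ih =>
    intro h w hw u hu c hc hz
    rcases T.D_cases hu with rfl | ⟨d, hd, hud⟩
    · rcases T.D_cases hw with rfl | ⟨d, hd, hwd⟩
      · exact .inl rfl
      · exact .inr (h.inj w hw c (T.D_sub hc (T.self_mem_D c))
          (h.root_edge hc hd hz (Dr_vert hwd)).1)
    · rcases T.D_cases hw with rfl | ⟨d', hd', hwd⟩
      · exact absurd (Dr_edge hud hc hz) (h.root_notMem hd)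
      · obtain rfl := h.disj hd hd' (Dr_edge hud hc hz) (Dr_vert hwd)
        exact ih _ (hn ▸ T.sz_lt hd) rfl (h.child hd) w hwd u hud c hc hz

/-- An edge is identified by its lower endpoint, so `c ≠ c'` says that the edges are distinct. -/
lemma Planar.edge_edge {f : V → ℝ × ℝ} : ∀ {v : V}, T.Planar f v → ∀ u ∈ T.D v, ∀ c ∈ T.ch u,
    ∀ u' ∈ T.D v, ∀ c' ∈ T.ch u', c ≠ c' → ∀ z ∈ segment ℝ (f u) (f c),
    z ∈ segment ℝ (f u') (f c') → ∃ w, (w = u ∨ w = c) ∧ (w = u' ∨ w = c') ∧ z = f w := by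
  intro v
  induction hn : T.sz v using Nat.strong_induction_on generalizing v with
  | _ n ih =>
    intro h u hu c hc u' hu' c' hc' hne z hz hz'
    rcases T.D_cases hu with rfl | ⟨d, hd, hud⟩
    · rcases T.D_cases hu' with rfl | ⟨d, hd, hud⟩
      · exact ⟨u', .inl rfl, .inl rfl, (h u' (T.self_mem_D u')).2 c hc c' hc' hne z
          (.inl hz) (.inl hz')⟩
      · have hzc := (h.root_edge hc hd hz (Dr_edge hud hc' hz')).1
        subst hzc
        exact ⟨c, .inr rfl, h.vert_edge c (T.D_sub hc (T.self_mem_D c)) u' hu' c' hc' hz', rfl⟩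
    · rcases T.D_cases hu' with rfl | ⟨d', hd', hud'⟩
      · have hzc := (h.root_edge hc' hd hz' (Dr_edge hud hc hz)).1
        subst hzc
        exact ⟨c', h.vert_edge c' (T.D_sub hc' (T.self_mem_D c')) u hu c hc hz, .inr rfl, rfl⟩
      · obtain rfl := h.disj hd hd' (Dr_edge hud hc hz) (Dr_edge hud' hc' hz')
        exact ih _ (hn ▸ T.sz_lt hd) rfl (h.child hd) u hud c hc u' hud' c' hc' hne z hz hz'

/-! ### Rooting a tree -/

open Classical in
/-- The tree `G` rooted at `r`: the depth is the distance to `r`, the parent of a vertex is a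
neighbour closer to `r`. -/
noncomputable def ofTree {V : Type} (G : SimpleGraph V) (r : V) : RT V where
  par u := if h : ∃ w, IsParent G r w u then h.choose else u
  dep := G.dist r

lemma parent_unique {V : Type} {G : SimpleGraph V} (hG : G.IsTree) {r w w' u : V}
    (h : IsParent G r w u) (h' : IsParent G r w' u) : w = w' := by
  have key : ∀ {x}, IsParent G r x u → ∃ p : G.Walk r u, p.IsPath ∧ p.penultimate = x := by
    intro x hx
    obtain ⟨p, hp⟩ := hG.connected.exists_walk_length_eq_dist r x
    refine ⟨p.concat hx.1, Walk.isPath_of_length_eq_dist _ ?_, by simp⟩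
    rw [Walk.length_concat, hp, hx.2]
  obtain ⟨p, hp, rfl⟩ := key h
  obtain ⟨q, hq, rfl⟩ := key h'
  have := (hG.isAcyclic.subsingleton_path r u).elim ⟨p, hp⟩ ⟨q, hq⟩
  rw [Subtype.mk.inj this]

lemma exists_parent {V : Type} {G : SimpleGraph V} (hG : G.IsTree) {r u : V} (h : G.dist r u ≠ 0) :
    ∃ w, IsParent G r w u := by
  obtain ⟨p, hp⟩ := hG.connected.exists_walk_length_eq_dist u r
  cases p with
  | nil => simp at h
  | cons hadj q =>
    rename_i w
    refine ⟨w, hadj.symm, ?_⟩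
    have h1 := G.dist_le q.reverse
    rw [Walk.length_reverse] at h1
    rw [Walk.length_cons, G.dist_comm] at hp
    rcases hG.dist_eq_dist_add_one_of_adj r hadj with h2 | h2 <;> omega

lemma mem_ch_ofTree {G : SimpleGraph V} (hG : G.IsTree) {r u c : V} :
    c ∈ (ofTree G r).ch u ↔ IsParent G r u c := by
  rw [mem_ch]
  constructor
  · rintro ⟨h1, h2⟩
    have h1 : G.dist r c = G.dist r u + 1 := h1
    have hex : ∃ w, IsParent G r w c := exists_parent hG (by omega)
    simp only [ofTree, dif_pos hex] at h2
    exact h2 ▸ hex.choose_spec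
  · intro h
    have hex : ∃ w, IsParent G r w c := ⟨u, h⟩
    refine ⟨h.2.symm, ?_⟩
    simp only [ofTree, dif_pos hex]
    exact parent_unique hG hex.choose_spec h

/-- Every vertex of the tree is a descendant of the root. -/
lemma mem_D_ofTree {G : SimpleGraph V} (hG : G.IsTree) (r : V) :
    ∀ u, u ∈ (ofTree G r).D r := by
  intro u
  induction hn : G.dist r u generalizing u with
  | zero =>
    rw [hG.connected.dist_eq_zero_iff.1 hn]
    exact self_mem_D _ _
  | succ n ih =>
    obtain ⟨w, hw⟩ := exists_parent hG (r := r) (u := u) (by omega)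
    have := hw.2
    exact D_trans _ (ih w (by omega))
      (D_sub _ ((mem_ch_ofTree hG).2 hw) (self_mem_D _ _))

lemma adj_ofTree {G : SimpleGraph V} (hG : G.IsTree) (r : V) {u v : V} (h : G.Adj u v) :
    v ∈ (ofTree G r).ch u ∨ u ∈ (ofTree G r).ch v := by
  rw [mem_ch_ofTree hG, mem_ch_ofTree hG]
  rcases hG.dist_eq_dist_add_one_of_adj r h with h1 | h1
  · exact .inr ⟨h.symm, h1.symm⟩
  · exact .inl ⟨h, h1.symm⟩

lemma isStraightLine {G : SimpleGraph V} (hG : G.IsTree) {r : V} {f : V → ℝ × ℝ}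
    (h : (ofTree G r).Planar f r) : IsStraightLineDrawing G f := by
  have hD := mem_D_ofTree hG r
  refine ⟨fun u w huw => h.inj u (hD u) w (hD w) huw, ?_, ?_⟩
  · intro u v w huv hwu hwv hw
    rcases adj_ofTree hG r huv with hc | hc
    · rcases h.vert_edge w (hD w) u (hD u) v hc hw with h1 | h1 <;> contradiction
    · rw [segment_symm] at hw
      rcases h.vert_edge w (hD w) v (hD v) u hc hw with h1 | h1 <;> contradiction
  · intro u v u' v' huv huv' hne
    ext z
    constructor
    · rintro ⟨hz, hz'⟩
      have key : ∀ {a b a' b' : V}, b ∈ (ofTree G r).ch a → b' ∈ (ofTree G r).ch a' →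
          s(a, b) ≠ s(a', b') → z ∈ segment ℝ (f a) (f b) → z ∈ segment ℝ (f a') (f b') →
          ∃ w, (w = a ∨ w = b) ∧ (w = a' ∨ w = b') ∧ z = f w := by
        intro a b a' b' hb hb' hs hz hz'
        refine h.edge_edge a (hD a) b hb a' (hD a') b' hb' ?_ z hz hz'
        rintro rfl
        have := parent_unique hG ((mem_ch_ofTree hG).1 hb) ((mem_ch_ofTree hG).1 hb')
        exact hs (by rw [this])
      have : ∃ w, (w = u ∨ w = v) ∧ (w = u' ∨ w = v') ∧ z = f w := by
        rcases adj_ofTree hG r huv with hc | hc <;> rcases adj_ofTree hG r huv' with hc' | hc'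
        · exact key hc hc' hne hz hz'
        · obtain ⟨w, h1, h2, h3⟩ := key hc hc' (by rwa [Sym2.eq_swap (a := v')]) hz
            (by rwa [segment_symm])
          exact ⟨w, h1, h2.symm, h3⟩
        · obtain ⟨w, h1, h2, h3⟩ := key hc hc' (by rwa [Sym2.eq_swap (a := v)])
            (by rwa [segment_symm]) hz'
          exact ⟨w, h1.symm, h2, h3⟩
        · obtain ⟨w, h1, h2, h3⟩ := key hc hc'
            (by rwa [Sym2.eq_swap (a := v), Sym2.eq_swap (a := v')])
            (by rwa [segment_symm]) (by rwa [segment_symm])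
          exact ⟨w, h1.symm, h2.symm, h3⟩
      obtain ⟨w, h1, h2, h3⟩ := this
      exact ⟨w, ⟨h1, h2⟩, h3.symm⟩
    · rintro ⟨w, ⟨h1, h2⟩, rfl⟩
      constructor
      · rcases h1 with rfl | rfl
        exacts [left_mem_segment _ _ _, right_mem_segment _ _ _]
      · rcases h2 with rfl | rfl
        exacts [left_mem_segment _ _ _, right_mem_segment _ _ _]

lemma grid_of_drawD {G : SimpleGraph V} (hG : G.IsTree) {r : V} {w h : ℕ}
    (hd : (ofTree G r).DrawD r 0 (Rect w h)) :
    ∃ f : V → ℝ × ℝ, IsGridDrawing G f (w + 1) (h + 1) := by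
  obtain ⟨f, -, hp, hi, hR⟩ := hd.translate 1 1
  refine ⟨f, isStraightLine hG hp, fun x => ?_⟩
  have hx := mem_D_ofTree hG r x
  obtain ⟨i, j, hij⟩ := hi x hx
  have hxR := hR (Dr_vert hx)
  rw [hij] at hxR
  simp only [Rect, Set.mem_ofPred_eq] at hxR
  push_cast at hxR
  obtain ⟨h1, h2, h3, h4⟩ := hxR
  refine ⟨i, j, ?_, ?_, ?_, ?_, hij⟩
  · have : (1 : ℝ) ≤ i := by linarith
    exact_mod_cast this
  · have : (i : ℝ) ≤ ((w : ℕ) : ℝ) + 1 := by linarith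
    exact_mod_cast this
  · have : (1 : ℝ) ≤ j := by linarith
    exact_mod_cast this
  · have : (j : ℝ) ≤ ((h : ℕ) : ℝ) + 1 := by linarith
    exact_mod_cast this

/-! ### The area bound -/

/-- With `H ≈ log n`, the drawing of a tree of size `n` has area of order `n (log log n) ^ 5`. -/
lemma area_arith {n w a H : ℕ} (hH : H = Nat.log 2 n + 1) (ha : a = Nat.log 2 H + 1)
    (hw : w * H + 2 * Kf a * H ≤ 5 * Kf a * n) :
    (w + 1) * (2312 * a ^ 2 * H + Nat.log 2 n + 1) ≤ 2 ^ 26 * a ^ 5 * n := by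
  have ha1 : 1 ≤ a := by omega
  have hK1 : 1 ≤ Kf a := by unfold Kf; omega
  have hK : Kf a ≤ 4627 * a ^ 3 := by
    have h1 : a ≤ a ^ 3 := Nat.le_self_pow (by norm_num) a
    have h2 : 1 ≤ a ^ 3 := Nat.one_le_pow _ _ ha1
    unfold Kf
    omega
  have h1 : 1 ≤ a ^ 2 := Nat.one_le_pow _ _ ha1
  have hh : 2312 * a ^ 2 * H + Nat.log 2 n + 1 ≤ 2313 * a ^ 2 * H := by
    nlinarith
  have hwH : (w + 1) * H ≤ 5 * Kf a * n := by nlinarith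
  calc (w + 1) * (2312 * a ^ 2 * H + Nat.log 2 n + 1)
      ≤ (w + 1) * (2313 * a ^ 2 * H) := Nat.mul_le_mul_left _ hh
    _ = 2313 * a ^ 2 * ((w + 1) * H) := by ring
    _ ≤ 2313 * a ^ 2 * (5 * (4627 * a ^ 3) * n) :=
      Nat.mul_le_mul_left _ (hwH.trans (by gcongr))
    _ = (2313 * 5 * 4627) * a ^ 5 * n := by ring
    _ ≤ 2 ^ 26 * a ^ 5 * n := by gcongr; norm_num

lemma natLog_le_logb {m : ℕ} (hm : 1 ≤ m) : (Nat.log 2 m : ℝ) ≤ Real.logb 2 m := by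
  rw [Real.le_logb_iff_rpow_le (by norm_num) (by exact_mod_cast hm), Real.rpow_natCast]
  exact_mod_cast Nat.pow_log_le_self 2 (by omega)

/-- The fifth power of `L = log log n` is absorbed by the exponential because
`log L ≤ √(L log L)`. -/
lemma loglog_bound {n a : ℕ} (hn : 16 ≤ n) (ha : a = Nat.log 2 (Nat.log 2 n + 1) + 1) :
    (2 : ℝ) ^ 26 * (a : ℝ) ^ 5 ≤ (2 : ℝ) ^ (36 * Real.sqrt
      (Real.logb 2 (Real.logb 2 n) * Real.logb 2 (Real.logb 2 (Real.logb 2 n)))) := by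
  have hn' : (16 : ℝ) ≤ n := by exact_mod_cast hn
  set l1 := Real.logb 2 (n : ℝ) with hl1
  have h1 : 4 ≤ l1 := by
    rw [hl1, Real.le_logb_iff_rpow_le (by norm_num) (by linarith)]
    norm_num
    linarith
  set L := Real.logb 2 l1 with hL
  have h2 : 2 ≤ L := by
    rw [hL, Real.le_logb_iff_rpow_le (by norm_num) (by linarith)]
    norm_num
    linarith
  set l := Real.logb 2 L with hl
  have h3 : 1 ≤ l := by
    rw [hl, Real.le_logb_iff_rpow_le (by norm_num) (by linarith)]
    norm_num
    linarith
  have hLpow : (2 : ℝ) ^ l = L := Real.rpow_logb (by norm_num) (by norm_num) (by linarith)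
  have hlL : l ≤ L := by
    rw [← hLpow]
    have := one_add_mul_self_le_rpow_one_add (s := 1) (by norm_num) h3
    norm_num at this
    linarith
  have haL : (a : ℝ) ≤ 2 * L := by
    have e1 : ((Nat.log 2 n + 1 : ℕ) : ℝ) ≤ 2 * l1 := by
      have := natLog_le_logb (m := n) (by omega)
      push_cast
      linarith
    have e2 := natLog_le_logb (m := Nat.log 2 n + 1) (by omega)
    have e3 : Real.logb 2 ((Nat.log 2 n + 1 : ℕ) : ℝ) ≤ Real.logb 2 (2 * l1) :=
      Real.logb_le_logb_of_le (by norm_num) (by positivity) e1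
    rw [Real.logb_mul (by norm_num) (by linarith), Real.logb_self_eq_one (by norm_num)] at e3
    rw [ha]
    push_cast at *
    linarith
  have hsq : l ≤ Real.sqrt (L * l) := by
    apply Real.le_sqrt_of_sq_le
    nlinarith
  calc (2 : ℝ) ^ 26 * (a : ℝ) ^ 5 ≤ 2 ^ 26 * (2 * L) ^ 5 := by gcongr
    _ = (2 : ℝ) ^ (31 + 5 * l) := by
      rw [Real.rpow_add (by norm_num), mul_comm 5 l, Real.rpow_mul (by norm_num), hLpow]
      norm_num
      norm_cast
      ring
    _ ≤ _ := by
      apply Real.rpow_le_rpow_of_exponent_le (by norm_num)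
      linarith

end
end RT

/-- Every tree of size `n ≥ 16` has a straight-line grid drawing of area
`n·2^{O(√(log log n · log log log n))}`. -/
theorem stmt11 : ∃ C : ℝ, 0 < C ∧
    ∀ (n : ℕ), 16 ≤ n →
    ∀ (V : Type) [Fintype V] (G : SimpleGraph V), G.IsTree → Fintype.card V = n →
    ∃ (W H : ℕ) (f : V → ℝ × ℝ), IsGridDrawing G f W H ∧
      (W : ℝ) * H ≤ (n : ℝ) *
        (2 : ℝ) ^ (C * Real.sqrt
          (Real.logb 2 (Real.logb 2 n) * Real.logb 2 (Real.logb 2 (Real.logb 2 n)))) := by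
  refine ⟨36, by norm_num, fun n hn V _ G hG hcard => ?_⟩
  obtain ⟨r⟩ := hG.connected.nonempty
  have hsz : (RT.ofTree G r).sz r = n := by
    rw [RT.sz, Finset.eq_univ_iff_forall.2 (RT.mem_D_ofTree hG r), Finset.card_univ, hcard]
  have hlog : Nat.log 2 n + 1 < n := by
    have h1 : Nat.log 2 n < n - 1 := by
      refine Nat.log_lt_of_lt_pow (by omega) ?_
      have : ∀ k, 15 ≤ k → k + 1 < 2 ^ k := by
        intro k hk
        induction k, hk using Nat.le_induction with
        | base => norm_num
        | succ k _ ih => rw [pow_succ]; omega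
      have := this (n - 1) (by omega)
      omega
    omega
  obtain ⟨⟨w, hd, hw, -⟩, -⟩ := (RT.ofTree G r).main_all (H := Nat.log 2 n + 1)
    (a := Nat.log 2 (Nat.log 2 n + 1) + 1) (by omega) rfl r (by rwa [hsz]) _ le_rfl
  rw [hsz] at hd hw
  obtain ⟨f, hf⟩ := RT.grid_of_drawD hG hd
  refine ⟨_, _, f, hf, ?_⟩
  have h1 := RT.area_arith rfl rfl hw
  have h2 := RT.loglog_bound hn rfl
  have h1' : ((w + 1 : ℕ) : ℝ) * ((2312 * (Nat.log 2 (Nat.log 2 n + 1) + 1) ^ 2 *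
      (Nat.log 2 n + 1) + Nat.log 2 n + 1 : ℕ) : ℝ) ≤
      2 ^ 26 * ((Nat.log 2 (Nat.log 2 n + 1) + 1 : ℕ) : ℝ) ^ 5 * n := by exact_mod_cast h1
  exact (h1'.trans (mul_le_mul_of_nonneg_right h2 (Nat.cast_nonneg n))).trans_eq (mul_comm _ _)
end

section
/- There exists a constant C > 0 such that every binary tree of size n ≥ 1 has a straight-line orthogonal planar grid drawing of some width W and height H with W·H ≤ n·2^{C·log* n}. -/
/-!
The drawing is assembled on the integer lattice. Every vertex owns the lattice points of the edge
from its parent, with the parent's end removed and its own end kept; an axis-parallel drawing is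
planar as soon as these half-open cells are pairwise disjoint (`drawing`). The root gets a
fictitious parent just outside the bounding box, so that hanging a tree from a point `p` inside
the cell set `S` (`D`) is a purely combinatorial predicate defined by recursion on the tree.

A *spine* is a path of vertices, each with a tree hanging from it. Spines are drawn in boxes of a
fixed width that are entered at the left corner on one side and left at the left or right corner on
the opposite side (`Blk`); such boxes can be stacked, after a reflection if necessary
(`Blk.append`). One spine vertex with a tree of width `W - 1` gives a box as high as the tree
(`Blk.single`), and three spine vertices suffice to change sides (`Blk.flip`).

Let `P n W H` say that all trees of size at most `n` fit into a `W × H` box when hung from a point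
outside next to a corner, and that all spines with at least five vertices and total size at most
`n` can be drawn corner to corner. The heart of the proof is `P.step`: if `P A w h` and `n ≤ 2 ^
j`, then `P n (w + j + 2) H` as soon as `(116 n + 10 A) h ≤ A H`. To see it, follow the heavy path
of the tree and treat it as a spine. Consecutive small hanging trees are collected greedily into
groups of size at most `A`, and each group is drawn by the hypothesis in height at most `4 h`;
hanging trees too big for a group are drawn recursively, with one unit of width less. Off the heavy
path sizes halve, so `j` units of extra width are enough. Two consecutive pieces of the greedy
grouping have total size more than `A`, so about `n / A` pieces of height `O(h)` arise; that the
constant does not deteriorate through the `j` levels of the recursion is the content of the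
amortised weights `om`, for which the induction hypothesis carries the negative term `-58 A`.

The predicate `P` is invariant under transposition (`P.swap`), so the step can be iterated with
width and height exchanged: from `P (2 ^ e) W H` it gives `P (2 ^ (2 H)) (5 H) H'` with `H' = 126 W
2 ^ (2 H - e)`. Each step multiplies the area per vertex by `630`, while the height becomes at
least `2 ^ H`, so that only `O(log* n)` steps are needed to reach `n` (`exists_box`,
`level_le_logStar`). The area is therefore `n · 2 ^ O(log* n)`, with `22` as a possible constant.
-/

open SimpleGraph

/-- A drawing is orthogonal if every edge is drawn horizontally or vertically. -/
def IsOrthogonal {V : Type} (G : SimpleGraph V) (f : V → ℝ × ℝ) : Prop :=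
  ∀ u v : V, G.Adj u v → (f u).1 = (f v).1 ∨ (f u).2 = (f v).2

/-- `logStar n`: the least `j` such that the `j`-fold iterated base-2 logarithm of `n`
is at most `1`. -/
noncomputable def logStar (n : ℕ) : ℕ := sInf {j : ℕ | (Real.logb 2)^[j] (n : ℝ) ≤ 1}

namespace OrthoTree

/-! ### Hanging trees on the lattice -/

/-- Binary trees, the empty tree `nil` included; the two subtrees of a node may be empty. -/
inductive BT : Type
  | nil : BT
  | node (l r : BT) : BT

/-- The number of nodes. -/
def BT.size : BT → ℕ
  | .nil => 0
  | .node l r => l.size + r.size + 1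

/-- Lattice points. -/
abbrev Pt := ℤ × ℤ

/-- The lattice points of the axis-parallel segment from `p` to `q`, without `p` and with `q`:
the cell owned by a vertex drawn at `q` whose parent is drawn at `p`. For points that are not
aligned this is a bounding rectangle, a case that never matters. -/
def hseg (p q : Pt) : Set Pt :=
  {z | (min p.1 q.1 ≤ z.1 ∧ z.1 ≤ max p.1 q.1 ∧ min p.2 q.2 ≤ z.2 ∧ z.2 ≤ max p.2 q.2) ∧
    ¬(z.1 = p.1 ∧ z.2 = p.2)}

/-- `p` and `q` are distinct and lie on a common horizontal or vertical line. -/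
def Aligned (p q : Pt) : Prop := (p.1 = q.1 ∨ p.2 = q.2) ∧ ¬(q.1 = p.1 ∧ q.2 = p.2)

/-- `D t p S`: the tree `t` can be drawn with its root joined to the point `p` such that all cells
lie in `S` and are pairwise disjoint. The subtrees of the root `q` use disjoint sets `S₁`, `S₂`. The
point `p` itself, which carries the parent, need not belong to `S`. -/
def D : BT → Pt → Set Pt → Prop
  | .nil, _, _ => True
  | .node l r, p, S => ∃ q, Aligned p q ∧ hseg p q ⊆ S ∧ ∃ S₁ S₂, S₁ ⊆ S ∧ S₂ ⊆ S ∧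
      Disjoint S₁ S₂ ∧ Disjoint S₁ (hseg p q) ∧ Disjoint S₂ (hseg p q) ∧ D l q S₁ ∧ D r q S₂

theorem D_mono {t : BT} {p : Pt} {S S' : Set Pt} (h : D t p S) (hS : S ⊆ S') : D t p S' := by
  cases t with
  | nil => trivial
  | node l r =>
    obtain ⟨q, h1, h2, S₁, S₂, h3, h4, h5⟩ := h
    exact ⟨q, h1, h2.trans hS, S₁, S₂, h3.trans hS, h4.trans hS, h5⟩

theorem D_swap {l r : BT} {p : Pt} {S : Set Pt} (h : D (.node l r) p S) : D (.node r l) p S := by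
  obtain ⟨q, h1, h2, S₁, S₂, h3, h4, h5, h6, h7, h8, h9⟩ := h
  exact ⟨q, h1, h2, S₂, S₁, h4, h3, h5.symm, h7, h6, h9, h8⟩

theorem D_left {l l' r : BT} (hl : ∀ p S, D l p S → D l' p S) {p : Pt} {S : Set Pt}
    (h : D (.node l r) p S) : D (.node l' r) p S := by
  obtain ⟨q, h1, h2, S₁, S₂, h3, h4, h5, h6, h7, h8, h9⟩ := h
  exact ⟨q, h1, h2, S₁, S₂, h3, h4, h5, h6, h7, hl _ _ h8, h9⟩

/-- A bijection of the lattice that preserves alignment and cells, such as a lattice isometry. -/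
def Good (φ : Pt ≃ Pt) : Prop :=
  ∀ p q, (Aligned p q ↔ Aligned (φ p) (φ q)) ∧ ∀ z, (z ∈ hseg p q ↔ φ z ∈ hseg (φ p) (φ q))

theorem Good.symm {φ : Pt ≃ Pt} (h : Good φ) : Good φ.symm := by
  intro p q
  have := h (φ.symm p) (φ.symm q)
  simp only [Equiv.apply_symm_apply] at this
  refine ⟨this.1.symm, fun z => ?_⟩
  have := this.2 (φ.symm z)
  simpa using this.symm

theorem D_map {φ : Pt ≃ Pt} (hφ : Good φ) {t : BT} : ∀ {p : Pt} {S : Set Pt}, D t p S →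
    D t (φ p) (φ.symm ⁻¹' S) := by
  induction t with
  | nil => intros; trivial
  | node l r ihl ihr =>
    rintro p S ⟨q, h1, h2, S₁, S₂, h3, h4, h5, h6, h7, h8, h9⟩
    have key : hseg (φ p) (φ q) = φ.symm ⁻¹' hseg p q := by
      ext z
      rw [Set.mem_preimage, (hφ p q).2]
      simp
    refine ⟨φ q, (hφ p q).1.1 h1, ?_, _, _, Set.preimage_mono h3, Set.preimage_mono h4, ?_, ?_, ?_,
      ihl h8, ihr h9⟩
    · rw [key]; exact Set.preimage_mono h2
    · exact h5.preimage _
    · rw [key]; exact h6.preimage _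
    · rw [key]; exact h7.preimage _

/-! ### Spines -/

/-- The tree consisting of a path of vertices (the spine), one for each entry of the list; the
entry hangs from the spine vertex as a subtree, and the tree `t` hangs below the last one. -/
def plug : List BT → BT → BT
  | [], t => t
  | T :: Ts, t => .node (plug Ts t) T

theorem plug_append (Ts Us : List BT) (t : BT) : plug (Ts ++ Us) t = plug Ts (plug Us t) := by
  induction Ts with
  | nil => rfl
  | cons T Ts ih => simp [plug, ih]

theorem D_plug_nil {Ts : List BT} {t : BT} : ∀ {p : Pt} {S : Set Pt}, D (plug Ts t) p S →
    D (plug Ts .nil) p S := by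
  induction Ts with
  | nil => intros; trivial
  | cons T Ts ih => exact fun h => D_left (fun _ _ => ih) h

/-- `DC Ts p S e`: the spine with hanging trees `Ts` can be drawn from the point `p` with cells in
`S` such that its last vertex lies at `e` (or `e = p` for the empty spine). This is expressed by
quantifying over what may be attached at `e`: any tree `t` drawn from `e` in a set `X` disjoint from
`S`. -/
def DC (Ts : List BT) (p : Pt) (S : Set Pt) (e : Pt) : Prop :=
  ∀ t X, Disjoint S X → D t e X → D (plug Ts t) p (S ∪ X)

theorem DC_nil (p : Pt) (S : Set Pt) : DC [] p S p :=
  fun _ _ _ h => D_mono h Set.subset_union_right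

theorem DC_mono {Ts : List BT} {p e : Pt} {S S' : Set Pt} (h : DC Ts p S e) (hS : S ⊆ S') :
    DC Ts p S' e :=
  fun t X hd ht => D_mono (h t X (hd.mono_left hS) ht) (Set.union_subset_union_left _ hS)

theorem DC_append {Ts Us : List BT} {p e e' : Pt} {S S' : Set Pt} (h : DC Ts p S e)
    (h' : DC Us e S' e') (hd : Disjoint S S') : DC (Ts ++ Us) p (S ∪ S') e' := by
  intro t X hX ht
  rw [Set.disjoint_union_left] at hX
  rw [plug_append, Set.union_assoc]
  exact h _ _ (Set.disjoint_union_right.2 ⟨hd, hX.1⟩) (h' _ _ hX.2 ht)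

theorem DC_map {φ : Pt ≃ Pt} (hφ : Good φ) {Ts : List BT} {p e : Pt} {S : Set Pt}
    (h : DC Ts p S e) : DC Ts (φ p) (φ.symm ⁻¹' S) (φ e) := by
  intro t X hX ht
  have h1 := D_map hφ.symm ht
  simp only [Equiv.symm_apply_apply, Equiv.symm_symm] at h1
  have h2 := D_map hφ (h t _ (by
    rw [Set.disjoint_left] at hX ⊢
    intro z hz hz'
    exact hX (a := φ z) (by simpa using hz) hz') h1)
  refine D_mono h2 ?_
  rw [Set.preimage_union, ← Set.preimage_comp]
  simp

theorem DC_single {T : BT} {p e : Pt} {S S₁ : Set Pt} (ha : Aligned p e) (h1 : hseg p e ⊆ S)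
    (h2 : S₁ ⊆ S) (h3 : Disjoint S₁ (hseg p e)) (hT : D T e S₁) : DC [T] p S e := by
  intro t X hX ht
  exact ⟨e, ha, h1.trans Set.subset_union_left, X, S₁, Set.subset_union_right,
    h2.trans Set.subset_union_left, (hX.mono_left h2).symm, (hX.mono_left h1).symm, h3, ht, hT⟩

/-! ### Isometries and boxes -/

/-- `-x` if `b` is true, otherwise `x`. -/
def sg (b : Bool) (x : ℤ) : ℤ := if b then -x else x

/-- The isometry moving the origin to `(x, y)` and reflecting the axes selected by `b` and `c`. -/
def aff (b c : Bool) (x y : ℤ) : Pt ≃ Pt where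
  toFun z := (x + sg b z.1, y + sg c z.2)
  invFun z := (sg b (z.1 - x), sg c (z.2 - y))
  left_inv z := by cases b <;> cases c <;> simp [sg]
  right_inv z := by cases b <;> cases c <;> simp [sg]

theorem aff_good (b c : Bool) (x y : ℤ) : Good (aff b c x y) := by
  intro p q
  constructor
  · cases b <;> cases c <;> simp [aff, sg, Aligned]
  · intro z
    cases b <;> cases c <;> simp only [aff, sg, hseg, Set.mem_ofPred_eq, Equiv.coe_fn_mk] <;>
      simp <;> omega

theorem swap_good : Good (Equiv.prodComm ℤ ℤ) := by
  intro p q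
  constructor
  · simp only [Aligned, Equiv.prodComm_apply, Prod.fst_swap, Prod.snd_swap]; tauto
  · intro z
    simp only [hseg, Set.mem_ofPred_eq, Equiv.prodComm_apply, Prod.fst_swap, Prod.snd_swap]; tauto

/-- The lattice points of the rectangle `[a, b] × [c, d]`. -/
def R (a b c d : ℤ) : Set Pt := {z | a ≤ z.1 ∧ z.1 ≤ b ∧ c ≤ z.2 ∧ z.2 ≤ d}

/-- The tree can be drawn in the box `[1, W] × [1, H]` by hanging it from either of the two points
outside the box next to the corner `(1, 1)`; the two drawings may differ. -/
def Non (t : BT) (W H : ℕ) : Prop := D t (0, 1) (R 1 W 1 H) ∧ D t (1, 0) (R 1 W 1 H)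

theorem Non.mono {t : BT} {W H W' H' : ℕ} (h : Non t W H) (hW : W ≤ W') (hH : H ≤ H') :
    Non t W' H' := by
  have : R 1 W 1 H ⊆ R 1 W' 1 H' := by
    intro z hz
    simp only [R, Set.mem_ofPred_eq] at *
    omega
  exact ⟨D_mono h.1 this, D_mono h.2 this⟩

/-- A tree of width `W` and height `k` hung horizontally from `(x, y)`: it occupies the `W` columns
beside that point, and `k` rows starting with that of the point. -/
theorem hangH {t : BT} {W k : ℕ} (h : Non t W k) (b c : Bool) (x y : ℤ) :
    D t (x, y) {z | 1 ≤ sg b (z.1 - x) ∧ sg b (z.1 - x) ≤ W ∧ 0 ≤ sg c (z.2 - y) ∧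
      sg c (z.2 - y) < k} := by
  have := D_map (aff_good b c x (y - sg c 1)) h.1
  refine D_mono (p := (x, y)) ?_ ?_ (S := (aff b c x (y - sg c 1)).symm ⁻¹' (R 1 W 1 k))
  · convert this using 1
    cases b <;> simp [aff, sg]
  · intro z
    cases b <;> cases c <;> simp only [aff, R, sg, Set.mem_ofPred_eq, Set.mem_preimage,
      Equiv.coe_fn_symm_mk] <;> simp <;> omega

/-- The transposed version of `hangH`: the tree is hung vertically from `(x, y)`. -/
theorem hangV {t : BT} {W k : ℕ} (h : Non t W k) (b c : Bool) (x y : ℤ) :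
    D t (x, y) {z | 0 ≤ sg b (z.1 - x) ∧ sg b (z.1 - x) < W ∧ 1 ≤ sg c (z.2 - y) ∧
      sg c (z.2 - y) ≤ k} := by
  have := D_map (aff_good b c (x - sg b 1) y) h.2
  refine D_mono (p := (x, y)) ?_ ?_ (S := (aff b c (x - sg b 1) y).symm ⁻¹' (R 1 W 1 k))
  · convert this using 1
    cases c <;> simp [aff, sg]
  · intro z
    cases b <;> cases c <;> simp only [aff, R, sg, Set.mem_ofPred_eq, Set.mem_preimage,
      Equiv.coe_fn_symm_mk] <;> simp <;> omega

/-! ### Blocks -/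

/-- The first (`b` false) or last (`b` true) column of a box of width `W`. -/
def side (W : ℕ) (b : Bool) : ℤ := if b then W else 1

/-- The spine `Ts` can be drawn from `p` in the box `[1, W] × [1, k]` with its last vertex in the last
row, in the column given by `b`. Usually `p = (1, 0)`, below the corner `(1, 1)`. -/
def Blk (W : ℕ) (p : Pt) (b : Bool) (Ts : List BT) (k : ℕ) : Prop :=
  DC Ts p (R 1 W 1 k) (side W b, k)

/-- Blocks can be stacked: the second one is reflected if the first one ends in the last column. -/
theorem Blk.append {W : ℕ} {p : Pt} {b b' : Bool} {Ts Us : List BT} {k k' : ℕ}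
    (h : Blk W p b Ts k) (h' : Blk W (1, 0) b' Us k') :
    Blk W p (xor b b') (Ts ++ Us) (k + k') := by
  have h2 := DC_map (aff_good b false (if b then W + 1 else 0) k) h'
  have e1 : aff b false (if b then W + 1 else 0) k (1, 0) = (side W b, (k : ℤ)) := by
    cases b <;> simp [aff, side, sg]
  have e2 : aff b false (if b then W + 1 else 0) k (side W b', (k' : ℤ)) =
      (side W (xor b b'), ((k + k' : ℕ) : ℤ)) := by
    cases b <;> cases b' <;> simp [aff, side, sg]
  rw [e1, e2] at h2
  have e3 : (aff b false (if b then W + 1 else 0) k).symm ⁻¹' (R 1 W 1 k') =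
      R 1 W (k + 1) (k + k') := by
    ext z
    cases b <;> simp [aff, R, sg] <;> omega
  rw [e3] at h2
  refine DC_mono (DC_append h h2 ?_) ?_
  · rw [Set.disjoint_left]
    intro z; simp only [R, Set.mem_ofPred_eq]; omega
  · intro z; simp only [R, Set.mem_union, Set.mem_ofPred_eq]; push_cast; omega

theorem Blk.nil {W : ℕ} : Blk W (1, 0) false [] 0 := by
  simpa [Blk, side] using DC_nil _ _

/-- A spine vertex in the last row of the first column, whose tree is hung to the right and reflected
so as to extend back towards the first row. The first column below it carries its edge. -/
theorem Blk.single {W k : ℕ} {T : BT} (h : Non T (W - 1) k) (hk : 1 ≤ k) (hW : 1 ≤ W) :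
    Blk W (1, 0) false [T] k := by
  refine DC_single ?_ ?_ ?_ ?_ (hangH h false true 1 k)
  · simp [Aligned, side]; omega
  · intro z; simp only [hseg, R, side, Set.mem_ofPred_eq]; simp; omega
  · intro z; simp only [R, sg, Set.mem_ofPred_eq]; simp; omega
  · rw [Set.disjoint_left]
    intro z; simp only [hseg, side, sg, Set.mem_ofPred_eq]; simp; omega

/-- Two spine vertices at the two ends of the first column, the first one in the corner. Unlike in
`Blk.single`, the block can be entered from either of the two neighbours of the corner outside. -/
theorem Blk.root {W k l : ℕ} {T U : BT} (h : Non T (W - 1) k) (h' : Non U (W - 1) l)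
    (hl : 1 ≤ l) (hk : 1 ≤ k) (hW : 1 ≤ W) {p : Pt} (hp : p = (0, 1) ∨ p = (1, 0)) :
    Blk W p false [T, U] (k + l) := by
  have h1 : DC [T] p (R 1 1 1 1 ∪ R 2 W 1 k) (1, 1) := by
    refine DC_single ?_ ?_ ?_ ?_ (hangH h false false 1 1)
    · rcases hp with rfl | rfl <;> simp [Aligned]
    · rcases hp with rfl | rfl <;> intro z <;>
        simp only [hseg, R, Set.mem_union, Set.mem_ofPred_eq] <;> simp <;> omega
    · intro z; simp only [R, sg, Set.mem_union, Set.mem_ofPred_eq]; simp; omega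
    · rw [Set.disjoint_left]
      rcases hp with rfl | rfl <;> intro z <;>
        simp only [hseg, sg, Set.mem_ofPred_eq] <;> simp <;> omega
  have h2 : DC [U] (1, 1) (R 1 1 2 (k + l) ∪ R 2 W (k + 1) (k + l)) (1, (k + l : ℕ)) := by
    refine DC_single ?_ ?_ ?_ ?_ (hangH h' false true 1 (k + l : ℕ))
    · simp [Aligned]; omega
    · intro z; simp only [hseg, R, Set.mem_union, Set.mem_ofPred_eq]; simp; omega
    · intro z; simp only [R, sg, Set.mem_union, Set.mem_ofPred_eq]; simp; omega
    · rw [Set.disjoint_left]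
      intro z; simp only [hseg, sg, Set.mem_ofPred_eq]; simp; omega
  refine DC_mono (DC_append h1 h2 ?_) ?_
  · rw [Set.disjoint_left]
    intro z; simp only [R, Set.mem_union, Set.mem_ofPred_eq]; omega
  · intro z; simp only [R, Set.mem_union, Set.mem_ofPred_eq]; push_cast; omega

/-- Three spine vertices move the spine from the first to the last column: the first two span row
`l + 1`, with `T` hung upwards from the first and `U` hung downwards from the second; the third
continues in the last column, with `V` hung to the left. -/
theorem Blk.flip {W k l m : ℕ} {T U V : BT} (h : Non T (W - 1) k) (h' : Non U (W - 1) l)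
    (h'' : Non V (W - 1) m) (hm : 1 ≤ m) (hW : 2 ≤ W) :
    Blk W (1, 0) true [T, U, V] (k + l + m + 1) := by
  have h1 : DC [T] (1, 0) (R 1 1 1 (l + 1) ∪ R 1 (W - 1) (l + 2) (l + k + 1))
      (1, l + 1) := by
    refine DC_single ?_ ?_ ?_ ?_ (hangV h false false 1 (l + 1))
    · simp [Aligned]; omega
    · intro z; simp only [hseg, R, Set.mem_union, Set.mem_ofPred_eq]; simp; omega
    · intro z; simp only [R, sg, Set.mem_union, Set.mem_ofPred_eq]; simp; omega
    · rw [Set.disjoint_left]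
      intro z; simp only [hseg, sg, Set.mem_ofPred_eq]; simp; omega
  have h2 : DC [U] (1, l + 1) (R 2 W 1 (l + 1)) (W, l + 1) := by
    refine DC_single ?_ ?_ ?_ ?_ (hangV h' true true W (l + 1))
    · simp [Aligned]; omega
    · intro z; simp only [hseg, R, Set.mem_ofPred_eq]; simp; omega
    · intro z; simp only [R, sg, Set.mem_ofPred_eq]; simp; omega
    · rw [Set.disjoint_left]
      intro z; simp only [hseg, sg, Set.mem_ofPred_eq]; simp; omega
  have h3 : DC [V] (W, l + 1) (R W W (l + 2) (k + l + m + 1) ∪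
      R 1 (W - 1) (k + l + 2) (k + l + m + 1)) (W, (k + l + m + 1 : ℕ)) := by
    refine DC_single ?_ ?_ ?_ ?_ (hangH h'' true true W (k + l + m + 1 : ℕ))
    · simp [Aligned]; omega
    · intro z; simp only [hseg, R, Set.mem_union, Set.mem_ofPred_eq]; simp; omega
    · intro z; simp only [R, sg, Set.mem_union, Set.mem_ofPred_eq]; simp; omega
    · rw [Set.disjoint_left]
      intro z; simp only [hseg, sg, Set.mem_ofPred_eq]; simp; omega
  refine DC_mono (DC_append h1 (DC_append h2 h3 ?_) ?_) ?_
  · rw [Set.disjoint_left]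
    intro z; simp only [R, Set.mem_union, Set.mem_ofPred_eq]; omega
  · rw [Set.disjoint_left]
    intro z; simp only [R, Set.mem_union, Set.mem_ofPred_eq]; omega
  · intro z; simp only [R, Set.mem_union, Set.mem_ofPred_eq]; push_cast; omega


/-! ### Grouping and amortised heights -/

/-- The number of vertices of a spine with hanging trees `Ts`, the spine included. -/
def sizeL (Ts : List BT) : ℕ := (Ts.map fun T => T.size + 1).sum

@[simp] theorem sizeL_nil : sizeL [] = 0 := rfl
@[simp] theorem sizeL_cons (T : BT) (Ts : List BT) :
    sizeL (T :: Ts) = T.size + 1 + sizeL Ts := by simp [sizeL]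
@[simp] theorem sizeL_append (Ts Us : List BT) : sizeL (Ts ++ Us) = sizeL Ts + sizeL Us := by
  simp [sizeL]

theorem size_le_sizeL {Ts : List BT} {T : BT} (h : T ∈ Ts) : T.size + 1 ≤ sizeL Ts := by
  induction Ts with
  | nil => simp at h
  | cons U Us ih =>
    rw [sizeL_cons]
    rcases List.mem_cons.1 h with rfl | h
    · omega
    · have := ih h; omega

/-- What is known about sizes up to `A` when drawing in a box of width `W`: trees fit into height `h`
even with one column less, and long spines can be drawn in height `h`, ending in the last column. -/
structure Base (A h W : ℕ) : Prop where
  hA : 1 ≤ A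
  hh : 1 ≤ h
  hW : 2 ≤ W
  small : ∀ t : BT, t.size ≤ A → Non t (W - 1) h
  aug : ∀ Ts : List BT, 5 ≤ Ts.length → sizeL Ts ≤ A → Blk W (1, 0) true Ts h

theorem Blk.singles {W h : ℕ} (hh : 1 ≤ h) (hW : 1 ≤ W) (Ts : List BT)
    (hT : ∀ T ∈ Ts, Non T (W - 1) h) : Blk W (1, 0) false Ts (Ts.length * h) := by
  induction Ts with
  | nil => simpa using Blk.nil
  | cons T Ts ih =>
    have := (Blk.single (hT T (by simp)) hh hW).append (ih fun U hU => hT U (by simp [hU]))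
    simpa [add_mul, add_comm] using this

/-- A spine of size at most `A` has height at most `4 h`: with fewer than five vertices it is drawn
one vertex at a time. -/
theorem Base.group {A h W : ℕ} (B : Base A h W) (G : List BT) (hG : sizeL G ≤ A) :
    ∃ b k, k ≤ 4 * h ∧ Blk W (1, 0) b G k := by
  by_cases h5 : 5 ≤ G.length
  · exact ⟨true, h, by omega, B.aug G h5 hG⟩
  · refine ⟨false, _, ?_, Blk.singles B.hh (by have := B.hW; omega) G fun T hT =>
      B.small T (by have := size_le_sizeL hT; omega)⟩
    exact Nat.mul_le_mul_right _ (by omega)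

/-- The weight of a hanging tree in the amortised bound on heights. It is linear in the size;
for a tree too big for a group the large negative constant pays for its own piece and for the
group it terminates. -/
def om (A : ℕ) (T : BT) : ℤ :=
  if T.size + 1 ≤ A then 8 * (T.size + 1) else 116 * T.size + 8 - 54 * A

/-- The total weight of the trees hanging from a spine. -/
def omL (A : ℕ) (Ts : List BT) : ℤ := (Ts.map (om A)).sum

@[simp] theorem omL_nil (A : ℕ) : omL A [] = 0 := rfl
@[simp] theorem omL_cons (A : ℕ) (T : BT) (Ts : List BT) :
    omL A (T :: Ts) = om A T + omL A Ts := by simp [omL]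
@[simp] theorem omL_append (A : ℕ) (Ts Us : List BT) :
    omL A (Ts ++ Us) = omL A Ts + omL A Us := by simp [omL]

theorem le_om (A : ℕ) (T : BT) : (8 * (T.size + 1) : ℤ) ≤ om A T := by
  unfold om; split_ifs <;> omega

theorem om_le (A : ℕ) (hA : 1 ≤ A) (T : BT) : om A T ≤ 116 * (T.size + 1) := by
  unfold om; split_ifs <;> omega

theorem le_omL (A : ℕ) (Ts : List BT) : (8 * sizeL Ts : ℤ) ≤ omL A Ts := by
  induction Ts with
  | nil => simp
  | cons T Ts ih => have := le_om A T; simp; linarith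

theorem omL_le (A : ℕ) (hA : 1 ≤ A) (Ts : List BT) : omL A Ts ≤ 116 * sizeL Ts := by
  induction Ts with
  | nil => simp
  | cons T Ts ih => have := om_le A hA T; simp; linarith

/-- The tree can be drawn in width `W - 1` and height `κ`, where `κ = h` for small trees and otherwise
`κ ≤ (h / A) (116 |T| - 58 A)`. -/
def Cost (A h W : ℕ) (T : BT) (κ : ℕ) : Prop :=
  1 ≤ κ ∧ Non T (W - 1) κ ∧ (T.size + 1 ≤ A → κ = h) ∧
    (A ≤ T.size → (A * κ : ℤ) ≤ h * (116 * T.size - 58 * A))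

theorem Cost.le {A h W κ : ℕ} {T : BT} (hc : Cost A h W T κ) :
    (A * κ : ℤ) ≤ h * (om A T + A) := by
  obtain ⟨_, _, h1, h2⟩ := hc
  unfold om
  split_ifs with hs
  · rw [h1 hs]
    nlinarith [mul_nonneg (Int.natCast_nonneg h) (Int.natCast_nonneg T.size)]
  · have := h2 (by omega)
    nlinarith [mul_nonneg (Int.natCast_nonneg h) (Int.natCast_nonneg A)]

/-- Greedy grouping from the end of the spine. The invariant separates the group `G` still being
filled from the part `Us` already drawn in height `K`. When a small tree does not fit into `G`, the
group is drawn and the tree starts a new one; the total size of both exceeds `A`, which pays for the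
height `4 h`. A big tree closes `G` and is drawn on its own. -/
theorem Base.mid' {A h W : ℕ} (B : Base A h W) (Ts : List BT)
    (hT : ∀ T ∈ Ts, ∃ κ, Cost A h W T κ) :
    ∃ G Us b K, Ts = G ++ Us ∧ sizeL G ≤ A ∧ Blk W (1, 0) b Us K ∧
      (A * K : ℤ) ≤ h * (omL A Us + 4 * sizeL G) := by
  induction Ts with
  | nil => exact ⟨[], [], false, 0, rfl, by simp, Blk.nil, by simp⟩
  | cons T Ts ih =>
    obtain ⟨G, Us, b, K, rfl, hG, hB, hK⟩ := ih fun U hU => hT U (by simp [hU])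
    obtain ⟨b', k, hk, hB'⟩ := B.group G hG
    have hGo := le_omL A G
    have hh0 : (0 : ℤ) ≤ h := Int.natCast_nonneg h
    have hk' : (A * k : ℤ) ≤ A * (4 * h) := by
      have : (k : ℤ) ≤ 4 * h := by exact_mod_cast hk
      exact mul_le_mul_of_nonneg_left this (Int.natCast_nonneg A)
    by_cases hs : T.size + 1 ≤ A
    · by_cases hs' : T.size + 1 + sizeL G ≤ A
      · refine ⟨T :: G, Us, b, K, rfl, by simpa using hs', hB, hK.trans ?_⟩
        gcongr
        simp
      · refine ⟨[T], G ++ Us, _, k + K, rfl, by simpa using hs, hB'.append hB, ?_⟩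
        have : (h * A : ℤ) ≤ h * (T.size + 1 + sizeL G) := by
          gcongr; exact_mod_cast (not_le.1 hs').le
        have h8 : (h * (8 * sizeL G) : ℤ) ≤ h * omL A G := by gcongr
        simp; nlinarith
    · obtain ⟨κ, hc⟩ := hT T (by simp)
      have hb := (Blk.single hc.2.1 hc.1 (by have := B.hW; omega)).append (hB'.append hB)
      refine ⟨[], T :: (G ++ Us), _, _, rfl, by simp, hb, ?_⟩
      have h8 : (h * (8 * sizeL G) : ℤ) ≤ h * omL A G := by gcongr
      have hbig := hc.2.2.2 (by omega)
      have hom : om A T = 116 * T.size + 8 - 54 * A := by rw [om, if_neg hs]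
      simp [hom]
      nlinarith [mul_nonneg hh0 (Int.natCast_nonneg (sizeL G))]

theorem Base.mid {A h W : ℕ} (B : Base A h W) (Ts : List BT)
    (hT : ∀ T ∈ Ts, ∃ κ, Cost A h W T κ) :
    ∃ b K, Blk W (1, 0) b Ts K ∧ (A * K : ℤ) ≤ h * (omL A Ts + 4 * A) := by
  obtain ⟨G, Us, b, K, rfl, hG, hB, hK⟩ := B.mid' Ts hT
  obtain ⟨b', k, hk, hB'⟩ := B.group G hG
  refine ⟨_, _, hB'.append hB, ?_⟩
  have hGo := le_omL A G
  have hh0 : (0 : ℤ) ≤ h := Int.natCast_nonneg h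
  have h8 : (h * (8 * sizeL G) : ℤ) ≤ h * omL A G := by gcongr
  have hk' : (A * k : ℤ) ≤ A * (4 * h) := by
    have : (k : ℤ) ≤ 4 * h := by exact_mod_cast hk
    exact mul_le_mul_of_nonneg_left this (Int.natCast_nonneg A)
  simp
  nlinarith [mul_nonneg hh0 (Int.natCast_nonneg (sizeL G))]

/-- Three spine vertices suffice to end on a prescribed side, at a prescribed height. -/
theorem Blk.last {W k l m H : ℕ} {T U V : BT} (h : Non T (W - 1) k) (h' : Non U (W - 1) l)
    (h'' : Non V (W - 1) m) (hk : 1 ≤ k) (hl : 1 ≤ l) (hm : 1 ≤ m) (hW : 2 ≤ W) (b : Bool)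
    (hH : k + l + m + 1 ≤ H) : Blk W (1, 0) b [T, U, V] H := by
  cases b with
  | true =>
    have := Blk.flip h h' (h''.mono le_rfl (show m ≤ H - (k + l + 1) by omega)) (by omega) hW
    convert this using 1; omega
  | false =>
    have := (Blk.single h hk (by omega)).append ((Blk.single h' hl (by omega)).append
      (Blk.single (h''.mono le_rfl (show m ≤ H - (k + l) by omega)) (by omega) (by omega)))
    simp only [Bool.xor_false, List.cons_append, List.nil_append] at this
    convert this using 1; omega

theorem list_split {Ts : List BT} (h : 5 ≤ Ts.length) :
    ∃ T U M X Y Z, Ts = T :: U :: (M ++ [X, Y, Z]) := by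
  match Ts, h with
  | T :: U :: L, h =>
    simp only [List.length_cons] at h
    have h1 := List.take_append_drop (L.length - 3) L
    have h2 : (L.drop (L.length - 3)).length = 3 := by simp; omega
    obtain ⟨X, Y, Z, h3⟩ := List.length_eq_three.1 h2
    exact ⟨T, U, _, X, Y, Z, by rw [← h3, h1]⟩

/-- A long spine is drawn corner to corner: two vertices make the block start in the corner, three
vertices correct the side, and the ones in between are grouped. -/
theorem Base.main {A h W : ℕ} (B : Base A h W) (Ts : List BT) (h5 : 5 ≤ Ts.length)
    (hT : ∀ T ∈ Ts, ∃ κ, Cost A h W T κ) :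
    ∃ K : ℕ, (A * K : ℤ) ≤ h * (omL A Ts + 10 * A) ∧ 1 ≤ K ∧
      ∀ H, K ≤ H → ∀ p : Pt, p = (0, 1) ∨ p = (1, 0) → Blk W p true Ts H := by
  obtain ⟨T, U, M, X, Y, Z, rfl⟩ := list_split h5
  obtain ⟨k₁, c₁⟩ := hT T (by simp)
  obtain ⟨k₂, c₂⟩ := hT U (by simp)
  obtain ⟨k₃, c₃⟩ := hT X (by simp)
  obtain ⟨k₄, c₄⟩ := hT Y (by simp)
  obtain ⟨k₅, c₅⟩ := hT Z (by simp)
  obtain ⟨b, K, hM, hK⟩ := B.mid M fun T hT' => hT T (by simp [hT'])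
  have hW := B.hW
  refine ⟨k₁ + k₂ + K + (k₃ + k₄ + k₅ + 1), ?_, by omega, fun H hH p hp => ?_⟩
  · have hh : (1 : ℤ) ≤ h := by exact_mod_cast B.hh
    have : (A : ℤ) ≤ h * A := le_mul_of_one_le_left (Int.natCast_nonneg A) hh
    have := c₁.le; have := c₂.le; have := c₃.le; have := c₄.le; have := c₅.le
    simp
    nlinarith
  · have e1 := Blk.root c₁.2.1 c₂.2.1 c₂.1 c₁.1 (by omega) hp
    have e2 := Blk.last c₃.2.1 c₄.2.1 c₅.2.1 c₃.1 c₄.1 c₅.1 hW (!b)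
      (show _ ≤ H - (k₁ + k₂ + K) by omega)
    have := (e1.append hM).append e2
    simp only [Bool.false_xor, Bool.xor_not_self, List.cons_append, List.nil_append] at this
    convert this using 1; omega

/-- The heavy path: `t` is a spine all of whose hanging trees have less than half the size of `t`. -/
theorem heavy (t : BT) : ∃ Ts, sizeL Ts = t.size ∧ (∀ T ∈ Ts, 2 * T.size < t.size) ∧
    ∀ p S, D (plug Ts .nil) p S → D t p S := by
  induction t with
  | nil => exact ⟨[], rfl, by simp, fun _ _ _ => trivial⟩
  | node l r ihl ihr =>
    rcases le_total r.size l.size with h | h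
    · obtain ⟨Ts, h1, h2, h3⟩ := ihl
      refine ⟨r :: Ts, by simp [h1, BT.size]; omega, ?_, fun p S => D_left h3⟩
      intro T hT
      rcases List.mem_cons.1 hT with rfl | hT
      · simp only [BT.size]; omega
      · have := h2 T hT; simp only [BT.size]; omega
    · obtain ⟨Ts, h1, h2, h3⟩ := ihr
      refine ⟨l :: Ts, by simp [h1, BT.size]; omega, ?_, fun p S hS => D_swap (D_left h3 hS)⟩
      intro T hT
      rcases List.mem_cons.1 hT with rfl | hT
      · simp only [BT.size]; omega
      · have := h2 T hT; simp only [BT.size]; omega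

/-! ### The recursion step -/

/-- The sum of the doubled sizes of the hanging trees (with their spine vertices) truncated at `A`. It
measures by how much the weight `omL` falls short of `116 * sizeL`. -/
def trL (A : ℕ) (Ts : List BT) : ℕ := (Ts.map fun T => min (2 * (T.size + 1)) A).sum

theorem trL_ge (A : ℕ) (Ts : List BT) : min (2 * sizeL Ts) A ≤ trL A Ts := by
  induction Ts with
  | nil => simp [trL]
  | cons T Ts ih => simp [trL] at *; omega

/-- If each tree accounts for at most half of `M`, truncation leaves at least `2 A` of a list of
total size about `M ≥ A`: either two terms are truncated, giving `2 A`, or at most one term, itself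
at most `M`, is replaced by `A`. -/
theorem trL_ge' (A M : ℕ) (Ts : List BT) (hM : ∀ T ∈ Ts, 2 * (T.size + 1) ≤ M) :
    min (2 * A) (min (2 * sizeL Ts - M + A) (2 * sizeL Ts)) ≤ trL A Ts := by
  induction Ts with
  | nil => simp [trL]
  | cons T Ts ih =>
    have h1 := trL_ge A Ts
    have h2 := ih fun U hU => hM U (by simp [hU])
    have h3 := hM T (by simp)
    simp [trL] at *; omega

theorem omL_tr (A : ℕ) (Ts : List BT) :
    omL A Ts + 54 * trL A Ts ≤ 116 * sizeL Ts := by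
  induction Ts with
  | nil => simp [trL]
  | cons T Ts ih =>
    have : om A T + 54 * (min (2 * (T.size + 1)) A : ℕ) ≤ 116 * (T.size + 1) := by
      unfold om; split_ifs <;> omega
    simp [trL] at *; linarith

/-- All trees of size at most `n` fit into a `W × H` box in the sense of `Non`, and all spines of
size at most `n` with at least five vertices can be drawn from corner to corner in every box at
least as large. In the second part the exit corner is `(W', H')`, which makes the predicate
symmetric in width and height. -/
def P (n W H : ℕ) : Prop :=
  (∀ t : BT, t.size ≤ n → Non t W H) ∧
  ∀ Ts : List BT, 5 ≤ Ts.length → sizeL Ts ≤ n → ∀ W' H', W ≤ W' → H ≤ H' →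
    ∀ p : Pt, p = (0, 1) ∨ p = (1, 0) → Blk W' p true Ts H'

theorem P_base : P 1 1 1 := by
  constructor
  · intro t ht
    match t, ht with
    | .nil, _ => exact ⟨trivial, trivial⟩
    | .node .nil .nil, _ =>
      constructor
      all_goals
        refine ⟨(1, 1), by simp [Aligned], ?_, ∅, ∅, by simp, by simp, by simp, by simp, by simp,
          trivial, trivial⟩
        intro z
        simp only [hseg, R, Set.mem_ofPred_eq]; simp; omega
    | .node (.node _ _) _, h => simp [BT.size] at h
    | .node .nil (.node _ _), h => simp [BT.size] at h
  · intro Ts h5 hs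
    match Ts, h5 with
    | T :: U :: L, h => simp at hs; omega

theorem P.swap {n W H : ℕ} (h : P n W H) : P n H W := by
  have hR : ∀ a b c d : ℤ, (Equiv.prodComm ℤ ℤ).symm ⁻¹' (R a b c d) = R c d a b := by
    intro a b c d; ext z; simp [R]; tauto
  constructor
  · intro t ht
    obtain ⟨h1, h2⟩ := h.1 t ht
    have h1' := D_map swap_good h1
    have h2' := D_map swap_good h2
    rw [hR] at h1' h2'
    exact ⟨h2', h1'⟩
  · intro Ts h5 hs W' H' hW hH p hp
    have := DC_map swap_good (h.2 Ts h5 hs H' W' hH hW (p.2, p.1) (by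
      rcases hp with rfl | rfl <;> simp))
    rw [hR] at this
    exact this

theorem P.base {A h w W : ℕ} (p : P A w h) (hA : 1 ≤ A) (hh : 1 ≤ h) (hw : 1 ≤ w)
    (hW : w + 1 ≤ W) : Base A h W where
  hA := hA
  hh := hh
  hW := by omega
  small t ht := (p.1 t ht).mono (by omega) le_rfl
  aug Ts h5 hs := p.2 Ts h5 hs W h (by omega) le_rfl _ (Or.inr rfl)

/-- Recursion along the heavy path with `j` spare columns for trees of size at most `2 ^ j`. The loss
of the additive term `10 A` in `Base.main` is compensated by `trL_ge'`: truncation saves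
`54 · 2 A = 108 A`, which is more than `58 A + 10 A` and the weight `40` of the padding. -/
theorem P.cost {A h w : ℕ} (p : P A w h) (hA : 1 ≤ A) (hh : 1 ≤ h) (hw : 1 ≤ w) (j : ℕ) :
    ∀ t : BT, t.size ≤ 2 ^ j → ∃ κ, Cost A h (w + j + 2) t κ := by
  induction j with
  | zero =>
    intro t ht
    refine ⟨h, hh, (p.1 t (by simp at ht; omega)).mono (by omega) le_rfl, fun _ => rfl, fun ha => ?_⟩
    have : t.size = A := by simp at ht; omega
    rw [this]; nlinarith [mul_nonneg (Int.natCast_nonneg h) (Int.natCast_nonneg A)]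
  | succ j ih =>
    intro t ht
    by_cases hs : t.size ≤ A
    · refine ⟨h, hh, (p.1 t hs).mono (by omega) le_rfl, fun _ => rfl, fun ha => ?_⟩
      have : t.size = A := by omega
      rw [this]; nlinarith [mul_nonneg (Int.natCast_nonneg h) (Int.natCast_nonneg A)]
    · obtain ⟨Ts, h1, h2, h3⟩ := heavy t
      have B : Base A h (w + j + 2) := p.base hA hh hw (by omega)
      -- Five empty trees ensure the minimal length of the spine; they are removed by `D_plug_nil`.
      obtain ⟨K, hK, hK1, hB⟩ := B.main (Ts ++ List.replicate 5 .nil) (by simp) (by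
        intro T hT
        rcases List.mem_append.1 hT with hT | hT
        · exact ih T (by have := h2 T hT; rw [pow_succ] at ht; omega)
        · rw [List.eq_of_mem_replicate hT]
          exact ih _ (by simp [BT.size]))
      have key : ∀ q : Pt, q = (0, 1) ∨ q = (1, 0) → D t q (R 1 (w + j + 2 : ℕ) 1 K) := by
        intro q hq
        have := hB K le_rfl q hq .nil ∅ (by simp) trivial
        rw [Set.union_empty, plug_append] at this
        exact h3 _ _ (D_plug_nil this)
      refine ⟨K, hK1, ⟨key _ (Or.inl rfl), key _ (Or.inr rfl)⟩, fun h => by omega, fun _ => ?_⟩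
      refine hK.trans ?_
      gcongr
      have e1 := trL_ge' A (t.size + 1) Ts (by intro T hT; have := h2 T hT; omega)
      have e2 := omL_tr A Ts
      have e3 : omL A (List.replicate 5 .nil) = 40 := by
        simp [omL, om, BT.size, hA]
      rw [omL_append, e3]
      rw [h1] at e1 e2
      have : 2 * A ≤ trL A Ts := by omega
      omega

/-- From size `A` to size `n ≤ 2 ^ j`: the width grows by `j + 2` only, and the height by a factor of
about `116 n / A`. -/
theorem P.step {A h w n j H : ℕ} (p : P A w h) (hA : 1 ≤ A) (hh : 1 ≤ h) (hw : 1 ≤ w)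
    (hn : n ≤ 2 ^ j) (hH : (116 * n + 10 * A) * h ≤ A * H) :
    P n (w + j + 2) H := by
  have bound : ∀ {a K : ℕ}, a ≤ n → (A * K : ℤ) ≤ h * (116 * a + 10 * A) → K ≤ H := by
    intro a K ha hK
    have h1 : A * K ≤ h * (116 * a + 10 * A) := by exact_mod_cast hK
    have h2 : h * (116 * a + 10 * A) ≤ A * H := by
      refine le_trans ?_ hH
      rw [mul_comm]; gcongr
    exact Nat.le_of_mul_le_mul_left (h1.trans h2) hA
  constructor
  · intro t ht
    obtain ⟨κ, hc⟩ := p.cost hA hh hw j t (ht.trans hn)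
    refine hc.2.1.mono (by omega) (bound ht (hc.le.trans ?_))
    have : om A t ≤ 116 * t.size + 9 * A := by unfold om; split_ifs <;> omega
    exact mul_le_mul_of_nonneg_left (by linarith) (Int.natCast_nonneg h)
  · intro Ts h5 hs W' H' hW' hH' q hq
    have B : Base A h W' := p.base hA hh hw (by omega)
    obtain ⟨K, hK, _, hB⟩ := B.main Ts h5 (by
      intro T hT
      obtain ⟨κ, h1, h2, h3⟩ := p.cost hA hh hw j T (by have := size_le_sizeL hT; omega)
      exact ⟨κ, h1, h2.mono (by omega) le_rfl, h3⟩)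
    refine hB H' (le_trans (bound hs (hK.trans ?_)) hH') q hq
    have := omL_le A hA Ts
    gcongr


/-! ### Iterating the step -/

theorem P.mono {n W H W' : ℕ} (p : P n W H) (hW : W ≤ W') : P n W' H :=
  ⟨fun t ht => (p.1 t ht).mono hW le_rfl,
    fun Ts h5 hs _ _ h1 h2 => p.2 Ts h5 hs _ _ (hW.trans h1) h2⟩

/-- The parameters `(e, W, H)` of the iteration: at level `k`, `P (2 ^ e) W H` holds. -/
def lvl : ℕ → ℕ × ℕ × ℕ
  | 0 => (0, 1, 1)
  | k + 1 => (2 * (lvl k).2.2, 5 * (lvl k).2.2,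
      126 * (lvl k).2.1 * 2 ^ (2 * (lvl k).2.2 - (lvl k).1))

/-- The binary logarithm of the tree size at level `k`. -/
def eE (k : ℕ) : ℕ := (lvl k).1
/-- The width at level `k`. -/
def wW (k : ℕ) : ℕ := (lvl k).2.1
/-- The height at level `k`. -/
def hH (k : ℕ) : ℕ := (lvl k).2.2

theorem eE_succ (k : ℕ) : eE (k + 1) = 2 * hH k := rfl
theorem wW_succ (k : ℕ) : wW (k + 1) = 5 * hH k := rfl
theorem hH_succ (k : ℕ) : hH (k + 1) = 126 * wW k * 2 ^ (2 * hH k - eE k) := rfl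

theorem lvl_basic (k : ℕ) : 1 ≤ wW k ∧ 1 ≤ hH k ∧ eE k ≤ hH k ∧ 2 ^ hH k ≤ hH (k + 1) := by
  have main : ∀ k, 1 ≤ wW k → eE k ≤ hH k → 2 ^ hH k ≤ hH (k + 1) := by
    intro k h1 h2
    rw [hH_succ]
    have : 2 ^ hH k ≤ 2 ^ (2 * hH k - eE k) := Nat.pow_le_pow_right (by norm_num) (by omega)
    exact this.trans (Nat.le_mul_of_pos_left _ (by omega))
  induction k with
  | zero => exact ⟨le_rfl, le_rfl, Nat.zero_le _, main 0 le_rfl (Nat.zero_le _)⟩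
  | succ k ih =>
    obtain ⟨h1, h2, h3, h4⟩ := ih
    have h5 : 1 ≤ wW (k + 1) := by rw [wW_succ]; omega
    have h6 : eE (k + 1) ≤ hH (k + 1) := by
      refine le_trans ?_ h4
      rw [eE_succ]
      obtain ⟨m, hm⟩ := Nat.exists_eq_add_of_le h2
      have := Nat.lt_two_pow_self (n := m)
      rw [hm, pow_add]; omega
    have h7 := Nat.lt_two_pow_self (n := hH k)
    exact ⟨h5, by omega, h6, main _ h5 h6⟩

theorem lvl_area (k : ℕ) : wW k * hH k = 630 ^ k * 2 ^ eE k := by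
  induction k with
  | zero => rfl
  | succ k ih =>
    obtain ⟨h1, h2, h3, h4⟩ := lvl_basic k
    have e : 2 ^ eE k * 2 ^ (2 * hH k - eE k) = 2 ^ (2 * hH k) := by
      rw [← pow_add]; congr 1; omega
    rw [wW_succ, hH_succ, eE_succ, ← e]
    calc _ = 630 * (wW k * hH k) * 2 ^ (2 * hH k - eE k) := by ring
      _ = _ := by rw [ih]; ring

/-- One step from level `k`, after transposition, to any size `n` up to that of level `k + 1`. -/
theorem lvl_step {k n H : ℕ} (p : P (2 ^ eE k) (wW k) (hH k))
    (h1 : 2 ^ eE k ≤ n) (h2 : n ≤ 2 ^ eE (k + 1)) (hH' : 126 * n * wW k ≤ 2 ^ eE k * H) :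
    P n (wW (k + 1)) H := by
  obtain ⟨h3, h4, -, -⟩ := lvl_basic k
  refine (p.swap.step (j := 2 * hH k) (Nat.one_le_two_pow) h3 h4 h2 ?_).mono ?_
  · refine le_trans ?_ hH'
    gcongr; omega
  · rw [wW_succ]; omega

theorem lvl_P (k : ℕ) : P (2 ^ eE k) (wW k) (hH k) := by
  induction k with
  | zero => exact P_base
  | succ k ih =>
    obtain ⟨h1, h2, h3, h4⟩ := lvl_basic k
    refine lvl_step ih (Nat.pow_le_pow_right (by norm_num) (by rw [eE_succ]; omega)) le_rfl ?_
    have e : 2 ^ eE k * 2 ^ (2 * hH k - eE k) = 2 ^ (2 * hH k) := by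
      rw [← pow_add]; congr 1; omega
    rw [hH_succ, eE_succ, ← e]
    apply le_of_eq; ring

/-- For `n` between levels `k` and `k + 1`, the step from level `k` is applied to `n` directly. -/
theorem exists_box {n : ℕ} (hn : 1 ≤ n) :
    ∃ k W H, 2 ^ eE k ≤ n ∧ P n W H ∧ W * H ≤ 1260 ^ (k + 1) * n := by
  have hk : ∃ k, n < 2 ^ eE (k + 1) := by
    have hk : ∀ k, k < hH k := by
      intro k
      induction k with
      | zero => exact Nat.one_pos
      | succ k ih =>
        have := (lvl_basic k).2.2.2
        have := Nat.lt_two_pow_self (n := hH k)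
        omega
    refine ⟨n, (Nat.lt_two_pow_self (n := n)).trans_le (Nat.pow_le_pow_right (by norm_num) ?_)⟩
    have := hk n
    rw [eE_succ]; omega
  classical
  obtain ⟨k, hk1, hk2⟩ : ∃ k, 2 ^ eE k ≤ n ∧ n < 2 ^ eE (k + 1) := by
    refine ⟨Nat.find hk, ?_, Nat.find_spec hk⟩
    rcases h : Nat.find hk with _ | m
    · exact hn
    · exact not_lt.1 (Nat.find_min hk (m := m) (by omega))
  have hpos : 0 < 2 ^ eE k := Nat.two_pow_pos _
  refine ⟨k, _, 126 * wW k * (n / 2 ^ eE k + 1), hk1, lvl_step (lvl_P k) hk1 hk2.le ?_, ?_⟩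
  · have := Nat.lt_mul_div_succ n hpos
    calc 126 * n * wW k = 126 * wW k * n := by ring
      _ ≤ 126 * wW k * (2 ^ eE k * (n / 2 ^ eE k + 1)) := by gcongr
      _ = _ := by ring
  · have h1 : 2 ^ eE k * (n / 2 ^ eE k + 1) ≤ 2 * n := by
      have := Nat.mul_div_le n (2 ^ eE k)
      rw [mul_add]; omega
    calc wW (k + 1) * (126 * wW k * (n / 2 ^ eE k + 1))
        = 630 * (wW k * hH k) * (n / 2 ^ eE k + 1) := by rw [wW_succ]; ring
      _ = 630 ^ (k + 1) * (2 ^ eE k * (n / 2 ^ eE k + 1)) := by rw [lvl_area]; ring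
      _ ≤ 630 ^ (k + 1) * (2 * n) := by gcongr
      _ = 630 ^ (k + 1) * 2 ^ 1 * n := by ring
      _ ≤ 630 ^ (k + 1) * 2 ^ (k + 1) * n := by gcongr <;> omega
      _ = 1260 ^ (k + 1) * n := by rw [← mul_pow]; norm_num

/-! ### The iterated logarithm -/

/-- The set whose infimum defines `logStar` is nonempty, so that the infimum is not a junk value. -/
theorem logStar_set_nonempty (m : ℕ) : ∀ x : ℝ, x ≤ m → ∃ j, (Real.logb 2)^[j] x ≤ 1 := by
  induction m with
  | zero => exact fun x hx => ⟨0, by simp at hx ⊢; linarith⟩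
  | succ m ih =>
    intro x hx
    by_cases h1 : x ≤ 1
    · exact ⟨0, h1⟩
    by_cases h2 : x < 2
    · refine ⟨1, ?_⟩
      simp only [Function.iterate_one]
      rw [Real.logb_le_iff_le_rpow (by norm_num) (by linarith)]
      norm_num; linarith
    · obtain ⟨j, hj⟩ := ih (Real.logb 2 x) (by
        rw [Real.logb_le_iff_le_rpow (by norm_num) (by linarith)]
        have h3 := one_add_mul_self_le_rpow_one_add (s := 1) (by norm_num) (p := x - 1)
          (by linarith)
        push_cast at hx
        calc x = 1 + (x - 1) * 1 := by ring
          _ ≤ (1 + 1 : ℝ) ^ (x - 1) := h3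
          _ ≤ (2 : ℝ) ^ (m : ℝ) := by
            rw [one_add_one_eq_two]
            exact Real.rpow_le_rpow_of_exponent_le (by norm_num) (by linarith))
      exact ⟨j + 1, hj⟩

theorem le_logStar {n m : ℕ} (h : ∀ j < m, 1 < (Real.logb 2)^[j] (n : ℝ)) : m ≤ logStar n := by
  refine le_csInf (logStar_set_nonempty n n le_rfl) fun b hb => ?_
  by_contra hlt
  exact absurd hb (not_le.2 (h b (not_le.1 hlt)))

/-- Taking a logarithm undoes a level, because `2 ^ hH k ≤ hH (k + 1)`. -/
theorem iter_log (k : ℕ) : ∀ x : ℝ, (2 : ℝ) ^ (hH k) ≤ x → ∀ j ≤ k, 1 < (Real.logb 2)^[j] x := by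
  have one : ∀ k (x : ℝ), (2 : ℝ) ^ (hH k) ≤ x → 1 < x := fun k x hx =>
    lt_of_lt_of_le (one_lt_pow₀ (by norm_num) (by have := (lvl_basic k).2.1; omega)) hx
  induction k with
  | zero =>
    intro x hx j hj
    obtain rfl : j = 0 := by omega
    exact one 0 x hx
  | succ k ih =>
    intro x hx j hj
    match j with
    | 0 => exact one _ x hx
    | j + 1 =>
      refine ih (Real.logb 2 x) ?_ j (by omega)
      have h1 : ((2 ^ hH k : ℕ) : ℝ) ≤ hH (k + 1) := by exact_mod_cast (lvl_basic k).2.2.2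
      push_cast at h1
      refine h1.trans ?_
      rw [Real.le_logb_iff_rpow_le (by norm_num) (by have := one _ x hx; linarith)]
      exact_mod_cast hx

theorem level_le_logStar {n k : ℕ} (hn : 2 ≤ n) (h : 2 ^ eE k ≤ n) : k + 1 ≤ 2 * logStar n := by
  have h1 : 1 ≤ logStar n := le_logStar fun j hj => by
    obtain rfl : j = 0 := by omega
    simp; omega
  have h2 : k ≤ logStar n := by
    match k, h with
    | 0, _ => omega
    | k + 1, h =>
      refine le_logStar fun j hj => iter_log k n ?_ j (by omega)
      have : 2 ^ hH k ≤ n := le_trans (Nat.pow_le_pow_right (by norm_num)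
        (by rw [eE_succ]; omega)) h
      exact_mod_cast this
  omega

/-! ### Rooted trees as graphs -/

/-- The tree `t` describes the vertex set `X`, a set closed under passing to children for the parent
relation `Par`, with the roots in `top`: whenever `t` can be hung from `p` in `S`, there are
positions `f` of the vertices and positions `P` of their parents with pairwise disjoint cells in `S`,
where the vertices in `top` have their parent at `p`. Here `top` is empty or a singleton. -/
def Rz {V : Type} (Par : V → V → Prop) (X top : Set V) (t : BT) : Prop :=
  t.size = X.ncard ∧ top ⊆ X ∧ (∀ u ∈ X, ∀ w, Par u w → w ∈ X) ∧
  ∀ p S, D t p S → ∃ f P : V → Pt, (∀ x ∈ X, Aligned (P x) (f x) ∧ hseg (P x) (f x) ⊆ S) ∧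
    (∀ x ∈ X, ∀ y ∈ X, x ≠ y → Disjoint (hseg (P x) (f x)) (hseg (P y) (f y))) ∧
    (∀ x ∈ top, P x = p) ∧ ∀ u ∈ X, ∀ w, Par u w → P w = f u

theorem Rz_nil {V : Type} (Par : V → V → Prop) : Rz Par ∅ ∅ .nil :=
  ⟨by simp [BT.size], by simp, by simp, fun _ _ _ => ⟨fun _ => 0, fun _ => 0, by simp⟩⟩

theorem Rz_node {V : Type} [Finite V] {Par : V → V → Prop} {X₁ X₂ T₁ T₂ : Set V} {t₁ t₂ : BT}
    (h₁ : Rz Par X₁ T₁ t₁) (h₂ : Rz Par X₂ T₂ t₂) (hd : Disjoint X₁ X₂) {v : V} (hv₁ : v ∉ X₁)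
    (hv₂ : v ∉ X₂) (hc : ∀ w, Par v w ↔ w ∈ T₁ ∪ T₂) :
    Rz Par (insert v (X₁ ∪ X₂)) {v} (.node t₁ t₂) := by
  classical
  obtain ⟨s₁, i₁, c₁, d₁⟩ := h₁
  obtain ⟨s₂, i₂, c₂, d₂⟩ := h₂
  refine ⟨?_, by simp, ?_, ?_⟩
  · rw [Set.ncard_insert_of_notMem (by simp [hv₁, hv₂]), Set.ncard_union_eq hd, BT.size, s₁, s₂]
  · rintro u (rfl | hu | hu) w hw
    · rcases (hc w).1 hw with h | h
      · exact Or.inr (Or.inl (i₁ h))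
      · exact Or.inr (Or.inr (i₂ h))
    · exact Or.inr (Or.inl (c₁ u hu w hw))
    · exact Or.inr (Or.inr (c₂ u hu w hw))
  · rintro p S ⟨q, h1, h2, S₁, S₂, h3, h4, h5, h6, h7, h8, h9⟩
    obtain ⟨f₁, P₁, a₁, b₁, e₁, g₁⟩ := d₁ _ _ h8
    obtain ⟨f₂, P₂, a₂, b₂, e₂, g₂⟩ := d₂ _ _ h9
    have hd' : ∀ x, x ∈ X₂ → x ∉ X₁ := fun x hx hx' => Set.disjoint_left.1 hd hx' hx
    let f : V → Pt := fun x => if x = v then q else if x ∈ X₁ then f₁ x else f₂ x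
    let P : V → Pt := fun x => if x = v then p else if x ∈ X₁ then P₁ x else P₂ x
    have fv : f v = q := if_pos rfl
    have Pv : P v = p := if_pos rfl
    have ne₁ : ∀ x ∈ X₁, x ≠ v := fun x hx h => hv₁ (h ▸ hx)
    have ne₂ : ∀ x ∈ X₂, x ≠ v := fun x hx h => hv₂ (h ▸ hx)
    have f1 : ∀ x ∈ X₁, f x = f₁ x := fun x hx => by simp [f, hx, ne₁ x hx]
    have P1 : ∀ x ∈ X₁, P x = P₁ x := fun x hx => by simp [P, hx, ne₁ x hx]
    have f2 : ∀ x ∈ X₂, f x = f₂ x := fun x hx => by simp [f, hd' x hx, ne₂ x hx]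
    have P2 : ∀ x ∈ X₂, P x = P₂ x := fun x hx => by simp [P, hd' x hx, ne₂ x hx]
    refine ⟨f, P, ?_, ?_, ?_, ?_⟩
    · rintro x (rfl | hx | hx)
      · rw [fv, Pv]; exact ⟨h1, h2⟩
      · rw [f1 x hx, P1 x hx]; exact ⟨(a₁ x hx).1, (a₁ x hx).2.trans h3⟩
      · rw [f2 x hx, P2 x hx]; exact ⟨(a₂ x hx).1, (a₂ x hx).2.trans h4⟩
    · rintro x (rfl | hx | hx) y (rfl | hy | hy) hxy
      · exact absurd rfl hxy
      · rw [fv, Pv, f1 y hy, P1 y hy]; exact (h6.mono_left (a₁ y hy).2).symm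
      · rw [fv, Pv, f2 y hy, P2 y hy]; exact (h7.mono_left (a₂ y hy).2).symm
      · rw [fv, Pv, f1 x hx, P1 x hx]; exact h6.mono_left (a₁ x hx).2
      · rw [f1 x hx, P1 x hx, f1 y hy, P1 y hy]; exact b₁ x hx y hy hxy
      · rw [f1 x hx, P1 x hx, f2 y hy, P2 y hy]; exact h5.mono (a₁ x hx).2 (a₂ y hy).2
      · rw [fv, Pv, f2 x hx, P2 x hx]; exact h7.mono_left (a₂ x hx).2
      · rw [f2 x hx, P2 x hx, f1 y hy, P1 y hy]; exact (h5.mono (a₁ y hy).2 (a₂ x hx).2).symm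
      · rw [f2 x hx, P2 x hx, f2 y hy, P2 y hy]; exact b₂ x hx y hy hxy
    · rintro x rfl; exact Pv
    · rintro u (rfl | hu | hu) w hw
      · rw [fv]
        rcases (hc w).1 hw with h | h
        · rw [P1 w (i₁ h), e₁ w h]
        · rw [P2 w (i₂ h), e₂ w h]
      · rw [P1 w (c₁ u hu w hw), f1 u hu, g₁ u hu w hw]
      · rw [P2 w (c₂ u hu w hw), f2 u hu, g₂ u hu w hw]

section Graph

variable {V : Type} {G : SimpleGraph V} {r : V}

/-- Shortest paths through two parents of `v` are both the path from the root to `v`. -/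
theorem parent_unique (hG : G.IsTree) {u u' v : V} (h : IsParent G r u v)
    (h' : IsParent G r u' v) : u = u' := by
  classical
  obtain ⟨p, hp, hl⟩ := (hG.connected r u).exists_path_of_dist
  obtain ⟨p', hp', hl'⟩ := (hG.connected r u').exists_path_of_dist
  have far : ∀ {w : V} (q : G.Walk r w), q.length + 1 = G.dist r v → v ∉ q.support := by
    intro w q hq hv
    have h1 := SimpleGraph.dist_le (q.takeUntil v hv)
    have h2 := q.length_takeUntil_le_length hv
    omega
  have e := hG.existsUnique_path r v |>.unique
    (hp.concat (far p (by rw [hl]; exact h.2)) h.1)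
    (hp'.concat (far p' (by rw [hl']; exact h'.2)) h'.1)
  have := congrArg SimpleGraph.Walk.penultimate e
  simpa using this

theorem adj_parent (hG : G.IsTree) {u v : V} (h : G.Adj u v) :
    IsParent G r u v ∨ IsParent G r v u := by
  have h1 := hG.dist_ne_of_adj r h
  have h2 := h.diff_dist_adj (u := r)
  rcases h2 with h2 | h2 | h2
  · exact absurd h2.symm h1
  · exact Or.inl ⟨h, h2.symm⟩
  · right; refine ⟨h.symm, ?_⟩; omega

/-- The descendants of `v`, with `v` itself. -/
def Desc (G : SimpleGraph V) (r v : V) : Set V := {w | Relation.ReflTransGen (IsParent G r) v w}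

theorem desc_dist {v w : V} (h : w ∈ Desc G r v) : w = v ∨ G.dist r v < G.dist r w := by
  induction h with
  | refl => exact Or.inl rfl
  | tail _ h ih =>
    right
    have := h.2
    rcases ih with rfl | ih <;> omega

theorem desc_disjoint (hG : G.IsTree) {a b : V} (hab : a ≠ b) (hd : G.dist r a = G.dist r b) :
    Disjoint (Desc G r a) (Desc G r b) := by
  rw [Set.disjoint_left]
  intro w ha hb
  induction ha with
  | refl =>
    rcases desc_dist hb with h | h
    · exact hab h
    · omega
  | @tail x y hax hxy ih =>
    rcases Relation.ReflTransGen.cases_tail hb with h | ⟨z, hbz, hzy⟩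
    · subst h
      rcases desc_dist (Relation.ReflTransGen.tail hax hxy) with h | h
      · exact hab h.symm
      · omega
    · exact ih (parent_unique hG hxy hzy ▸ hbz)

theorem desc_eq (v : V) : Desc G r v = insert v {w | ∃ c, IsParent G r v c ∧ w ∈ Desc G r c} := by
  ext w
  constructor
  · intro h
    rcases Relation.ReflTransGen.cases_head h with h | ⟨c, h1, h2⟩
    · exact Or.inl h.symm
    · exact Or.inr ⟨c, h1, h2⟩
  · rintro (rfl | ⟨c, h1, h2⟩)
    · exact Relation.ReflTransGen.refl
    · exact Relation.ReflTransGen.head h1 h2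

theorem desc_root (hG : G.IsTree) : Desc G r r = Set.univ := by
  have : ∀ n v, G.dist r v = n → v ∈ Desc G r r := by
    intro n
    induction n with
    | zero =>
      intro v hv
      rw [(hG.connected r v).dist_eq_zero_iff.1 hv]
      exact Relation.ReflTransGen.refl
    | succ n ih =>
      intro v hv
      obtain ⟨p, hp, hl⟩ := (hG.connected r v).exists_path_of_dist
      have hn : ¬ p.Nil := by
        intro h
        have := SimpleGraph.Walk.length_eq_zero_iff.2 h
        omega
      have ha := p.adj_penultimate hn
      have hd := SimpleGraph.dist_le p.dropLast
      have hl2 : p.dropLast.length + 1 = p.length := by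
        simp; omega
      rcases adj_parent (r := r) hG ha with h | h
      · exact Relation.ReflTransGen.tail (ih _ (by have := h.2; omega)) h
      · have := h.2; omega
  exact Set.eq_univ_of_forall fun v => this _ v rfl

/-- A rooted tree with at most two children at each vertex comes from a `BT`. -/
theorem exists_Rz [Finite V] (hG : G.IsTree)
    (hdeg : ∀ u : V, {v : V | IsParent G r u v}.ncard ≤ 2) :
    ∀ (m : ℕ) (v : V), (Desc G r v).ncard ≤ m → ∃ t, Rz (IsParent G r) (Desc G r v) {v} t := by
  intro m
  induction m with
  | zero =>
    intro v hv
    have := (Set.ncard_eq_zero (s := Desc G r v)).1 (by omega)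
    exact absurd (this ▸ (Relation.ReflTransGen.refl : v ∈ Desc G r v)) (Set.notMem_empty v)
  | succ m ih =>
    intro v hv
    have hself : ∀ c, IsParent G r v c → v ∉ Desc G r c := by
      intro c hc hvc
      have := hc.2
      rcases desc_dist hvc with h | h
      · subst h; omega
      · omega
    have hrec : ∀ c, IsParent G r v c → ∃ t, Rz (IsParent G r) (Desc G r c) {c} t := by
      intro c hc
      refine ih c ?_
      have hss : Desc G r c ⊂ Desc G r v := by
        refine ⟨fun w hw => Relation.ReflTransGen.head hc hw, fun h => hself c hc (h ?_)⟩
        exact Relation.ReflTransGen.refl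
      have := Set.ncard_lt_ncard hss
      omega
    have h3 : {c | IsParent G r v c}.ncard = 0 ∨ {c | IsParent G r v c}.ncard = 1 ∨
        {c | IsParent G r v c}.ncard = 2 := by have := hdeg v; omega
    rw [desc_eq]
    rcases h3 with h | h | h
    · have h := (Set.ncard_eq_zero).1 h
      have hc : ∀ c, ¬ IsParent G r v c := fun c hc => by
        have : c ∈ {c | IsParent G r v c} := hc
        rw [h] at this; exact this
      refine ⟨.node .nil .nil, ?_⟩
      have := Rz_node (v := v) (Rz_nil (IsParent G r)) (Rz_nil (IsParent G r)) (by simp)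
        (by simp) (by simp) (by simp [hc])
      convert this using 2
      ext w; simp [hc]
    · obtain ⟨a, h⟩ := Set.ncard_eq_one.1 h
      have hc : ∀ c, IsParent G r v c ↔ c = a := fun c => by
        have := Set.ext_iff.1 h c; simpa using this
      obtain ⟨t, ht⟩ := hrec a ((hc a).2 rfl)
      refine ⟨.node t .nil, ?_⟩
      have := Rz_node (v := v) ht (Rz_nil (IsParent G r)) (by simp)
        (hself a ((hc a).2 rfl)) (by simp) (by simp [hc])
      convert this using 2
      ext w; simp [hc]
    · obtain ⟨a, b, hab, h⟩ := Set.ncard_eq_two.1 h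
      have hc : ∀ c, IsParent G r v c ↔ c = a ∨ c = b := fun c => by
        have := Set.ext_iff.1 h c; simpa using this
      have ha := (hc a).2 (Or.inl rfl)
      have hb := (hc b).2 (Or.inr rfl)
      obtain ⟨t, ht⟩ := hrec a ha
      obtain ⟨t', ht'⟩ := hrec b hb
      refine ⟨.node t t', ?_⟩
      have := Rz_node (v := v) ht ht' (desc_disjoint hG hab (by rw [← ha.2, ← hb.2]))
        (hself a ha) (hself b hb) (by simp [hc, or_comm])
      convert this using 2
      ext w; simp [hc, or_and_right, exists_or]

end Graph

/-! ### From the lattice to the plane -/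

/-- The lattice point as a point of the plane. -/
def toR (z : Pt) : ℝ × ℝ := ((z.1 : ℝ), (z.2 : ℝ))

theorem toR_inj {a b : Pt} (h : toR a = toR b) : a = b := by
  simp only [toR, Prod.mk.injEq, Int.cast_inj] at h
  exact Prod.ext h.1 h.2

/-- The lattice points of the axis-parallel segment from `p` to `q`, both ends included. -/
def cseg (p q : Pt) : Set Pt := insert p (hseg p q)

theorem mem_cseg {p q z : Pt} : z ∈ cseg p q ↔ min p.1 q.1 ≤ z.1 ∧ z.1 ≤ max p.1 q.1 ∧
    min p.2 q.2 ≤ z.2 ∧ z.2 ≤ max p.2 q.2 := by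
  simp only [cseg, hseg, Set.mem_insert_iff, Set.mem_ofPred_eq, Prod.ext_iff]
  omega

theorem coord_bounds {a b : ℤ} {s t : ℝ} (hs : 0 ≤ s) (ht : 0 ≤ t) (hst : s + t = 1) :
    ((min a b : ℤ) : ℝ) ≤ s * a + t * b ∧ s * a + t * b ≤ ((max a b : ℤ) : ℝ) := by
  push_cast
  have h1 := min_le_left (a : ℝ) b
  have h2 := min_le_right (a : ℝ) b
  have h3 := le_max_left (a : ℝ) b
  have h4 := le_max_right (a : ℝ) b
  have e1 : s * min (a : ℝ) b + t * min (a : ℝ) b = min (a : ℝ) b := by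
    rw [← add_mul, hst, one_mul]
  have e2 : s * max (a : ℝ) b + t * max (a : ℝ) b = max (a : ℝ) b := by
    rw [← add_mul, hst, one_mul]
  constructor
  · linarith [mul_le_mul_of_nonneg_left h1 hs, mul_le_mul_of_nonneg_left h2 ht]
  · linarith [mul_le_mul_of_nonneg_left h3 hs, mul_le_mul_of_nonneg_left h4 ht]

theorem segment_bounds {p q : Pt} {x : ℝ × ℝ} (h : x ∈ segment ℝ (toR p) (toR q)) :
    (((min p.1 q.1 : ℤ) : ℝ) ≤ x.1 ∧ x.1 ≤ ((max p.1 q.1 : ℤ) : ℝ)) ∧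
    (((min p.2 q.2 : ℤ) : ℝ) ≤ x.2 ∧ x.2 ≤ ((max p.2 q.2 : ℤ) : ℝ)) := by
  obtain ⟨s, t, hs, ht, hst, rfl⟩ := h
  exact ⟨by simpa [toR] using coord_bounds (a := p.1) (b := q.1) hs ht hst,
    by simpa [toR] using coord_bounds (a := p.2) (b := q.2) hs ht hst⟩

/-- Rounding a point of a segment, up or down in both coordinates, stays on the lattice segment. This
reduces intersections of segments in the plane to intersections on the lattice. -/
theorem floor_mem {p q : Pt} {x : ℝ × ℝ} (h : x ∈ segment ℝ (toR p) (toR q)) :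
    (⌊x.1⌋, ⌊x.2⌋) ∈ cseg p q ∧ (⌈x.1⌉, ⌈x.2⌉) ∈ cseg p q := by
  obtain ⟨⟨h1, h2⟩, h3, h4⟩ := segment_bounds h
  rw [mem_cseg, mem_cseg]
  refine ⟨⟨Int.le_floor.2 h1, ?_, Int.le_floor.2 h3, ?_⟩, ?_, Int.ceil_le.2 h2, ?_,
    Int.ceil_le.2 h4⟩
  · exact_mod_cast (Int.floor_le _).trans h2
  · exact_mod_cast (Int.floor_le _).trans h4
  · exact_mod_cast h1.trans (Int.le_ceil _)
  · exact_mod_cast h3.trans (Int.le_ceil _)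

theorem mem_cseg_of_segment {p q z : Pt} (h : toR z ∈ segment ℝ (toR p) (toR q)) :
    z ∈ cseg p q := by
  simpa [toR] using (floor_mem h).1

/-- Disjoint cells give a planar drawing. A common point `x` of two edges is rounded down and up to
common lattice points of the two edges. These are images of common end vertices, which are unique
for distinct edges of a tree, so both roundings agree and `x` is a lattice point. -/
theorem drawing {V : Type} {G : SimpleGraph V} {r : V} (hG : G.IsTree) {f P : V → Pt}
    (ha : ∀ v, Aligned (P v) (f v))
    (hd : ∀ u v, u ≠ v → Disjoint (hseg (P u) (f u)) (hseg (P v) (f v)))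
    (hP : ∀ u v, IsParent G r u v → P v = f u) :
    IsStraightLineDrawing G (fun v => toR (f v)) ∧ IsOrthogonal G (fun v => toR (f v)) := by
  have own : ∀ v, f v ∈ hseg (P v) (f v) := fun v => by
    have := (ha v).2
    simp only [hseg, Set.mem_ofPred_eq]
    omega
  have inj : Function.Injective f := by
    intro u v h
    by_contra hne
    exact Set.disjoint_left.1 (hd u v hne) (own u) (h ▸ own v)
  have cell : ∀ u v, f u ∈ hseg (P v) (f v) → u = v := by
    intro u v h
    by_contra hne
    exact Set.disjoint_left.1 (hd u v hne) (own u) h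
  have onEdge : ∀ u v w, IsParent G r u v → f w ∈ cseg (f u) (f v) → w = u ∨ w = v := by
    intro u v w h hw
    rw [← hP u v h] at hw
    rcases hw with hw | hw
    · left; rw [hP u v h] at hw; exact inj hw
    · exact Or.inr (cell _ _ hw)
  have cross : ∀ u v u' v', IsParent G r u v → IsParent G r u' v' → v ≠ v' →
      ∀ z ∈ cseg (f u) (f v), z ∈ cseg (f u') (f v') →
      ∃ w, z = f w ∧ (w = u ∨ w = v) ∧ (w = u' ∨ w = v') := by
    intro u v u' v' h h' hne z hz hz'
    by_cases e : z = f u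
    · exact ⟨u, e, Or.inl rfl, onEdge _ _ _ h' (e ▸ hz')⟩
    by_cases e' : z = f u'
    · exact ⟨u', e', onEdge _ _ _ h (e' ▸ hz), Or.inl rfl⟩
    · have h1 : z ∈ hseg (P v) (f v) := by rw [hP u v h]; exact hz.resolve_left e
      have h2 : z ∈ hseg (P v') (f v') := by rw [hP u' v' h']; exact hz'.resolve_left e'
      exact absurd h2 (Set.disjoint_left.1 (hd v v' hne) h1)
  have inter : ∀ u v u' v', IsParent G r u v → IsParent G r u' v' → v ≠ v' →
      ∀ x ∈ segment ℝ (toR (f u)) (toR (f v)), x ∈ segment ℝ (toR (f u')) (toR (f v')) →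
      ∃ w, ((w = u ∨ w = v) ∧ (w = u' ∨ w = v')) ∧ toR (f w) = x := by
    intro u v u' v' h h' hne x hx hx'
    obtain ⟨a, ea, ha1, ha2⟩ := cross u v u' v' h h' hne _ (floor_mem hx).1 (floor_mem hx').1
    obtain ⟨b, eb, hb1, hb2⟩ := cross u v u' v' h h' hne _ (floor_mem hx).2 (floor_mem hx').2
    have huv : u ≠ v := h.1.ne
    have huv' : u' ≠ v' := h'.1.ne
    have hab : a = b := by
      by_contra hab
      have hd1 := h.2
      have hd2 := h'.2
      have : (u = u' ∧ v = v') ∨ (u = v' ∧ v = u') := by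
        grind
      rcases this with ⟨-, e⟩ | ⟨e, e'⟩
      · exact hne e
      · rw [e, e'] at hd1; omega
    subst hab
    refine ⟨a, ⟨ha1, ha2⟩, ?_⟩
    rw [← eb, Prod.mk.injEq] at ea
    have e1 := Int.floor_le x.1
    have e2 := Int.le_ceil x.1
    have e3 := Int.floor_le x.2
    have e4 := Int.le_ceil x.2
    rw [ea.1] at e1
    rw [ea.2] at e3
    rw [← eb]
    exact Prod.ext (le_antisymm e1 e2) (le_antisymm e3 e4)
  refine ⟨⟨fun u v h => inj (toR_inj h), ?_, ?_⟩, ?_⟩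
  · intro u v w h hu hv hw
    rcases adj_parent (r := r) hG h with h | h
    · rcases onEdge _ _ _ h (mem_cseg_of_segment hw) with e | e
      exacts [hu e, hv e]
    · rw [segment_symm] at hw
      rcases onEdge _ _ _ h (mem_cseg_of_segment hw) with e | e
      exacts [hv e, hu e]
  · intro u v u' v' h h' hne
    apply Set.Subset.antisymm
    · rintro x ⟨hx, hx'⟩
      have hvv : ∀ {a b c d}, IsParent G r a b → IsParent G r c d → s(a, b) ≠ s(c, d) → b ≠ d := by
        rintro a b c d hab hcd hne rfl
        exact hne (by rw [parent_unique hG hab hcd])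
      rcases adj_parent (r := r) hG h with h | h <;> rcases adj_parent (r := r) hG h' with h' | h'
      · exact inter _ _ _ _ h h' (hvv h h' hne) x hx hx'
      · rw [segment_symm] at hx'
        obtain ⟨w, hw, e⟩ := inter _ _ _ _ h h' (hvv h h' (by rwa [Sym2.eq_swap (a := v')])) x hx hx'
        exact ⟨w, by simp only [Set.mem_ofPred_eq]; tauto, e⟩
      · rw [segment_symm] at hx
        obtain ⟨w, hw, e⟩ := inter _ _ _ _ h h' (hvv h h' (by rwa [Sym2.eq_swap (a := v)])) x hx hx'
        exact ⟨w, by simp only [Set.mem_ofPred_eq]; tauto, e⟩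
      · rw [segment_symm] at hx hx'
        obtain ⟨w, hw, e⟩ := inter _ _ _ _ h h'
          (hvv h h' (by rwa [Sym2.eq_swap (a := v), Sym2.eq_swap (a := v')])) x hx hx'
        exact ⟨w, by simp only [Set.mem_ofPred_eq]; tauto, e⟩
    · rintro _ ⟨w, ⟨h1, h2⟩, rfl⟩
      constructor
      · rcases h1 with rfl | rfl
        exacts [left_mem_segment _ _ _, right_mem_segment _ _ _]
      · rcases h2 with rfl | rfl
        exacts [left_mem_segment _ _ _, right_mem_segment _ _ _]
  · have orth : ∀ u v, IsParent G r u v → (f u).1 = (f v).1 ∨ (f u).2 = (f v).2 := by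
      intro u v h
      have := (ha v).1
      rwa [hP u v h] at this
    intro u v h
    simp only [toR, Int.cast_inj]
    rcases adj_parent (r := r) hG h with h | h
    · exact orth _ _ h
    · exact (orth _ _ h).imp Eq.symm Eq.symm

theorem gridDrawing {V : Type} [Fintype V] {G : SimpleGraph V} (hG : G.IsTree) {r : V}
    (hdeg : ∀ u : V, {v : V | IsParent G r u v}.ncard ≤ 2) {W H : ℕ}
    (hP : P (Fintype.card V) W H) : ∃ f, IsGridDrawing G f W H ∧ IsOrthogonal G f := by
  obtain ⟨t, h1, -, -, h2⟩ := exists_Rz hG hdeg _ r le_rfl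
  rw [desc_root hG] at h1 h2
  rw [Set.ncard_univ, Nat.card_eq_fintype_card] at h1
  obtain ⟨f, P, h3, h4, -, h5⟩ := h2 _ _ (hP.1 t h1.le).1
  obtain ⟨d1, d2⟩ := drawing hG (fun v => (h3 v trivial).1)
    (fun u v => h4 u trivial v trivial) (fun u v => h5 u trivial v)
  refine ⟨_, ⟨d1, fun x => ⟨(f x).1, (f x).2, ?_⟩⟩, d2⟩
  obtain ⟨ha, hb⟩ := h3 x trivial
  have : f x ∈ R 1 W 1 H := hb (by
    have := ha.2
    simp only [hseg, Set.mem_ofPred_eq]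
    omega)
  obtain ⟨q1, q2, q3, q4⟩ := this
  exact ⟨q1, q2, q3, q4, rfl⟩

end OrthoTree

/-- Every binary tree of size `n` has a straight-line orthogonal grid drawing of area
`n·2^{O(log* n)}`. -/
theorem stmt12 : ∃ C : ℝ, 0 < C ∧
    ∀ (n : ℕ), 1 ≤ n →
    ∀ (V : Type) [Fintype V] (G : SimpleGraph V), G.IsTree → Fintype.card V = n →
    ∀ r : V, (∀ u : V, {v : V | IsParent G r u v}.ncard ≤ 2) →
    ∃ (W H : ℕ) (f : V → ℝ × ℝ), IsGridDrawing G f W H ∧ IsOrthogonal G f ∧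
      (W : ℝ) * H ≤ (n : ℝ) * (2 : ℝ) ^ (C * (logStar n : ℝ)) := by
  refine ⟨22, by norm_num, fun n hn V _ G hG hcard r hdeg => ?_⟩
  rcases Nat.lt_or_ge n 2 with h | h
  · obtain rfl : n = 1 := by omega
    obtain ⟨f, h1, h2⟩ := OrthoTree.gridDrawing hG hdeg (W := 1) (H := 1)
      (hcard ▸ OrthoTree.P_base)
    refine ⟨1, 1, f, h1, h2, ?_⟩
    simpa using Real.one_le_rpow (x := 2) (by norm_num) (by positivity)
  · obtain ⟨k, W, H, hk, hP, hWH⟩ := OrthoTree.exists_box hn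
    obtain ⟨f, h1, h2⟩ := OrthoTree.gridDrawing hG hdeg (hcard ▸ hP)
    refine ⟨W, H, f, h1, h2, ?_⟩
    have h3 := OrthoTree.level_le_logStar h hk
    have h4 : W * H ≤ n * 2 ^ (22 * logStar n) := by
      calc W * H ≤ 1260 ^ (k + 1) * n := hWH
        _ ≤ (2 ^ 11) ^ (k + 1) * n := by gcongr; norm_num
        _ = n * 2 ^ (11 * (k + 1)) := by rw [← pow_mul]; ring
        _ ≤ n * 2 ^ (22 * logStar n) :=
          Nat.mul_le_mul_left _ (Nat.pow_le_pow_right (by norm_num) (by omega))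
    have h5 : ((W * H : ℕ) : ℝ) ≤ ((n * 2 ^ (22 * logStar n) : ℕ) : ℝ) := by exact_mod_cast h4
    push_cast at h5
    exact_mod_cast h5
end
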